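/- Let Γ be a finite simplicial graph with at least two vertices which is connected and anti-connected, and let A_Γ be its right-angled Artin group with standard generating set V(Γ)^{±1}. Then there is a total computable function which, given a finite list of words over the alphabet V(Γ)^{±1}, outputs true or false according to whether the subgroup of A_Γ generated by the elements of A_Γ represented by these words is stable in A_Γ. Equivalently, the set of finite lists of words over V(Γ)^{±1} that generate a stable subgroup of A_Γ is decidable. -/

import Mathlib

/-!
Stability of a finitely generated subgroup `H = ⟨T⟩` of `A_Γ` is shown to be equivalent to a
condition on finitely many elements of `H`, which can be listed and tested effectively.

**Geometry.** A hyperplane of the universal cover of the Salvetti complex is a vertex `v` together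
with a left coset of `A_{lk v}`. It has two sides, exhibited by an affine action of `A_Γ` on
integer-valued functions on these cosets (`aff`, `tau`, `side`), and the word distance is the number
of separating hyperplanes (`wordDist_raag`). A word is reduced iff it crosses each hyperplane at
most once, which also solves the word problem (`nf_spec`). Medians exist (`exists_median`).

**Obstruction.** Say that a nontrivial element has join type if it is conjugate into the parabolic
subgroup `A_{A ∪ B} = A_A × A_B` of a join `A * B ⊆ Γ` with `A`, `B` nonempty. Powers of a
nontrivial element grow linearly (`dd_pow_ge`) and the distance on `A_A × A_B` is the `ℓ¹`-sum
(`dd_join`), so a subgroup containing such an element has its endpoints joined by quasigeodesics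
with uniform constants which do not fellow travel (`not_ell_of_stable`).

**Converse.** Let `Ell T N` say that some nontrivial product of at most `N` elements of `T` is
conjugate into a join subgroup by an element of length at most `N`. Suppose `Ell T N` fails for the
explicit number `N = scale V Λ`, where `Λ` bounds the complexity of `T`. If a `T`-geodesic crosses
a hyperplane twice, the gap between the two crossings is the length of an element of `H` taking one
of finitely many hyperplanes to another. The shortest such gap above a threshold `D` is bounded in
terms of `D` (`viol_gap`), since a geodesic all of whose own gaps are at most `D` stays close to the
path of its medians with the endpoints, and a pigeonhole argument produces an element of join type.
As there are at most `Λ ^ 2` pairs of hyperplanes, and two elements with the same pair differ by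
an element stabilizing a hyperplane, which has join type, all gaps are bounded (`viol_bound`).
Hence `H` is undistorted (`geod_length_le`), and every hyperplane crosses only boundedly many of the
hyperplanes separating two points of `H` (`joined_bound`). From the latter, a geodesic of `A_Γ`
between two points of `H` meets a chain of pairwise separated hyperplanes at bounded gaps; counting
the members of the chain gives a coarse projection along which a quasigeodesic makes no progress
when far away, so quasigeodesics fellow travel (`fellow`).

**Decision.** `Ell T N` is decided by listing all words of the relevant lengths, reducing them, and
looking at the letters of the resulting reduced words; every step, including the computation of
`scale V Λ`, is primitive recursive (`tests_spec`, `prim_check`).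
-/

/-- The word "distance" from `g` to `h` in a group `G` with respect to a generating set `S`:
the least `n` such that `g⁻¹ * h` is a product of `n` elements of `S`. -/
noncomputable def wordDist {G : Type*} [Group G] (S : Set G) (g h : G) : ℕ :=
  sInf {n : ℕ | ∃ l : List G, l.length = n ∧ (∀ x ∈ l, x ∈ S) ∧ l.prod = g⁻¹ * h}

/-- A discrete `(k,c)`-quasigeodesic of length `n` in `G` with the word metric of `S`. -/
noncomputable def IsQuasigeodesic {G : Type*} [Group G] (S : Set G) (k c : ℝ) (n : ℕ)
    (γ : ℕ → G) : Prop :=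
  ∀ i ≤ n, ∀ j ≤ n,
    (1 / k) * |(i : ℝ) - (j : ℝ)| - c ≤ (wordDist S (γ i) (γ j) : ℝ) ∧
      (wordDist S (γ i) (γ j) : ℝ) ≤ k * |(i : ℝ) - (j : ℝ)| + c

/-- The path `γ` (of length `n`) is contained in the `L`-neighborhood of the path `γ'`
(of length `m`), with respect to the word metric of `S`. -/
noncomputable def InNbhdOf {G : Type*} [Group G] (S : Set G) (L : ℝ) (n : ℕ) (γ : ℕ → G)
    (m : ℕ) (γ' : ℕ → G) : Prop :=
  ∀ i ≤ n, ∃ j ≤ m, (wordDist S (γ i) (γ' j) : ℝ) ≤ L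

/-- The subgroup `H` of `G` is finitely generated and undistorted with respect to the word
metric of the generating set `S` of `G`. -/
noncomputable def Undistorted {G : Type*} [Group G] (S : Set G) (H : Subgroup G) : Prop :=
  ∃ T : Finset G, (T : Set G) ⊆ (H : Set G) ∧ Subgroup.closure (T : Set G) = H ∧
    ∃ k ≥ (1 : ℝ), ∃ c ≥ (0 : ℝ), ∀ h ∈ H,
      (1 / k) * (wordDist (T : Set G) 1 h : ℝ) - c ≤ (wordDist S 1 h : ℝ) ∧
        (wordDist S 1 h : ℝ) ≤ k * (wordDist (T : Set G) 1 h : ℝ) + c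

/-- The subgroup `H` of `G` is stable with respect to the word metric of the generating set
`S` of `G`: it is undistorted, and any two quasigeodesics with common endpoints on `H` fellow
travel. -/
noncomputable def IsStableSubgroup {G : Type*} [Group G] (S : Set G) (H : Subgroup G) : Prop :=
  Undistorted S H ∧
    ∀ k ≥ (1 : ℝ), ∀ c ≥ (0 : ℝ), ∃ L : ℝ, ∀ (n m : ℕ) (γ γ' : ℕ → G),
      IsQuasigeodesic S k c n γ → IsQuasigeodesic S k c m γ' →
        γ 0 = γ' 0 → γ n = γ' m → γ 0 ∈ H → γ n ∈ H →
          InNbhdOf S L n γ m γ' ∧ InNbhdOf S L m γ' n γ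

/-- The subgroup `H` of `G` is Morse with respect to the word metric of the generating set
`S` of `G`: every quasigeodesic with endpoints on `H` stays in a bounded neighborhood of `H`. -/
noncomputable def IsMorseSubgroup {G : Type*} [Group G] (S : Set G) (H : Subgroup G) : Prop :=
  ∀ k ≥ (1 : ℝ), ∀ c ≥ (0 : ℝ), ∃ M : ℝ, ∀ (n : ℕ) (γ : ℕ → G),
    IsQuasigeodesic S k c n γ → γ 0 ∈ H → γ n ∈ H →
      ∀ i ≤ n, ∃ h ∈ H, (wordDist S (γ i) h : ℝ) ≤ M
/-- The commutation relators of the right-angled Artin group of the graph `Γ`. -/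
def raagRels {V : Type*} (Γ : SimpleGraph V) : Set (FreeGroup V) :=
  {r | ∃ v w : V, Γ.Adj v w ∧
    r = FreeGroup.of v * FreeGroup.of w * (FreeGroup.of v)⁻¹ * (FreeGroup.of w)⁻¹}

/-- The right-angled Artin group `A_Γ` of the graph `Γ`. -/
abbrev RAAG {V : Type*} (Γ : SimpleGraph V) := PresentedGroup (raagRels Γ)

/-- The element of `A_Γ` represented by a word over the alphabet `V(Γ)^{±1}`;
a letter `(v, true)` stands for the generator `v` and `(v, false)` for its inverse. -/
def wordProd {V : Type*} (Γ : SimpleGraph V) (w : List (V × Bool)) : RAAG Γ :=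
  (w.map fun p => if p.2 then (PresentedGroup.of p.1 : RAAG Γ)
    else (PresentedGroup.of p.1 : RAAG Γ)⁻¹).prod

/-- The standard generating set `V(Γ)^{±1}` of `A_Γ`. -/
def raagGens {V : Type*} (Γ : SimpleGraph V) : Set (RAAG Γ) :=
  {g | ∃ v : V, g = PresentedGroup.of v ∨ g = (PresentedGroup.of v : RAAG Γ)⁻¹}

/-- The graph `Γ` decomposes as a nontrivial join: its vertex set splits into two nonempty
parts, every vertex of one part adjacent to every vertex of the other, and the two parts
are not both singletons. -/
def IsNontrivialJoin {V : Type*} (Γ : SimpleGraph V) : Prop :=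
  ∃ A B : Set V, A.Nonempty ∧ B.Nonempty ∧ Disjoint A B ∧ A ∪ B = Set.univ ∧
    (∀ a ∈ A, ∀ b ∈ B, Γ.Adj a b) ∧ ¬ ∃ a b, A = {a} ∧ B = {b}

/-- The graph `Γ` is anti-connected: it does not decompose as a nontrivial join. -/
def AntiConnected {V : Type*} (Γ : SimpleGraph V) : Prop := ¬ IsNontrivialJoin Γ


namespace RaagStab

section Walls

variable {V : Type*} {Γ : SimpleGraph V}

/-! ### Words, parabolic subgroups and hyperplanes -/

/-- The element of `A_Γ` given by a single letter of the alphabet `V^{±1}`. -/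
def gen (Γ : SimpleGraph V) (x : V × Bool) : RAAG Γ :=
  if x.2 then PresentedGroup.of x.1 else (PresentedGroup.of x.1)⁻¹

/-- The standard parabolic subgroup generated by a set `L` of vertices. -/
def par (Γ : SimpleGraph V) (L : Set V) : Subgroup (RAAG Γ) :=
  Subgroup.closure ((fun v => (PresentedGroup.of v : RAAG Γ)) '' L)

/-- The parabolic subgroup `A_{lk v}` on the link of a vertex. -/
abbrev lk (Γ : SimpleGraph V) (v : V) : Subgroup (RAAG Γ) := par Γ (Γ.neighborSet v)

/-- Hyperplanes of the universal cover of the Salvetti complex. The edges `(g, g v)` and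
`(g', g' v)` of the Cayley graph are dual to the same hyperplane iff `g` and `g'` lie in the
same left coset of `A_{lk v}`, so a hyperplane is a label `v` together with such a coset. -/
abbrev Hyp (Γ : SimpleGraph V) := Σ v : V, RAAG Γ ⧸ lk Γ v

lemma wordProd_nil : wordProd Γ [] = 1 := rfl

lemma wordProd_cons (x : V × Bool) (w : List (V × Bool)) :
    wordProd Γ (x :: w) = gen Γ x * wordProd Γ w := by
  simp [wordProd, gen]

lemma wordProd_append (w w' : List (V × Bool)) :
    wordProd Γ (w ++ w') = wordProd Γ w * wordProd Γ w' := by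
  simp [wordProd]

lemma wordProd_singleton (x : V × Bool) : wordProd Γ [x] = gen Γ x := by
  simp [wordProd_cons, wordProd_nil]

/-- The formal inverse of a word. -/
def winv (w : List (V × Bool)) : List (V × Bool) := (w.map fun x => (x.1, !x.2)).reverse

lemma gen_not (v : V) (b : Bool) : gen Γ (v, !b) = (gen Γ (v, b))⁻¹ := by
  cases b <;> simp [gen]

lemma wordProd_winv (w : List (V × Bool)) : wordProd Γ (winv w) = (wordProd Γ w)⁻¹ := by
  induction w with
  | nil => simp [winv, wordProd]
  | cons x w ih =>
    have : winv (x :: w) = winv w ++ [(x.1, !x.2)] := by simp [winv]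
    rw [this, wordProd_append, ih, wordProd_singleton, wordProd_cons, gen_not, mul_inv_rev]

lemma winv_length (w : List (V × Bool)) : (winv w).length = w.length := by simp [winv]

lemma exists_word (g : RAAG Γ) : ∃ w, wordProd Γ w = g := by
  have hg : g ∈ Subgroup.closure (Set.range (PresentedGroup.of (rels := raagRels Γ))) := by
    rw [PresentedGroup.closure_range_of]; trivial
  induction hg using Subgroup.closure_induction with
  | mem x hx =>
    obtain ⟨v, rfl⟩ := hx
    exact ⟨[(v, true)], by simp [wordProd]⟩
  | one => exact ⟨[], rfl⟩
  | mul x y _ _ hx hy =>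
    obtain ⟨a, rfl⟩ := hx
    obtain ⟨b, rfl⟩ := hy
    exact ⟨a ++ b, wordProd_append a b⟩
  | inv x _ hx =>
    obtain ⟨a, rfl⟩ := hx
    exact ⟨winv a, wordProd_winv a⟩

lemma of_comm {v w : V} (h : Γ.Adj v w) :
    (PresentedGroup.of v : RAAG Γ) * PresentedGroup.of w
      = PresentedGroup.of w * PresentedGroup.of v := by
  have : (PresentedGroup.mk (raagRels Γ)) (FreeGroup.of v * FreeGroup.of w * (FreeGroup.of v)⁻¹ *
      (FreeGroup.of w)⁻¹) = 1 := PresentedGroup.one_of_mem ⟨v, w, h, rfl⟩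
  simp only [map_mul, map_inv] at this
  have h2 := mul_inv_eq_one.1 this
  exact mul_inv_eq_iff_eq_mul.1 h2

lemma of_mem_par {L : Set V} {v : V} (hv : v ∈ L) : (PresentedGroup.of v : RAAG Γ) ∈ par Γ L :=
  Subgroup.subset_closure ⟨v, hv, rfl⟩

lemma gen_mem_par {L : Set V} {x : V × Bool} (hv : x.1 ∈ L) : gen Γ x ∈ par Γ L := by
  unfold gen; split_ifs
  · exact of_mem_par hv
  · exact inv_mem (of_mem_par hv)

lemma wordProd_mem_par {L : Set V} {w : List (V × Bool)} (h : ∀ x ∈ w, x.1 ∈ L) :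
    wordProd Γ w ∈ par Γ L := by
  induction w with
  | nil => exact one_mem _
  | cons x w ih =>
    rw [wordProd_cons]
    exact mul_mem (gen_mem_par (h x (by simp))) (ih fun y hy => h y (by simp [hy]))

lemma exists_word_of_mem_par {L : Set V} {g : RAAG Γ} (hg : g ∈ par Γ L) :
    ∃ w, wordProd Γ w = g ∧ ∀ x ∈ w, x.1 ∈ L := by
  induction hg using Subgroup.closure_induction with
  | mem x hx =>
    obtain ⟨v, hv, rfl⟩ := hx
    exact ⟨[(v, true)], by simp [wordProd], by simpa using hv⟩
  | one => exact ⟨[], rfl, by simp⟩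
  | mul x y _ _ hx hy =>
    obtain ⟨a, rfl, ha⟩ := hx
    obtain ⟨b, rfl, hb⟩ := hy
    refine ⟨a ++ b, wordProd_append a b, fun x hx => ?_⟩
    rcases List.mem_append.1 hx with h | h
    exacts [ha x h, hb x h]
  | inv x _ hx =>
    obtain ⟨a, rfl, ha⟩ := hx
    refine ⟨winv a, wordProd_winv a, fun x hx => ?_⟩
    simp only [winv, List.mem_reverse, List.mem_map] at hx
    obtain ⟨y, hy, rfl⟩ := hx
    exact ha y hy

lemma par_mono {L L' : Set V} (h : L ⊆ L') : par Γ L ≤ par Γ L' :=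
  Subgroup.closure_mono (Set.image_mono h)

/-- Parabolic subgroups on two sets of vertices spanning a join commute elementwise. -/
lemma par_comm {L L' : Set V} (h : ∀ a ∈ L, ∀ b ∈ L', Γ.Adj a b) {x y : RAAG Γ}
    (hx : x ∈ par Γ L) (hy : y ∈ par Γ L') : x * y = y * x := by
  have h1 : par Γ L ≤ Subgroup.centralizer (par Γ L' : Set (RAAG Γ)) := by
    refine (Subgroup.closure_le _).2 ?_
    rintro _ ⟨a, ha, rfl⟩
    have h2 : par Γ L' ≤ Subgroup.centralizer {(PresentedGroup.of a : RAAG Γ)} := by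
      refine (Subgroup.closure_le _).2 ?_
      rintro _ ⟨b, hb, rfl⟩
      simp only [SetLike.mem_coe, Subgroup.mem_centralizer_iff, Set.mem_singleton_iff, forall_eq]
      exact of_comm (h a ha b hb)
    simp only [SetLike.mem_coe, Subgroup.mem_centralizer_iff]
    intro z hz
    have := h2 hz
    simp only [Subgroup.mem_centralizer_iff, Set.mem_singleton_iff, forall_eq] at this
    exact this.symm
  exact ((Subgroup.mem_centralizer_iff.1 (h1 hx)) y hy).symm

lemma lk_comm_of {v : V} {a : RAAG Γ} (ha : a ∈ lk Γ v) :
    (PresentedGroup.of v : RAAG Γ) * a = a * PresentedGroup.of v :=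
  par_comm (L := {v}) (L' := Γ.neighborSet v) (by simp) (of_mem_par rfl) ha

lemma lk_comm_gen {x : V × Bool} {a : RAAG Γ} (ha : a ∈ lk Γ x.1) :
    gen Γ x * a = a * gen Γ x :=
  par_comm (L := {x.1}) (L' := Γ.neighborSet x.1) (by simp) (gen_mem_par rfl) ha

/-! ### The two sides of a hyperplane -/

/-- Left translation of integer functions on the cosets of `A_{lk v}`. -/
def lin (v : V) (g : RAAG Γ) : Equiv.Perm ((RAAG Γ ⧸ lk Γ v) → ℤ) :=
  (MulAction.toPerm g).arrowCongr (Equiv.refl ℤ)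

lemma lin_apply (v : V) (g : RAAG Γ) (f : (RAAG Γ ⧸ lk Γ v) → ℤ) (q : RAAG Γ ⧸ lk Γ v) :
    lin v g f q = f (g⁻¹ • q) := rfl

lemma lin_mul (v : V) (g h : RAAG Γ) (f : (RAAG Γ ⧸ lk Γ v) → ℤ) :
    lin v (g * h) f = lin v g (lin v h f) := by
  funext q; simp [lin_apply, mul_smul]

open Classical in
/-- The hyperplanes labelled `v` crossed by the edge from `1` to `w`: the base coset if `w = v`,
and none otherwise. -/
noncomputable def dlt (Γ : SimpleGraph V) (v w : V) : (RAAG Γ ⧸ lk Γ v) → ℤ :=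
  if w = v then Pi.single (QuotientGroup.mk 1) 1 else 0

lemma mk_smul_base {v : V} {a : RAAG Γ} (ha : a ∈ lk Γ v) :
    a • (QuotientGroup.mk 1 : RAAG Γ ⧸ lk Γ v) = QuotientGroup.mk 1 := by
  rw [MulAction.Quotient.smul_mk]
  refine (QuotientGroup.eq).2 ?_
  simpa using ha

lemma lin_dlt (v : V) {w u : V} (h : Γ.Adj w u) :
    lin v (PresentedGroup.of w) (dlt Γ v u) = dlt Γ v u := by
  classical
  funext q
  rw [lin_apply]
  unfold dlt
  split_ifs with hu
  · subst hu
    have hw : (PresentedGroup.of w : RAAG Γ) ∈ lk Γ u := of_mem_par h.symm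
    have h1 := mk_smul_base hw
    by_cases hq : q = QuotientGroup.mk 1
    · subst hq
      rw [inv_smul_eq_iff.2 h1.symm]
    · rw [Pi.single_eq_of_ne hq, Pi.single_eq_of_ne]
      intro h2
      rw [inv_smul_eq_iff, h1] at h2
      exact hq h2
  · rfl

/-- The affine action of `A_Γ` on integer functions on the set of hyperplanes labelled `v`,
whose translation part counts, with sign, the crossings of hyperplanes. -/
noncomputable def aff (Γ : SimpleGraph V) (v : V) :
    RAAG Γ →* Equiv.Perm ((RAAG Γ ⧸ lk Γ v) → ℤ) :=
  PresentedGroup.toGroup (rels := raagRels Γ)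
    (f := fun w => Equiv.addLeft (dlt Γ v w) * lin v (PresentedGroup.of w)) (by
    rintro _ ⟨w, u, h, rfl⟩
    simp only [map_mul, map_inv, FreeGroup.lift_apply_of]
    rw [mul_inv_eq_one, mul_inv_eq_iff_eq_mul]
    ext f q
    simp only [Equiv.Perm.mul_apply, Equiv.coe_addLeft]
    have e1 : ∀ (a b : V) (f : (RAAG Γ ⧸ lk Γ v) → ℤ), lin v (PresentedGroup.of a)
        (dlt Γ v b + f) = lin v (PresentedGroup.of a) (dlt Γ v b) +
          lin v (PresentedGroup.of a) f := fun a b f => rfl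
    rw [e1, e1, lin_dlt v h, lin_dlt v h.symm, ← lin_mul, ← lin_mul, of_comm h]
    simp only [Pi.add_apply]
    ring)

lemma aff_of (v w : V) (f : (RAAG Γ ⧸ lk Γ v) → ℤ) :
    aff Γ v (PresentedGroup.of w) f = dlt Γ v w + lin v (PresentedGroup.of w) f := by
  unfold aff
  rw [PresentedGroup.toGroup.of]
  rfl

lemma aff_sub (v : V) (g : RAAG Γ) : ∀ f f' : (RAAG Γ ⧸ lk Γ v) → ℤ,
    aff Γ v g f - aff Γ v g f' = lin v g (f - f') := by
  have hg : g ∈ Subgroup.closure (Set.range (PresentedGroup.of (rels := raagRels Γ))) := by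
    rw [PresentedGroup.closure_range_of]; trivial
  induction hg using Subgroup.closure_induction with
  | mem x hx =>
    obtain ⟨w, rfl⟩ := hx
    intro f f'
    rw [aff_of, aff_of]
    funext q
    simp [lin_apply]
  | one => intro f f'; funext q; simp [lin_apply]
  | mul x y _ _ hx hy =>
    intro f f'
    rw [map_mul, Equiv.Perm.mul_apply, Equiv.Perm.mul_apply, hx, hy, lin_mul]
  | inv x _ hx =>
    intro f f'
    have := hx (aff Γ v x⁻¹ f) (aff Γ v x⁻¹ f')
    have e : ∀ f, aff Γ v x (aff Γ v x⁻¹ f) = f := fun f => by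
      rw [← Equiv.Perm.mul_apply, ← map_mul, mul_inv_cancel, map_one, Equiv.Perm.one_apply]
    rw [e, e] at this
    rw [this, ← lin_mul]
    funext q; simp [lin_apply]

/-- The signed number of crossings of the base hyperplane labelled `v` along a path from `1`
to `g`. -/
noncomputable def tau (v : V) (g : RAAG Γ) : ℤ := aff Γ v g 0 (QuotientGroup.mk 1)

lemma tau_one (v : V) : tau v (1 : RAAG Γ) = 0 := by simp [tau]

lemma aff_mul_zero (v : V) (g h : RAAG Γ) (q : RAAG Γ ⧸ lk Γ v) :
    aff Γ v (g * h) 0 q = aff Γ v g 0 q + aff Γ v h 0 (g⁻¹ • q) := by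
  have := congrFun (aff_sub v g (aff Γ v h 0) 0) q
  simp only [Pi.sub_apply, lin_apply] at this
  rw [map_mul, Equiv.Perm.mul_apply]
  simp only [Pi.zero_apply] at this
  linarith

open Classical in
lemma tau_mul_of (v w : V) (g : RAAG Γ) :
    tau v (g * PresentedGroup.of w) = tau v g + if w = v ∧ g ∈ lk Γ v then 1 else 0 := by
  unfold tau
  rw [aff_mul_zero, aff_of]
  congr 1
  simp only [Pi.add_apply, lin_apply, Pi.zero_apply, add_zero]
  have hiff : (g⁻¹ • (QuotientGroup.mk 1 : RAAG Γ ⧸ lk Γ v) = QuotientGroup.mk 1)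
      ↔ g ∈ lk Γ v := by
    rw [MulAction.Quotient.smul_mk]
    refine (QuotientGroup.eq).trans ?_
    simp
  by_cases hw : w = v
  · by_cases hg : g ∈ lk Γ v
    · rw [if_pos ⟨hw, hg⟩, hiff.2 hg]; simp [dlt, hw]
    · rw [if_neg (fun h => hg h.2), dlt, if_pos hw, Pi.single_eq_of_ne]
      exact fun h => hg (hiff.1 h)
  · rw [if_neg (fun h => hw h.1), dlt, if_neg hw]; rfl

open Classical in
lemma tau_mul_of_inv (v w : V) (g : RAAG Γ) :
    tau v (g * (PresentedGroup.of w)⁻¹) = tau v g -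
      if w = v ∧ g * (PresentedGroup.of w)⁻¹ ∈ lk Γ v then 1 else 0 := by
  have := tau_mul_of v w (g * (PresentedGroup.of w)⁻¹)
  rw [inv_mul_cancel_right] at this
  linarith

lemma tau_lk_mul {v : V} {a : RAAG Γ} (ha : a ∈ lk Γ v) (g : RAAG Γ) :
    tau v (a * g) = tau v g := by
  classical
  have h1 : ∀ x ∈ lk Γ v, tau v x = 0 := by
    intro x hx
    obtain ⟨w, rfl, hw⟩ := exists_word_of_mem_par hx
    clear hx
    induction w using List.reverseRecOn with
    | nil => exact tau_one v
    | append_singleton w x ih =>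
      have hx : x.1 ≠ v := fun h => by
        have := hw x (by simp)
        rw [h] at this
        exact Γ.loopless.irrefl v this
      have := ih fun y hy => hw y (by simp [hy])
      rw [wordProd_append, wordProd_singleton]
      unfold gen
      split_ifs
      · rw [tau_mul_of, if_neg (fun h => hx h.1), this]; rfl
      · rw [tau_mul_of_inv, if_neg (fun h => hx h.1), this]; rfl
  unfold tau
  rw [aff_mul_zero]
  have := h1 a ha
  unfold tau at this
  rw [this, inv_smul_eq_iff.2 (mk_smul_base ha).symm, zero_add]

/-- A path cannot cross a hyperplane twice in a row in the same direction: both endpoints of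
all the edges dual to it have a constant signed crossing number. -/
lemma tau_mem (v : V) (g : RAAG Γ) : tau v g = 0 ∨ tau v g = 1 := by
  classical
  obtain ⟨w, rfl⟩ := exists_word g
  have h0 : ∀ x ∈ lk Γ v, tau v x = 0 := fun x hx => by
    have := tau_lk_mul hx 1; rwa [mul_one, tau_one] at this
  induction w using List.reverseRecOn with
  | nil => exact Or.inl (tau_one v)
  | append_singleton w x ih =>
    rw [wordProd_append, wordProd_singleton]
    unfold gen
    split_ifs
    · rw [tau_mul_of]
      split_ifs with h
      · rw [h0 _ h.2]; simp
      · simpa using ih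
    · by_cases h : x.1 = v ∧ wordProd Γ w * (PresentedGroup.of x.1)⁻¹ ∈ lk Γ v
      · left; exact h0 _ h.2
      · rw [tau_mul_of_inv, if_neg h]; simpa using ih

/-- The side of the hyperplane `Y` on which `g` lies; every edge `(k, k v)` dual to `Y` goes
from the side `false` to the side `true`. -/
noncomputable def side (Y : Hyp Γ) (g : RAAG Γ) : Bool :=
  Quotient.liftOn Y.2 (fun k => decide (tau Y.1 (k⁻¹ * g) = 1)) (by
    intro a b hab
    have h : a⁻¹ * b ∈ lk Γ Y.1 := QuotientGroup.leftRel_apply.1 hab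
    have e : a⁻¹ * g = (a⁻¹ * b) * (b⁻¹ * g) := by group
    show decide _ = decide _
    rw [e, tau_lk_mul h])

lemma side_mk (v : V) (k g : RAAG Γ) :
    side (⟨v, QuotientGroup.mk k⟩ : Hyp Γ) g = decide (tau v (k⁻¹ * g) = 1) := rfl

lemma side_smul (k : RAAG Γ) (Y : Hyp Γ) (g : RAAG Γ) : side (k • Y) (k * g) = side Y g := by
  obtain ⟨v, q⟩ := Y
  induction q using QuotientGroup.induction_on with
  | H a =>
    rw [Sigma.smul_mk, MulAction.Quotient.smul_mk, side_mk, side_mk]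
    simp [mul_assoc]

lemma side_smul' (k : RAAG Γ) (Y : Hyp Γ) (g : RAAG Γ) : side (k • Y) g = side Y (k⁻¹ * g) := by
  rw [← side_smul k Y, mul_inv_cancel_left]

/-- The hyperplane dual to the edge from `g` to `g x`. -/
def hy (g : RAAG Γ) (x : V × Bool) : Hyp Γ :=
  ⟨x.1, QuotientGroup.mk (if x.2 then g else g * (PresentedGroup.of x.1)⁻¹)⟩

lemma hy_true (g : RAAG Γ) (v : V) : hy g (v, true) = ⟨v, QuotientGroup.mk g⟩ := rfl

lemma hy_false (g : RAAG Γ) (v : V) :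
    hy g (v, false) = ⟨v, QuotientGroup.mk (g * (PresentedGroup.of v)⁻¹)⟩ := rfl

lemma hyp_eq_iff (v w : V) (a b : RAAG Γ) :
    ((⟨v, QuotientGroup.mk a⟩ : Hyp Γ) = ⟨w, QuotientGroup.mk b⟩) ↔ v = w ∧ a⁻¹ * b ∈ lk Γ v := by
  constructor
  · intro h
    have h1 : v = w := congrArg Sigma.fst h
    subst h1
    have h2 := eq_of_heq (Sigma.mk.inj h).2
    exact ⟨rfl, QuotientGroup.eq.1 h2⟩
  · rintro ⟨rfl, h⟩
    rw [QuotientGroup.eq.2 h]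

lemma side_hy (g : RAAG Γ) (x : V × Bool) :
    side (hy g x) g = (!x.2) ∧ side (hy g x) (g * gen Γ x) = x.2 := by
  classical
  obtain ⟨v, b⟩ := x
  have h1 : tau v (PresentedGroup.of v : RAAG Γ) = 1 := by
    have := tau_mul_of v v (1 : RAAG Γ)
    rw [one_mul, tau_one, if_pos ⟨rfl, one_mem _⟩] at this
    simpa using this
  cases b
  · rw [hy_false, side_mk, side_mk]
    simp [gen, tau_one, h1]
  · rw [hy_true, side_mk, side_mk]
    simp [gen, tau_one, h1]

lemma side_ne_iff (Y : Hyp Γ) (g : RAAG Γ) (x : V × Bool) :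
    side Y g ≠ side Y (g * gen Γ x) ↔ Y = hy g x := by
  classical
  constructor
  · intro h
    obtain ⟨v, q⟩ := Y
    induction q using QuotientGroup.induction_on with
    | H a =>
      obtain ⟨w, b⟩ := x
      rw [side_mk, side_mk] at h
      cases b
      · rw [hy_false, hyp_eq_iff]
        simp only [gen, Bool.false_eq_true, if_false] at h
        by_contra hc
        apply h
        rw [← mul_assoc a⁻¹ g, tau_mul_of_inv, if_neg, sub_zero]
        rintro ⟨rfl, h2⟩
        exact hc ⟨rfl, by rwa [← mul_assoc]⟩
      · rw [hy_true, hyp_eq_iff]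
        simp only [gen, if_true] at h
        by_contra hc
        apply h
        rw [← mul_assoc a⁻¹ g, tau_mul_of, if_neg, add_zero]
        rintro ⟨rfl, h2⟩
        exact hc ⟨rfl, h2⟩
  · rintro rfl
    rw [(side_hy g x).1, (side_hy g x).2]
    cases x.2 <;> simp

end Walls
end RaagStab

namespace RaagStab

section Walls2

variable {V : Type*} {Γ : SimpleGraph V}

/-! ### Separating hyperplanes, geodesic words and the word problem -/

/-- The set of hyperplanes separating `g` from `h`. -/
def Sep (g h : RAAG Γ) : Set (Hyp Γ) := {Y | side Y g ≠ side Y h}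

/-- The number of hyperplanes separating `g` from `h`; it coincides with the word distance, see
`wordDist_raag`. -/
noncomputable def dd (g h : RAAG Γ) : ℕ := (Sep g h).ncard

/-- The hyperplanes crossed by the edge path starting at `g` and reading the word `w`. -/
def hyps : RAAG Γ → List (V × Bool) → List (Hyp Γ)
  | _, [] => []
  | g, x :: w => hy g x :: hyps (g * gen Γ x) w

lemma hyps_nil (g : RAAG Γ) : hyps g [] = [] := rfl

lemma hyps_cons (g : RAAG Γ) (x : V × Bool) (w : List (V × Bool)) :
    hyps g (x :: w) = hy g x :: hyps (g * gen Γ x) w := rfl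

lemma hyps_append (w w' : List (V × Bool)) : ∀ g : RAAG Γ,
    hyps g (w ++ w') = hyps g w ++ hyps (g * wordProd Γ w) w' := by
  induction w with
  | nil => intro g; simp [hyps_nil, wordProd_nil]
  | cons x w ih =>
    intro g
    rw [List.cons_append, hyps_cons, hyps_cons, ih, wordProd_cons, mul_assoc, List.cons_append]

lemma hyps_length (w : List (V × Bool)) : ∀ g : RAAG Γ, (hyps g w).length = w.length := by
  induction w with
  | nil => intro g; rfl
  | cons x w ih => intro g; simp [hyps_cons, ih]

lemma hyps_label (w : List (V × Bool)) : ∀ g : RAAG Γ,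
    (hyps g w).map Sigma.fst = w.map Prod.fst := by
  induction w with
  | nil => intro g; rfl
  | cons x w ih => intro g; simp [hyps_cons, ih, hy]

lemma mem_sep {Y : Hyp Γ} {g h : RAAG Γ} : Y ∈ Sep g h ↔ side Y g ≠ side Y h := Iff.rfl

lemma not_mem_sep {Y : Hyp Γ} {g h : RAAG Γ} : Y ∉ Sep g h ↔ side Y g = side Y h := by
  simp [mem_sep]

lemma sep_comm (g h : RAAG Γ) : Sep g h = Sep h g := by
  ext Y; exact ne_comm

lemma sep_self (g : RAAG Γ) : Sep g g = ∅ := by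
  ext Y; simp [mem_sep]

lemma sep_triangle (g h k : RAAG Γ) : Sep g k ⊆ Sep g h ∪ Sep h k := by
  intro Y hY
  by_contra hc
  simp only [Set.mem_union, not_or, not_mem_sep] at hc
  exact hY (hc.1.trans hc.2)

lemma sep_gen (g : RAAG Γ) (x : V × Bool) : Sep g (g * gen Γ x) = {hy g x} := by
  ext Y; exact side_ne_iff Y g x

lemma sep_subset_hyps (w : List (V × Bool)) : ∀ (g : RAAG Γ) (Y : Hyp Γ),
    Y ∈ Sep g (g * wordProd Γ w) → Y ∈ hyps g w := by
  induction w with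
  | nil => intro g Y hY; simp [wordProd_nil, sep_self] at hY
  | cons x w ih =>
    intro g Y hY
    rw [wordProd_cons, ← mul_assoc] at hY
    rcases sep_triangle g (g * gen Γ x) _ hY with h | h
    · rw [sep_gen] at h
      rw [hyps_cons, Set.mem_singleton_iff.1 h]; simp
    · rw [hyps_cons]; exact List.mem_cons_of_mem _ (ih _ _ h)

lemma sep_finite (g h : RAAG Γ) : (Sep g h).Finite := by
  obtain ⟨w, hw⟩ := exists_word (g⁻¹ * h)
  refine (hyps g w).finite_toSet.subset fun Y hY => ?_
  refine sep_subset_hyps w g Y ?_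
  rwa [hw, mul_inv_cancel_left]

lemma sep_smul (k g h : RAAG Γ) (Y : Hyp Γ) : k • Y ∈ Sep (k * g) (k * h) ↔ Y ∈ Sep g h := by
  rw [mem_sep, mem_sep, side_smul, side_smul]

lemma sep_mul (k g h : RAAG Γ) : Sep (k * g) (k * h) = (fun Y => k • Y) '' Sep g h := by
  ext Y
  constructor
  · intro hY
    refine ⟨k⁻¹ • Y, ?_, smul_inv_smul k Y⟩
    rw [← sep_smul k, smul_inv_smul]; exact hY
  · rintro ⟨Z, hZ, rfl⟩
    exact (sep_smul k g h Z).2 hZ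

lemma dd_mul_left (k g h : RAAG Γ) : dd (k * g) (k * h) = dd g h := by
  unfold dd
  rw [sep_mul, Set.ncard_image_of_injective _ (MulAction.injective k)]

lemma dd_comm (g h : RAAG Γ) : dd g h = dd h g := by rw [dd, sep_comm, dd]

lemma dd_self (g : RAAG Γ) : dd g g = 0 := by simp [dd, sep_self]

lemma dd_triangle (g h k : RAAG Γ) : dd g k ≤ dd g h + dd h k :=
  (Set.ncard_le_ncard (sep_triangle g h k) ((sep_finite _ _).union (sep_finite _ _))).trans
    (Set.ncard_union_le _ _)

lemma dd_gen (g : RAAG Γ) (x : V × Bool) : dd g (g * gen Γ x) = 1 := by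
  rw [dd, sep_gen, Set.ncard_singleton]

lemma dd_eq_one_inv (g h : RAAG Γ) : dd g h = dd 1 (g⁻¹ * h) := by
  rw [← dd_mul_left g⁻¹ g h, inv_mul_cancel]

lemma dd_one_mul (g h : RAAG Γ) : dd 1 (g * h) ≤ dd 1 g + dd 1 h := by
  have := dd_triangle 1 g (g * h)
  rwa [dd_eq_one_inv g (g * h), inv_mul_cancel_left] at this

lemma dd_one_inv (g : RAAG Γ) : dd 1 g⁻¹ = dd 1 g := by
  rw [dd_comm, dd_eq_one_inv g⁻¹ 1]; simp

lemma dd_le_length (g : RAAG Γ) (w : List (V × Bool)) : dd g (g * wordProd Γ w) ≤ w.length := by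
  classical
  rw [dd, ← hyps_length w g]
  refine le_trans ?_ (List.toFinset_card_le _)
  rw [← Set.ncard_coe_finset]
  refine Set.ncard_le_ncard (fun Y hY => ?_) (Finset.finite_toSet _)
  simpa using sep_subset_hyps w g Y hY

lemma sep_of_nodup (w : List (V × Bool)) : ∀ g : RAAG Γ, (hyps g w).Nodup →
    ∀ Y, Y ∈ Sep g (g * wordProd Γ w) ↔ Y ∈ hyps g w := by
  intro g hn Y
  refine ⟨sep_subset_hyps w g Y, fun h => ?_⟩
  induction w generalizing g with
  | nil => simp [hyps_nil] at h
  | cons x w ih =>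
    rw [hyps_cons] at h hn
    rw [List.nodup_cons] at hn
    rw [wordProd_cons, ← mul_assoc]
    rcases List.mem_cons.1 h with h | h
    · have h1 : Y ∈ Sep g (g * gen Γ x) := by rw [sep_gen, h]; rfl
      have h2 : Y ∉ Sep (g * gen Γ x) (g * gen Γ x * wordProd Γ w) := fun h3 =>
        hn.1 (h ▸ sep_subset_hyps w _ _ h3)
      rw [not_mem_sep] at h2
      rw [mem_sep, ← h2]; exact h1
    · have h1 : Y ∉ Sep g (g * gen Γ x) := by
        rw [sep_gen]
        rintro rfl
        exact hn.1 h
      rw [not_mem_sep] at h1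
      rw [mem_sep, h1]
      exact ih _ hn.2 h

lemma nodup_iff (g : RAAG Γ) (w : List (V × Bool)) :
    (hyps g w).Nodup ↔ dd g (g * wordProd Γ w) = w.length := by
  classical
  constructor
  · intro h
    have : Sep g (g * wordProd Γ w) = ((hyps g w).toFinset : Set (Hyp Γ)) := by
      ext Y; rw [sep_of_nodup w g h Y]; simp
    rw [dd, this, Set.ncard_coe_finset, List.toFinset_card_of_nodup h, hyps_length]
  · intro h
    have h1 : dd g (g * wordProd Γ w) ≤ (hyps g w).toFinset.card := by
      rw [dd, ← Set.ncard_coe_finset]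
      refine Set.ncard_le_ncard (fun Y hY => ?_) (Finset.finite_toSet _)
      simpa using sep_subset_hyps w g Y hY
    have h2 := List.toFinset_card_le (hyps g w)
    rw [hyps_length] at h2
    have h3 : (hyps g w).toFinset.card = (hyps g w).length := by rw [hyps_length]; omega
    have h4 : (hyps g w).dedup.length = (hyps g w).length := h3
    exact List.dedup_eq_self.1 ((List.dedup_sublist _).eq_of_length h4)

/-- Delete the first letter of a word that can be commuted to the front and cancelled
against `x` there. -/
def del (Γ : SimpleGraph V) [DecidableEq V] [DecidableRel Γ.Adj] (x : V × Bool) :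
    List (V × Bool) → Option (List (V × Bool))
  | [] => none
  | y :: w => if y = (x.1, !x.2) then some w
      else if Γ.Adj x.1 y.1 then (del Γ x w).map (y :: ·) else none

/-- Left multiplication of a reduced word by a letter. -/
def mulL (Γ : SimpleGraph V) [DecidableEq V] [DecidableRel Γ.Adj] (x : V × Bool)
    (w : List (V × Bool)) : List (V × Bool) := (del Γ x w).getD (x :: w)

/-- A reduced word for the element represented by `w`. -/
def nf (Γ : SimpleGraph V) [DecidableEq V] [DecidableRel Γ.Adj] (w : List (V × Bool)) :
    List (V × Bool) := w.foldr (mulL Γ) []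

lemma gen_comm {x y : V × Bool} (h : Γ.Adj x.1 y.1) : gen Γ x * gen Γ y = gen Γ y * gen Γ x :=
  lk_comm_gen (gen_mem_par h)

lemma gen_cancel (x : V × Bool) : gen Γ x * gen Γ (x.1, !x.2) = 1 := by
  rw [gen_not, mul_inv_cancel]

lemma del_some [DecidableEq V] [DecidableRel Γ.Adj] (x : V × Bool) (w : List (V × Bool)) :
    ∀ w', del Γ x w = some w' →
      gen Γ x * wordProd Γ w = wordProd Γ w' ∧ w'.length + 1 = w.length := by
  induction w with
  | nil => intro w' h; simp [del] at h
  | cons y w ih =>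
    intro w' h
    rw [del] at h
    split_ifs at h with h1 h2
    · simp only [Option.some.injEq] at h
      subst h
      rw [wordProd_cons, h1, ← mul_assoc, gen_cancel, one_mul]
      exact ⟨rfl, by simp⟩
    · simp only [Option.map_eq_some_iff] at h
      obtain ⟨u, hu, rfl⟩ := h
      obtain ⟨h3, h4⟩ := ih u hu
      refine ⟨?_, by simp [h4]⟩
      rw [wordProd_cons, wordProd_cons, ← mul_assoc, gen_comm h2, mul_assoc, h3]

lemma del_ne_none [DecidableEq V] [DecidableRel Γ.Adj] (x : V × Bool) (w1 w2 : List (V × Bool))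
    (h : ∀ y ∈ w1, Γ.Adj x.1 y.1) : del Γ x (w1 ++ (x.1, !x.2) :: w2) ≠ none := by
  induction w1 with
  | nil => simp [del]
  | cons y w1 ih =>
    rw [List.cons_append, del]
    split_ifs with h1 h2
    · simp
    · simpa using ih fun z hz => h z (by simp [hz])
    · exact absurd (h y (by simp)) h2

lemma exists_split_of_mem_hyps {Y : Hyp Γ} (w : List (V × Bool)) : ∀ g : RAAG Γ, Y ∈ hyps g w →
    ∃ w1 s w2, w = w1 ++ s :: w2 ∧ Y = hy (g * wordProd Γ w1) s ∧ Y ∉ hyps g w1 := by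
  induction w with
  | nil => intro g h; simp [hyps_nil] at h
  | cons x w ih =>
    intro g h
    by_cases h1 : Y = hy g x
    · exact ⟨[], x, w, rfl, by simpa [wordProd_nil] using h1, by simp [hyps_nil]⟩
    · rw [hyps_cons, List.mem_cons] at h
      obtain ⟨w1, s, w2, rfl, h2, h3⟩ := ih _ (h.resolve_left h1)
      refine ⟨x :: w1, s, w2, rfl, ?_, ?_⟩
      · rw [wordProd_cons, ← mul_assoc]; exact h2
      · rw [hyps_cons, List.mem_cons, not_or]; exact ⟨h1, h3⟩

lemma label_of_par {L : Set V} {a : RAAG Γ} (ha : a ∈ par Γ L) {g : RAAG Γ} {Y : Hyp Γ}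
    (hY : Y ∈ Sep g (g * a)) : Y.1 ∈ L := by
  obtain ⟨w, rfl, hw⟩ := exists_word_of_mem_par ha
  have h1 := List.mem_map_of_mem (f := Sigma.fst) (sep_subset_hyps w g Y hY)
  rw [hyps_label] at h1
  obtain ⟨x, hx, h2⟩ := List.mem_map.1 h1
  rw [← h2]
  exact hw x hx

lemma label_of_par' {L : Set V} {g h : RAAG Γ} (ha : g⁻¹ * h ∈ par Γ L) {Y : Hyp Γ}
    (hY : Y ∈ Sep g h) : Y.1 ∈ L := by
  refine label_of_par ha (g := g) ?_
  rwa [mul_inv_cancel_left]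

lemma letters_of_nodup {L : Set V} {w : List (V × Bool)} {g : RAAG Γ} (hn : (hyps g w).Nodup)
    (h : ∀ Y ∈ Sep g (g * wordProd Γ w), Y.1 ∈ L) : ∀ x ∈ w, x.1 ∈ L := by
  intro x hx
  have h1 := List.mem_map_of_mem (f := Prod.fst) hx
  rw [← hyps_label w g] at h1
  obtain ⟨Y, hY, h2⟩ := List.mem_map.1 h1
  rw [← h2]
  exact h Y ((sep_of_nodup w g hn Y).2 hY)

/-- If two edges read letters `x`, `s` and are dual to the same hyperplane, crossed in opposite
directions, then the path between them lies in the link. -/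
lemma hy_eq_hy_opp {g a : RAAG Γ} {x : V × Bool}
    (h : hy g x = hy (g * gen Γ x * a) (x.1, !x.2)) : a ∈ lk Γ x.1 := by
  obtain ⟨v, b⟩ := x
  cases b
  · simp only [Bool.not_false] at h
    rw [hy_true, hy_false, hyp_eq_iff] at h
    have := h.2
    simpa [gen, mul_assoc] using this
  · simp only [Bool.not_true] at h
    rw [hy_true, hy_false, hyp_eq_iff] at h
    have := h.2
    simp only [gen, if_true] at this
    have e : g⁻¹ * (g * PresentedGroup.of v * a * (PresentedGroup.of v)⁻¹)
        = PresentedGroup.of v * a * (PresentedGroup.of v)⁻¹ := by group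
    rw [e] at this
    have h2 := lk_comm_of this
    have h3 : PresentedGroup.of v * a * (PresentedGroup.of v)⁻¹ = a := by
      have := mul_left_cancel (a := (PresentedGroup.of v : RAAG Γ))
        (b := PresentedGroup.of v * a * (PresentedGroup.of v)⁻¹) (c := a) (by
          rw [h2]; group)
      exact this
    rw [h3] at this
    exact this

/-- The key step of the solution of the word problem: a letter whose hyperplane is crossed
again by a reduced word can be commuted past the intermediate letters and cancelled. -/
lemma exists_cancel {g : RAAG Γ} {x : V × Bool} {w : List (V × Bool)}
    (hn : (hyps (g * gen Γ x) w).Nodup) (hx : hy g x ∈ hyps (g * gen Γ x) w) :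
    ∃ w1 w2, w = w1 ++ (x.1, !x.2) :: w2 ∧ ∀ y ∈ w1, Γ.Adj x.1 y.1 := by
  obtain ⟨w1, s, w2, rfl, h1, h2⟩ := exists_split_of_mem_hyps w _ hx
  have h3 : side (hy g x) (g * gen Γ x * wordProd Γ w1) = x.2 := by
    have := not_mem_sep.1 (fun h => h2 (sep_subset_hyps w1 _ _ h))
    rw [← this, (side_hy g x).2]
  have h4 : s = (x.1, !x.2) := by
    refine Prod.ext (congrArg Sigma.fst h1).symm ?_
    rw [h1, (side_hy _ s).1] at h3
    rw [← h3, Bool.not_not]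
  rw [h4] at h1
  refine ⟨w1, w2, by rw [h4], ?_⟩
  rw [hyps_append, List.nodup_append] at hn
  exact letters_of_nodup (L := Γ.neighborSet x.1) hn.1
    (fun Y hY => label_of_par (hy_eq_hy_opp h1) hY)

lemma mulL_spec [DecidableEq V] [DecidableRel Γ.Adj] (g : RAAG Γ) (x : V × Bool)
    (w : List (V × Bool)) (hn : (hyps (g * gen Γ x) w).Nodup) :
    wordProd Γ (mulL Γ x w) = gen Γ x * wordProd Γ w ∧ (hyps g (mulL Γ x w)).Nodup := by
  unfold mulL
  rcases h : del Γ x w with _ | w'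
  · refine ⟨wordProd_cons x w, ?_⟩
    simp only [Option.getD_none, hyps_cons, List.nodup_cons]
    refine ⟨fun hx => ?_, hn⟩
    obtain ⟨w1, w2, rfl, h1⟩ := exists_cancel hn hx
    exact del_ne_none x w1 w2 h1 h
  · obtain ⟨h1, h2⟩ := del_some x w w' h
    refine ⟨h1.symm, ?_⟩
    rw [nodup_iff] at hn ⊢
    simp only [Option.getD_some]
    have h3 := dd_le_length g w'
    have h4 := dd_triangle (g * gen Γ x) g (g * gen Γ x * wordProd Γ w)
    rw [hn, dd_comm, dd_gen, mul_assoc, h1] at h4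
    omega

lemma nf_spec [DecidableEq V] [DecidableRel Γ.Adj] (w : List (V × Bool)) : ∀ g : RAAG Γ,
    wordProd Γ (nf Γ w) = wordProd Γ w ∧ (hyps g (nf Γ w)).Nodup := by
  induction w with
  | nil => intro g; exact ⟨rfl, List.nodup_nil⟩
  | cons x w ih =>
    intro g
    have h := mulL_spec g x (nf Γ w) (ih _).2
    have e : nf Γ (x :: w) = mulL Γ x (nf Γ w) := rfl
    rw [e]
    exact ⟨by rw [h.1, wordProd_cons, (ih g).1], h.2⟩

/-- Any two elements are joined by a path crossing each hyperplane at most once. -/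
lemma exists_geod (g h : RAAG Γ) : ∃ w, g * wordProd Γ w = h ∧ (hyps g w).Nodup := by
  classical
  obtain ⟨w, hw⟩ := exists_word (g⁻¹ * h)
  refine ⟨nf Γ w, ?_, (nf_spec w g).2⟩
  rw [(nf_spec w g).1, hw, mul_inv_cancel_left]

lemma mem_par_of_label {L : Set V} {g h : RAAG Γ} (hL : ∀ Y ∈ Sep g h, Y.1 ∈ L) :
    g⁻¹ * h ∈ par Γ L := by
  obtain ⟨w, rfl, hn⟩ := exists_geod g h
  rw [inv_mul_cancel_left]
  exact wordProd_mem_par (letters_of_nodup hn hL)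

lemma dd_eq_zero {g h : RAAG Γ} (h0 : dd g h = 0) : g = h := by
  obtain ⟨w, rfl, hn⟩ := exists_geod g h
  rw [(nodup_iff g w).1 hn] at h0
  rw [List.length_eq_zero_iff.1 h0, wordProd_nil, mul_one]

lemma exists_sep_of_ne {g h : RAAG Γ} (hne : g ≠ h) : ∃ Y, Y ∈ Sep g h := by
  by_contra hc
  push Not at hc
  exact hne (dd_eq_zero (by rw [dd, Set.eq_empty_of_forall_notMem hc, Set.ncard_empty]))

lemma exists_word_length (g : RAAG Γ) : ∃ w, wordProd Γ w = g ∧ w.length = dd 1 g := by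
  obtain ⟨w, hw, hn⟩ := exists_geod 1 g
  rw [nodup_iff, hw] at hn
  exact ⟨w, by simpa using hw, hn.symm⟩

lemma gen_mem_raagGens (x : V × Bool) : gen Γ x ∈ raagGens Γ := by
  unfold gen
  split_ifs
  exacts [⟨x.1, Or.inl rfl⟩, ⟨x.1, Or.inr rfl⟩]

lemma wordDist_raag (g h : RAAG Γ) : wordDist (raagGens Γ) g h = dd g h := by
  rw [dd_eq_one_inv]
  unfold wordDist
  apply le_antisymm
  · obtain ⟨w, hw, hl⟩ := exists_word_length (g⁻¹ * h)
    refine Nat.sInf_le ⟨w.map (gen Γ), by simpa using hl, ?_, ?_⟩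
    · intro y hy
      obtain ⟨x, _, rfl⟩ := List.mem_map.1 hy
      exact gen_mem_raagGens x
    · rw [← hw]; rfl
  · have hne : {n : ℕ | ∃ l : List (RAAG Γ), l.length = n ∧ (∀ x ∈ l, x ∈ raagGens Γ) ∧
        l.prod = g⁻¹ * h}.Nonempty := by
      obtain ⟨w, hw, hl⟩ := exists_word_length (g⁻¹ * h)
      refine ⟨_, w.map (gen Γ), rfl, ?_, ?_⟩
      · intro y hy
        obtain ⟨x, _, rfl⟩ := List.mem_map.1 hy
        exact gen_mem_raagGens x
      · rw [← hw]; rfl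
    obtain ⟨l, h1, h2, h3⟩ := Nat.sInf_mem hne
    rw [← h1, ← h3]
    clear h1 h3 hne
    induction l with
    | nil => simp [dd_self]
    | cons a l ih =>
      have hl := ih fun x hx => h2 x (by simp [hx])
      have ha : dd 1 a = 1 := by
        obtain ⟨v, rfl | rfl⟩ := h2 a (by simp)
        · simpa [gen] using dd_gen (1 : RAAG Γ) (v, true)
        · simpa [gen] using dd_gen (1 : RAAG Γ) (v, false)
      have := dd_one_mul a l.prod
      simp only [List.prod_cons, List.length_cons]
      omega

/-! ### Crossing hyperplanes, medians and balls -/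

/-- Two hyperplanes cross if all four intersections of their sides are inhabited. -/
def Cross (Y Z : Hyp Γ) : Prop := ∀ a b : Bool, ∃ g, side Y g = a ∧ side Z g = b

lemma exists_edge_of_sep {a b : RAAG Γ} {Z : Hyp Γ} (ha : side Z a = false)
    (hb : side Z b = true) : ∃ p, Z = hy p (Z.1, true) ∧ ∀ Y ∉ Sep a b, side Y p = side Y a := by
  obtain ⟨w, rfl, hn⟩ := exists_geod a b
  have hZ : Z ∈ Sep a (a * wordProd Γ w) := by rw [mem_sep, ha, hb]; simp
  obtain ⟨w1, s, w2, rfl, h1, h2⟩ := exists_split_of_mem_hyps w a (sep_subset_hyps w a Z hZ)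
  have h3 := not_mem_sep.1 (fun h => h2 (sep_subset_hyps w1 _ _ h))
  have h4 : s = (Z.1, true) := by
    refine Prod.ext (congrArg Sigma.fst h1).symm ?_
    rw [ha, h1, (side_hy _ s).1] at h3
    simpa using h3.symm
  refine ⟨a * wordProd Γ w1, by rw [h4] at h1; exact h1, fun Y hY => ?_⟩
  rw [sep_of_nodup _ a hn Y, hyps_append, List.mem_append, not_or] at hY
  exact (not_mem_sep.1 (fun h => hY.1 (sep_subset_hyps w1 _ _ h))).symm

lemma Cross.adj {Y Z : Hyp Γ} (h : Cross Y Z) : Γ.Adj Y.1 Z.1 := by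
  obtain ⟨g1, h1, h1'⟩ := h false false
  obtain ⟨g2, h2, h2'⟩ := h false true
  obtain ⟨g3, h3, h3'⟩ := h true false
  obtain ⟨g4, h4, h4'⟩ := h true true
  obtain ⟨p, hp, hp'⟩ := exists_edge_of_sep h1' h2'
  obtain ⟨q, hq, hq'⟩ := exists_edge_of_sep h3' h4'
  have hYp := hp' Y (not_mem_sep.2 (h1.trans h2.symm))
  have hYq := hq' Y (not_mem_sep.2 (h3.trans h4.symm))
  have hpq : p⁻¹ * q ∈ lk Γ Z.1 := by
    rw [hp, hy_true, hy_true, hyp_eq_iff] at hq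
    exact hq.2
  have : Y ∈ Sep p q := by rw [mem_sep, hYp, hYq, h1, h3]; simp
  exact (label_of_par' hpq this).symm

/-- Four points realizing the four sign patterns relative to a reference point. -/
lemma cross_of_points {Y Z : Hyp Γ} {p q r s : RAAG Γ}
    (h1 : side Y p = side Y q) (h2 : side Z p = side Z r) (h3 : side Y r = side Y s)
    (h4 : side Z q = side Z s) (h5 : side Y p ≠ side Y s) (h6 : side Z p ≠ side Z s) :
    Cross Y Z := by
  intro a b
  by_cases ha : a = side Y p
  · by_cases hb : b = side Z p
    · exact ⟨p, ha.symm, hb.symm⟩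
    · refine ⟨q, by rw [← h1, ha], ?_⟩
      rw [h4]; revert hb h6; cases b <;> cases side Z p <;> cases side Z s <;> simp
  · by_cases hb : b = side Z p
    · refine ⟨r, ?_, by rw [← h2, hb]⟩
      rw [h3]; revert ha h5; cases a <;> cases side Y p <;> cases side Y s <;> simp
    · refine ⟨s, ?_, ?_⟩
      · revert ha h5; cases a <;> cases side Y p <;> cases side Y s <;> simp
      · revert hb h6; cases b <;> cases side Z p <;> cases side Z s <;> simp

/-- The median of three points: it follows the majority of `x`, `y`, `z` on every hyperplane. -/
lemma exists_median (x y z : RAAG Γ) : ∃ m, ∀ Y : Hyp Γ,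
    (side Y x = side Y y → side Y m = side Y x) ∧
      (side Y x ≠ side Y y → side Y m = side Y z) := by
  induction hn : dd x z using Nat.strong_induction_on generalizing x with
  | _ n ih =>
  by_cases hc : ∃ Y, Y ∈ Sep x y ∧ Y ∈ Sep x z
  swap
  · refine ⟨x, fun Y => ⟨fun _ => rfl, fun h => ?_⟩⟩
    by_contra h2
    exact hc ⟨Y, h, h2⟩
  obtain ⟨w, rfl, hw⟩ := exists_geod x z
  -- the first hyperplane on the way to `z` which also separates `x` from `y`
  have key : ∀ (w : List (V × Bool)) (g : RAAG Γ), (∃ Y ∈ hyps g w, Y ∈ Sep x y) →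
      ∃ w1 s w2, w = w1 ++ s :: w2 ∧ hy (g * wordProd Γ w1) s ∈ Sep x y ∧
        ∀ Z ∈ hyps g w1, Z ∉ Sep x y := by
    intro w
    induction w with
    | nil => rintro g ⟨Y, hY, _⟩; simp [hyps_nil] at hY
    | cons t w ih =>
      rintro g ⟨Y, hY, hY2⟩
      by_cases ht : hy g t ∈ Sep x y
      · exact ⟨[], t, w, rfl, by simpa [wordProd_nil] using ht, by simp [hyps_nil]⟩
      · rw [hyps_cons, List.mem_cons] at hY
        rcases hY with rfl | hY
        · exact absurd hY2 ht
        · obtain ⟨w1, s, w2, rfl, h1, h2⟩ := ih _ ⟨Y, hY, hY2⟩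
          refine ⟨t :: w1, s, w2, rfl, by rwa [wordProd_cons, ← mul_assoc], ?_⟩
          intro Z hZ
          rw [hyps_cons, List.mem_cons] at hZ
          rcases hZ with rfl | hZ
          exacts [ht, h2 Z hZ]
  obtain ⟨Y, hY, hY2⟩ := hc
  obtain ⟨w1, s, w2, rfl, h1, h2⟩ := key w x ⟨Y, (sep_of_nodup w x hw Y).1 hY2, hY⟩
  have hw' := hw
  rw [hyps_append, hyps_cons, List.nodup_append] at hw
  obtain ⟨hw1, hw2, hw3⟩ := hw
  set Y0 := hy (x * wordProd Γ w1) s with hY0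
  have hlk : wordProd Γ w1 ∈ lk Γ s.1 := by
    refine wordProd_mem_par (letters_of_nodup hw1 fun Z hZ => ?_)
    have hZ' := (sep_of_nodup w1 x hw1 Z).1 hZ
    have hne : Z ≠ Y0 := hw3 Z hZ' Y0 (by simp)
    have hY0n : Y0 ∉ Sep x (x * wordProd Γ w1) := fun h => by
      exact hw3 Y0 (sep_subset_hyps _ _ _ h) Y0 (by simp) rfl
    have hZn : Z ∉ Sep (x * wordProd Γ w1) (x * wordProd Γ w1 * gen Γ s) := by
      rw [sep_gen]; exact hne
    have hY0s : Y0 ∈ Sep (x * wordProd Γ w1) (x * wordProd Γ w1 * gen Γ s) := by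
      rw [sep_gen]; rfl
    have hc : Cross Y0 Z := by
      refine cross_of_points (p := x) (q := x * wordProd Γ w1) (r := y)
        (s := x * wordProd Γ w1 * gen Γ s) (not_mem_sep.1 hY0n) (not_mem_sep.1 (h2 Z hZ')) ?_
        (not_mem_sep.1 hZn) ?_ ?_
      · have a1 : side Y0 x ≠ side Y0 y := h1
        have a2 : side Y0 x ≠ side Y0 (x * wordProd Γ w1 * gen Γ s) := by
          rw [not_mem_sep.1 hY0n]; exact hY0s
        revert a1 a2
        cases side Y0 x <;> cases side Y0 y <;>
          cases side Y0 (x * wordProd Γ w1 * gen Γ s) <;> simp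
      · rw [not_mem_sep.1 hY0n]; exact hY0s
      · rw [← not_mem_sep.1 hZn]; exact hZ
    exact hc.adj
  have hcomm := lk_comm_gen hlk
  have hY0x : Y0 = hy x s := by
    have h3 : Y0 ∈ Sep x (x * gen Γ s) := by
      have h4 : Y0 ∈ Sep (x * wordProd Γ w1) (x * wordProd Γ w1 * gen Γ s) := by
        rw [sep_gen]; rfl
      have h5 : Y0 ∉ Sep x (x * wordProd Γ w1) := fun h => by
        exact hw3 Y0 (sep_subset_hyps _ _ _ h) Y0 (by simp) rfl
      have h6 : Y0 ∉ Sep (x * gen Γ s) (x * gen Γ s * wordProd Γ w1) := fun h => by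
        have := label_of_par hlk h
        exact Γ.loopless.irrefl _ this
      rw [mem_sep, not_mem_sep.1 h5, not_mem_sep.1 h6, mul_assoc x (gen Γ s), hcomm, ← mul_assoc]
      exact h4
    rw [sep_gen] at h3
    exact h3
  have hprod : wordProd Γ (w1 ++ s :: w2) = gen Γ s * wordProd Γ (w1 ++ w2) := by
    rw [wordProd_append, wordProd_cons, wordProd_append, ← mul_assoc, ← mul_assoc, hcomm]
  have hlt : dd (x * gen Γ s) (x * wordProd Γ (w1 ++ s :: w2)) < n := by
    rw [← hn, (nodup_iff _ _).1 hw', hprod, ← mul_assoc]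
    refine (dd_le_length _ _).trans_lt ?_
    simp
  have hz0 : Y0 ∈ Sep x (x * wordProd Γ (w1 ++ s :: w2)) := by
    rw [sep_of_nodup _ _ hw', hyps_append, hyps_cons]; simp [hY0]
  obtain ⟨m, hm⟩ := ih _ hlt (x * gen Γ s) rfl
  refine ⟨m, fun Z => ?_⟩
  by_cases hZ : Z = Y0
  · rw [hZ]
    have a1 : side Y0 x ≠ side Y0 (x * gen Γ s) := (side_ne_iff _ _ _).2 hY0x
    have a2 : side Y0 x ≠ side Y0 y := h1
    have a3 : side Y0 x ≠ side Y0 (x * wordProd Γ (w1 ++ s :: w2)) := hz0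
    refine ⟨fun h => absurd h a2, fun _ => ?_⟩
    have a4 : side Y0 (x * gen Γ s) = side Y0 y := by
      revert a1 a2
      cases side Y0 x <;> cases side Y0 y <;> cases side Y0 (x * gen Γ s) <;> simp
    rw [(hm Y0).1 a4]
    revert a1 a3
    cases side Y0 x <;> cases side Y0 (x * gen Γ s) <;>
      cases side Y0 (x * wordProd Γ (w1 ++ s :: w2)) <;> simp
  · have a1 : side Z x = side Z (x * gen Γ s) := by
      by_contra h
      exact hZ (((side_ne_iff Z x s).1 h).trans hY0x.symm)
    rw [a1]
    exact hm Z

/-- An upper bound for the number of elements of the ball of radius `R`. -/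
def bl (V : Type*) [Fintype V] (R : ℕ) : ℕ := (2 * Fintype.card V + 1) ^ R

lemma ball_card [Fintype V] (R : ℕ) :
    {g : RAAG Γ | dd 1 g ≤ R}.Finite ∧ {g : RAAG Γ | dd 1 g ≤ R}.ncard ≤ bl V R := by
  classical
  let φ : (Fin R → Option (V × Bool)) → RAAG Γ := fun f =>
    ((List.ofFn f).map fun o => o.elim 1 (gen Γ)).prod
  have hsub : {g : RAAG Γ | dd 1 g ≤ R} ⊆ Set.range φ := by
    intro g hg
    obtain ⟨w, rfl, hl⟩ := exists_word_length g
    rw [Set.mem_ofPred_eq, ← hl] at hg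
    let l : List (Option (V × Bool)) := w.map some ++ List.replicate (R - w.length) none
    have hlen : l.length = R := by simp [l]; omega
    refine ⟨fun i => l.get (i.cast hlen.symm), ?_⟩
    have e : List.ofFn (fun i : Fin R => l.get (i.cast hlen.symm)) = l := by
      apply List.ext_get
      · simp [hlen]
      · intro n h1 h2; simp
    simp only [φ]
    rw [e]
    simp only [l, List.map_append, List.map_map, List.map_replicate, List.prod_append]
    simp only [Option.elim_none, List.prod_replicate, one_pow, mul_one]
    rfl
  refine ⟨(Set.finite_range φ).subset hsub, ?_⟩
  refine (Set.ncard_le_ncard hsub (Set.finite_range φ)).trans ?_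
  rw [← Set.image_univ]
  refine (Set.ncard_image_le Set.finite_univ).trans ?_
  rw [Set.ncard_univ, Nat.card_eq_fintype_card]
  simp [bl, mul_comm]

end Walls2
end RaagStab

namespace RaagStab

section Geod

variable {V : Type*} {Γ : SimpleGraph V}

/-! ### Geodesics in the subgroup and elements of join type -/

/-- `g` is a product of `n` elements of `T`. -/
def Reach (T : Set (RAAG Γ)) (n : ℕ) (g : RAAG Γ) : Prop :=
  ∃ l : List (RAAG Γ), l.length = n ∧ (∀ x ∈ l, x ∈ T) ∧ l.prod = g

/-- `g` has word length exactly `n` with respect to `T`. -/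
def IsLen (T : Set (RAAG Γ)) (g : RAAG Γ) (n : ℕ) : Prop :=
  Reach T n g ∧ ∀ m, Reach T m g → n ≤ m

/-- `r 0, …, r ℓ` is a geodesic from `1` for the word metric of `T`. -/
structure TGeod (T : Set (RAAG Γ)) (r : ℕ → RAAG Γ) (ℓ : ℕ) : Prop where
  zero : r 0 = 1
  step : ∀ i < ℓ, (r i)⁻¹ * r (i + 1) ∈ T
  min : ∀ i j, i ≤ j → j ≤ ℓ → ∀ n, Reach T n ((r i)⁻¹ * r j) → j - i ≤ n

/-- The hyperplanes separating `1` from an element of `T`. -/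
def Fs (T : Set (RAAG Γ)) : Set (Hyp Γ) := {Y | ∃ τ ∈ T, Y ∈ Sep 1 τ}

/-- `T` is a finite symmetric set whose complexity is bounded by `Λ`. -/
structure Sys (T : Set (RAAG Γ)) (Λ : ℕ) : Prop where
  inv : ∀ τ ∈ T, τ⁻¹ ∈ T
  len : ∀ τ ∈ T, dd 1 τ ≤ Λ
  fin : (Fs T).Finite
  card : (Fs T).ncard ≤ Λ

/-- `g` lies in the standard parabolic subgroup of a join subgraph of `Γ`. -/
def InJoin (g : RAAG Γ) : Prop :=
  ∃ A B : Set V, A.Nonempty ∧ B.Nonempty ∧ (∀ a ∈ A, ∀ b ∈ B, Γ.Adj a b) ∧ g ∈ par Γ (A ∪ B)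

/-- Some nontrivial element of `T`-length at most `N` is conjugate into a join subgroup by
an element of length at most `N`. -/
def Ell (T : Set (RAAG Γ)) (N : ℕ) : Prop :=
  ∃ g : RAAG Γ, g ≠ 1 ∧ (∃ n ≤ N, Reach T n g) ∧ ∃ e : RAAG Γ, dd 1 e ≤ N ∧ InJoin (e * g * e⁻¹)

lemma Ell.mono {T : Set (RAAG Γ)} {M N : ℕ} (h : Ell T M) (hMN : M ≤ N) : Ell T N := by
  obtain ⟨g, h1, ⟨n, h2, h3⟩, e, h4, h5⟩ := h
  exact ⟨g, h1, ⟨n, h2.trans hMN, h3⟩, e, h4.trans hMN, h5⟩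

lemma inJoin_of_lk {v : V} {a : RAAG Γ} (ha : a ∈ lk Γ v) (h1 : a ≠ 1) : InJoin a := by
  refine ⟨{v}, Γ.neighborSet v, ⟨v, rfl⟩, ?_, by simp, par_mono Set.subset_union_right ha⟩
  by_contra hc
  rw [Set.not_nonempty_iff_eq_empty] at hc
  apply h1
  rw [lk, hc, par] at ha
  simpa using ha

lemma reach_zero {T : Set (RAAG Γ)} {g : RAAG Γ} : Reach T 0 g ↔ g = 1 := by
  constructor
  · rintro ⟨l, h1, _, h3⟩
    rw [List.length_eq_zero_iff.1 h1] at h3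
    exact h3.symm
  · rintro rfl; exact ⟨[], rfl, by simp, rfl⟩

lemma reach_mul {T : Set (RAAG Γ)} {m n : ℕ} {g h : RAAG Γ} (hg : Reach T m g)
    (hh : Reach T n h) : Reach T (m + n) (g * h) := by
  obtain ⟨l, h1, h2, h3⟩ := hg
  obtain ⟨l', h1', h2', h3'⟩ := hh
  refine ⟨l ++ l', by simp [h1, h1'], ?_, by simp [h3, h3']⟩
  intro x hx
  rcases List.mem_append.1 hx with h | h
  exacts [h2 x h, h2' x h]

lemma reach_one {T : Set (RAAG Γ)} {g : RAAG Γ} (hg : g ∈ T) : Reach T 1 g :=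
  ⟨[g], rfl, by simpa using hg, by simp⟩

lemma reach_inv {T : Set (RAAG Γ)} (hT : ∀ τ ∈ T, τ⁻¹ ∈ T) {n : ℕ} {g : RAAG Γ}
    (hg : Reach T n g) : Reach T n g⁻¹ := by
  obtain ⟨l, h1, h2, h3⟩ := hg
  refine ⟨(l.map (·⁻¹)).reverse, by simp [h1], ?_, ?_⟩
  · intro x hx
    simp only [List.mem_reverse, List.mem_map] at hx
    obtain ⟨y, hy, rfl⟩ := hx
    exact hT y (h2 y hy)
  · rw [← h3, List.prod_inv_reverse]

lemma reach_dd {T : Set (RAAG Γ)} {Λ : ℕ} (hS : Sys T Λ) {n : ℕ} {g : RAAG Γ}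
    (hg : Reach T n g) : dd 1 g ≤ Λ * n := by
  obtain ⟨l, rfl, h2, rfl⟩ := hg
  induction l with
  | nil => simp [dd_self]
  | cons a l ih =>
    have h3 := ih fun x hx => h2 x (by simp [hx])
    have h4 := hS.len a (h2 a (by simp))
    have h5 := dd_one_mul a l.prod
    rw [List.prod_cons, List.length_cons, mul_add]
    omega

lemma exists_reach {T : Set (RAAG Γ)} (hT : ∀ τ ∈ T, τ⁻¹ ∈ T) {g : RAAG Γ}
    (hg : g ∈ Subgroup.closure T) : ∃ n, Reach T n g := by
  induction hg using Subgroup.closure_induction with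
  | mem x hx => exact ⟨1, reach_one hx⟩
  | one => exact ⟨0, reach_zero.2 rfl⟩
  | mul x y _ _ hx hy =>
    obtain ⟨m, hm⟩ := hx
    obtain ⟨n, hn⟩ := hy
    exact ⟨m + n, reach_mul hm hn⟩
  | inv x _ hx =>
    obtain ⟨m, hm⟩ := hx
    exact ⟨m, reach_inv hT hm⟩

lemma exists_isLen {T : Set (RAAG Γ)} {g : RAAG Γ} (hg : ∃ n, Reach T n g) :
    ∃ n, IsLen T g n := by
  classical
  exact ⟨Nat.find hg, Nat.find_spec hg, fun m hm => Nat.find_min' hg hm⟩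

lemma reach_mem {T : Set (RAAG Γ)} {n : ℕ} {g : RAAG Γ} (hg : Reach T n g) :
    g ∈ Subgroup.closure T := by
  obtain ⟨l, _, h2, rfl⟩ := hg
  exact list_prod_mem fun x hx => Subgroup.subset_closure (h2 x hx)

lemma isLen_geod {T : Set (RAAG Γ)} {g : RAAG Γ} {n : ℕ} (hg : IsLen T g n) :
    ∃ r, TGeod T r n ∧ r n = g := by
  obtain ⟨⟨l, h1, h2, h3⟩, hmin⟩ := hg
  subst h1
  have hre : ∀ i j, i ≤ j → j ≤ l.length →
      Reach T (j - i) ((l.take i).prod⁻¹ * (l.take j).prod) := by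
    intro i j hij hj
    refine ⟨(l.take j).drop i, by simp; omega, ?_, ?_⟩
    · intro x hx
      exact h2 x (List.mem_of_mem_take (List.mem_of_mem_drop hx))
    · have : (l.take j) = l.take i ++ (l.take j).drop i := by
        conv_lhs => rw [← List.take_append_drop i (l.take j)]
        rw [List.take_take, min_eq_left hij]
      conv_rhs => rw [this]
      rw [List.prod_append, inv_mul_cancel_left]
  refine ⟨fun i => (l.take i).prod, ⟨by simp, ?_, ?_⟩, by simp [h3]⟩
  · intro i hi
    obtain ⟨l', a, b, c⟩ := hre i (i + 1) (by omega) hi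
    have : l'.length = 1 := by omega
    obtain ⟨x, rfl⟩ := List.length_eq_one_iff.1 this
    rw [← c]
    simpa using b
  · intro i j hij hj k hk
    have e : g = ((l.take i).prod) * ((l.take i).prod⁻¹ * (l.take j).prod) *
        ((l.take j).prod⁻¹ * (l.take l.length).prod) := by
      rw [List.take_length, h3]; group
    have h4 := hre 0 i (by omega) (by omega)
    simp only [List.take_zero, List.prod_nil, inv_one, one_mul] at h4
    have h5 := hmin _ (e ▸ reach_mul (reach_mul h4 hk) (hre j l.length hj le_rfl))
    omega

lemma TGeod.reach {T : Set (RAAG Γ)} {r : ℕ → RAAG Γ} {ℓ : ℕ} (hr : TGeod T r ℓ) {i j : ℕ}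
    (hij : i ≤ j) (hj : j ≤ ℓ) : Reach T (j - i) ((r i)⁻¹ * r j) := by
  induction j, hij using Nat.le_induction with
  | base => simp [reach_zero]
  | succ j hij ih =>
    have h1 := reach_mul (ih (by omega)) (reach_one (hr.step j (by omega)))
    have e : (r i)⁻¹ * r j * ((r j)⁻¹ * r (j + 1)) = (r i)⁻¹ * r (j + 1) := by group
    rw [e] at h1
    have : j + 1 - i = j - i + 1 := by omega
    rwa [this]

lemma TGeod.isLen {T : Set (RAAG Γ)} {r : ℕ → RAAG Γ} {ℓ : ℕ} (hr : TGeod T r ℓ) {i j : ℕ}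
    (hij : i ≤ j) (hj : j ≤ ℓ) : IsLen T ((r i)⁻¹ * r j) (j - i) :=
  ⟨hr.reach hij hj, hr.min i j hij hj⟩

lemma TGeod.ne {T : Set (RAAG Γ)} {r : ℕ → RAAG Γ} {ℓ : ℕ} (hr : TGeod T r ℓ) {i j : ℕ}
    (hij : i < j) (hj : j ≤ ℓ) : r i ≠ r j := by
  intro h
  have := hr.min i j hij.le hj 0 (by rw [reach_zero, h]; group)
  omega

/-- The hyperplane `Y` is crossed by the `i`-th step of the path `r`. -/
def Crs (r : ℕ → RAAG Γ) (Y : Hyp Γ) (i : ℕ) : Prop := Y ∈ Sep (r i) (r (i + 1))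

lemma exists_crs {r : ℕ → RAAG Γ} {Y : Hyp Γ} {a b : ℕ} (hab : a ≤ b)
    (h : Y ∈ Sep (r a) (r b)) : ∃ i, a ≤ i ∧ i < b ∧ Crs r Y i := by
  induction b, hab using Nat.le_induction with
  | base => simp [sep_self] at h
  | succ b hab ih =>
    rcases sep_triangle _ (r b) _ h with h1 | h1
    · obtain ⟨i, h2, h3, h4⟩ := ih h1
      exact ⟨i, h2, by omega, h4⟩
    · exact ⟨b, hab, by omega, h1⟩

/-- The lengths `n` of elements `g` of the subgroup translating one hyperplane adjacent to the
generators to another. They are the possible gaps between two crossings of a hyperplane by a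
geodesic of the subgroup. -/
def Viol (T : Set (RAAG Γ)) (n : ℕ) : Prop :=
  ∃ g, IsLen T g n ∧ ∃ Y₁ ∈ Fs T, ∃ Y₂ ∈ Fs T, g • Y₂ = Y₁

lemma TGeod.viol {T : Set (RAAG Γ)} {r : ℕ → RAAG Γ} {ℓ : ℕ} (hr : TGeod T r ℓ) {i j : ℕ}
    (hij : i ≤ j) (hj : j < ℓ) {Y : Hyp Γ} (hi : Crs r Y i) (hj' : Crs r Y j) :
    Viol T (j - i) := by
  have key : ∀ k < ℓ, Crs r Y k → (r k)⁻¹ • Y ∈ Fs T := by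
    intro k hk hY
    refine ⟨_, hr.step k hk, ?_⟩
    have := (sep_smul (r k)⁻¹ (r k) (r (k + 1)) Y).2 hY
    rwa [inv_mul_cancel] at this
  refine ⟨_, hr.isLen hij hj.le, _, key i (by omega) hi, _, key j hj hj', ?_⟩
  rw [smul_smul]
  congr 1
  group

/-- Two crossings of a hyperplane along the path are at most `D` apart. -/
def Tight (r : ℕ → RAAG Γ) (ℓ D : ℕ) : Prop :=
  ∀ (Y : Hyp Γ) i j, i ≤ j → j < ℓ → Crs r Y i → Crs r Y j → j - i ≤ D

lemma sep_step {T : Set (RAAG Γ)} {Λ : ℕ} (hS : Sys T Λ) {r : ℕ → RAAG Γ} {ℓ : ℕ}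
    (hr : TGeod T r ℓ) {i : ℕ} (hi : i < ℓ) : dd (r i) (r (i + 1)) ≤ Λ := by
  rw [dd_eq_one_inv]
  exact hS.len _ (hr.step i hi)

/-- The path of medians of the endpoints and a tight geodesic stays at a bounded distance from
the geodesic, and only crosses hyperplanes separating the endpoints. -/
lemma exists_medians {T : Set (RAAG Γ)} {Λ : ℕ} (hS : Sys T Λ) {r : ℕ → RAAG Γ} {ℓ D : ℕ}
    (hr : TGeod T r ℓ) (hD : Tight r ℓ D) :
    ∃ m : ℕ → RAAG Γ, (∀ t ≤ ℓ, dd 1 ((m t)⁻¹ * r t) ≤ D * Λ) ∧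
      ∀ t t', Sep (m t) (m t') = Sep (r 0) (r ℓ) ∩ Sep (r t) (r t') := by
  classical
  choose m hm using fun t => exists_median (r 0) (r ℓ) (r t)
  refine ⟨m, fun t ht => ?_, fun t t' => ?_⟩
  · rw [← dd_eq_one_inv]
    have hsub : Sep (m t) (r t) ⊆
        ((Finset.Ico (t - D) t).biUnion fun i => (sep_finite (r i) (r (i + 1))).toFinset : Finset _)
        := by
      intro Y hY
      have h1 : side Y (r 0) = side Y (r ℓ) := by
        by_contra h
        exact hY ((hm t Y).2 h)
      have h2 : side Y (m t) = side Y (r 0) := (hm t Y).1 h1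
      have h3 : Y ∈ Sep (r 0) (r t) := by rw [mem_sep, ← h2]; exact hY
      have h4 : Y ∈ Sep (r t) (r ℓ) := by rw [mem_sep, ← h1, ← h2]; exact Ne.symm hY
      obtain ⟨i, _, hi, hi'⟩ := exists_crs (Nat.zero_le t) h3
      obtain ⟨j, hj, hjl, hj'⟩ := exists_crs ht h4
      have := hD Y i j (by omega) hjl hi' hj'
      simp only [Finset.coe_biUnion, Set.mem_iUnion]
      exact ⟨i, by simp; omega, by simpa [Crs] using hi'⟩
    refine (Set.ncard_le_ncard hsub (Finset.finite_toSet _)).trans ?_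
    rw [Set.ncard_coe_finset]
    refine (Finset.card_biUnion_le_card_mul _ _ Λ ?_).trans ?_
    · intro i hi
      rw [← Set.ncard_eq_toFinset_card _ (sep_finite _ _)]
      simp only [Finset.mem_Ico] at hi
      exact sep_step hS hr (by omega)
    · refine Nat.mul_le_mul_right _ ?_
      rw [Nat.card_Ico]
      omega
  · ext Y
    simp only [Set.mem_inter_iff, mem_sep]
    by_cases h : side Y (r 0) = side Y (r ℓ)
    · rw [(hm t Y).1 h, (hm t' Y).1 h]; simp [h]
    · rw [(hm t Y).2 h, (hm t' Y).2 h]; simp [h]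

lemma exists_base {T : Set (RAAG Γ)} {Λ : ℕ} (hS : Sys T Λ) {Y : Hyp Γ} (hY : Y ∈ Fs T) :
    ∃ p : RAAG Γ, dd 1 p ≤ Λ ∧ Y = ⟨Y.1, QuotientGroup.mk p⟩ := by
  obtain ⟨τ, hτ, h⟩ := hY
  have key : ∃ p, Y = hy p (Y.1, true) ∧ ∀ Z ∉ Sep 1 τ, side Z p = side Z 1 := by
    rcases h1 : side Y 1 with _ | _
    · have h2 : side Y τ = true := by
        rw [mem_sep, h1] at h
        simpa using h.symm
      exact exists_edge_of_sep h1 h2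
    · have h2 : side Y τ = false := by
        rw [mem_sep, h1] at h
        simpa using h.symm
      obtain ⟨p, h3, h4⟩ := exists_edge_of_sep h2 h1
      refine ⟨p, h3, fun Z hZ => ?_⟩
      rw [h4 Z (by rwa [sep_comm]), not_mem_sep.1 hZ]
  obtain ⟨p, h1, h2⟩ := key
  refine ⟨p, ?_, h1⟩
  refine le_trans ?_ (hS.len τ hτ)
  refine Set.ncard_le_ncard (fun Z hZ => ?_) (sep_finite _ _)
  by_contra hc
  exact hZ (h2 Z hc).symm

/-! ### Bounding the gaps between crossings -/

/-- The gap function: in the absence of short elements of join type, the least violation above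
`D` is at most `gapQ V Λ D`, see `viol_gap`. -/
def gapQ (V : Type*) [Fintype V] (Λ D : ℕ) : ℕ := bl V (D * Λ) * 2 ^ (2 * Λ)

/-- The thresholds obtained by iterating the gap function. -/
def Dq (V : Type*) [Fintype V] (Λ : ℕ) : ℕ → ℕ
  | 0 => 0
  | i + 1 => gapQ V Λ (Dq V Λ i) + Dq V Λ i * Λ + Dq V Λ i

/-- The scale at which elements of join type have to be searched. -/
def scale (V : Type*) [Fintype V] (Λ : ℕ) : ℕ := 2 * Dq V Λ (Λ ^ 2 + 1) + Λ

lemma Dq_mono [Fintype V] (Λ : ℕ) : Monotone (Dq V Λ) :=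
  monotone_nat_of_le_succ fun i => by rw [Dq]; omega

/-- A conjugate by `e` of the element `(m t)⁻¹ m t'` is an element of the subgroup; hence it is
of join type as soon as the former lies in a join subgroup. -/
lemma ell_of_medians {T : Set (RAAG Γ)} {r m : ℕ → RAAG Γ} {ℓ N : ℕ} (hr : TGeod T r ℓ)
    {t t' : ℕ} (htt : t < t') (ht' : t' ≤ ℓ) (hN : t' - t ≤ N)
    (he : (m t)⁻¹ * r t = (m t')⁻¹ * r t') (hd : dd 1 ((m t)⁻¹ * r t) ≤ N)
    (hJ : (m t)⁻¹ * m t' ≠ 1 → InJoin ((m t)⁻¹ * m t')) : Ell T N := by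
  have e1 : (m t)⁻¹ * r t * ((r t)⁻¹ * r t') * ((m t)⁻¹ * r t)⁻¹ = (m t)⁻¹ * m t' := by
    conv_lhs => rw [show ((m t)⁻¹ * r t)⁻¹ = ((m t')⁻¹ * r t')⁻¹ by rw [he]]
    group
  have hne : (r t)⁻¹ * r t' ≠ 1 := fun h => hr.ne htt ht' (inv_mul_eq_one.1 h)
  refine ⟨(r t)⁻¹ * r t', hne, ⟨_, hN, hr.reach htt.le ht'⟩, _, hd, ?_⟩
  rw [e1]
  apply hJ
  rw [← e1]
  intro h
  exact hne (by simpa using conj_eq_one_iff.1 h)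

/-- A geodesic realizing the least violation `n` above `D` is `D`-tight. If `n` is large, two of
its points have the same displacement from their medians and lie on the same sides of the few
hyperplanes near the ends; all hyperplanes between the two medians then have labels in the link of
a vertex, so the subgroup element between the two points is conjugate into a join subgroup. -/
lemma viol_gap [Fintype V] {T : Set (RAAG Γ)} {Λ : ℕ} (hS : Sys T Λ) {D n : ℕ}
    (hn : Viol T n) (hmin : ∀ k, Viol T k → D < k → n ≤ k) :
    n ≤ gapQ V Λ D ∨ Ell T (gapQ V Λ D + D * Λ) := by
  classical
  by_cases hle : n ≤ gapQ V Λ D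
  · exact Or.inl hle
  right
  obtain ⟨g, hg, Y₁, hY₁, Y₂, hY₂, hgY⟩ := hn
  obtain ⟨r, hr, hrn⟩ := isLen_geod hg
  have hT : Tight r n D := by
    intro Y i j hij hj hi hj'
    by_contra hc
    have := hmin _ (hr.viol hij hj hi hj') (by omega)
    omega
  obtain ⟨m, hm1, hm2⟩ := exists_medians hS hr hT
  obtain ⟨p₁, hp₁, hp₁'⟩ := exists_base hS hY₁
  obtain ⟨p₂, hp₂, hp₂'⟩ := exists_base hS hY₂
  -- `g = p₁ a p₂⁻¹` with `a` in the link of the common label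
  have ha : p₁⁻¹ * (g * p₂) ∈ lk Γ Y₁.1 := by
    rw [hp₁', hp₂', Sigma.smul_mk, MulAction.Quotient.smul_mk, eq_comm, hyp_eq_iff] at hgY
    exact hgY.2
  set bad : Finset (Hyp Γ) :=
    (sep_finite 1 p₁).toFinset ∪ (sep_finite (g * p₂) g).toFinset with hbad
  have hbadc : bad.card ≤ 2 * Λ := by
    refine (Finset.card_union_le _ _).trans ?_
    rw [← Set.ncard_eq_toFinset_card _ (sep_finite _ _),
      ← Set.ncard_eq_toFinset_card _ (sep_finite _ _)]
    have h1 : (Sep (g * p₂) g).ncard = dd 1 p₂ := by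
      have : dd (g * p₂) (g * 1) = dd 1 p₂ := by rw [dd_mul_left, dd_comm]
      rwa [mul_one] at this
    have h2 : (Sep 1 p₁).ncard = dd 1 p₁ := rfl
    omega
  obtain ⟨hbf, hbc⟩ := ball_card (Γ := Γ) (D * Λ)
  obtain ⟨t, ht, t', ht', hne, heq⟩ := Finset.exists_ne_map_eq_of_card_lt_of_maps_to
    (s := Finset.range (gapQ V Λ D + 1)) (t := hbf.toFinset ×ˢ bad.powerset)
    (f := fun t => ((m t)⁻¹ * r t, bad.filter fun Y => side Y (r t) = true)) (by
      rw [Finset.card_product, Finset.card_powerset, Finset.card_range, Nat.lt_succ_iff,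
        ← Set.ncard_eq_toFinset_card _ hbf]
      exact Nat.mul_le_mul hbc (Nat.pow_le_pow_right (by norm_num) hbadc)) (by
      intro t ht
      simp only [Finset.coe_range, Set.mem_Iio] at ht
      simp only [Finset.coe_product, Set.mem_prod, Finset.mem_coe, Set.Finite.mem_toFinset,
        Finset.mem_powerset]
      exact ⟨hm1 t (by omega), Finset.filter_subset _ _⟩)
  simp only [Finset.mem_range, Prod.mk.injEq] at ht ht' heq
  have main : ∀ t t', t < t' → t' < gapQ V Λ D + 1 → (m t)⁻¹ * r t = (m t')⁻¹ * r t' →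
      bad.filter (fun Y => side Y (r t) = true) = bad.filter (fun Y => side Y (r t') = true) →
      Ell T (gapQ V Λ D + D * Λ) := by
    intro t t' htt ht' he hf
    refine ell_of_medians hr htt (by omega) (by omega) he ((hm1 t (by omega)).trans (by omega))
      (inJoin_of_lk (v := Y₁.1) (mem_par_of_label fun Y hY => ?_))
    rw [hm2, hr.zero, hrn] at hY
    obtain ⟨hY1, hY2⟩ := hY
    have hYb : Y ∉ bad := by
      intro hb
      have h1 : Y ∈ bad.filter (fun Y => side Y (r t) = true) ↔
        Y ∈ bad.filter (fun Y => side Y (r t') = true) := by rw [hf]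
      simp only [Finset.mem_filter, hb, true_and] at h1
      exact hY2 (Bool.eq_iff_iff.2 h1)
    simp only [hbad, Finset.mem_union, Set.Finite.mem_toFinset, not_or] at hYb
    have h2 : Y ∈ Sep p₁ (g * p₂) := by
      rw [mem_sep, ← not_mem_sep.1 hYb.1, not_mem_sep.1 hYb.2]
      exact hY1
    exact label_of_par' ha h2
  rcases lt_or_gt_of_ne hne with h | h
  · exact main t t' h (by omega) heq.1 heq.2
  · exact main t' t h (by omega) heq.1.symm heq.2.symm

/-- Two elements with the same action on a pair of hyperplanes differ by a stabilizer. -/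
lemma ell_of_two {T : Set (RAAG Γ)} {Λ N : ℕ} (hS : Sys T Λ) {g h : RAAG Γ} {a b : ℕ}
    (hg : Reach T a g) (hh : Reach T b h) (hne : g ≠ h) {Y₁ Y₂ : Hyp Γ} (hY : Y₁ ∈ Fs T)
    (h1 : g • Y₂ = Y₁) (h2 : h • Y₂ = Y₁) (hN : a + b ≤ N) (hΛ : Λ ≤ N) : Ell T N := by
  obtain ⟨p, hp, hp'⟩ := exists_base hS hY
  have hk : (g * h⁻¹) • Y₁ = Y₁ := by
    rw [← h2, smul_smul, inv_mul_cancel_right, h1, h2]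
  have hne' : g * h⁻¹ ≠ 1 := fun h => hne (mul_inv_eq_one.1 h)
  refine ⟨g * h⁻¹, hne', ⟨a + b, hN, reach_mul hg (reach_inv hS.inv hh)⟩, p⁻¹,
    by rw [dd_one_inv]; omega, ?_⟩
  refine inJoin_of_lk (v := Y₁.1) ?_ ?_
  · rw [hp', Sigma.smul_mk, MulAction.Quotient.smul_mk, eq_comm, hyp_eq_iff] at hk
    have := hk.2
    rw [smul_eq_mul, ← mul_assoc] at this
    rwa [inv_inv]
  · rw [inv_inv]
    intro h0
    apply hne'
    have : p⁻¹ * (g * h⁻¹) * p⁻¹⁻¹ = 1 := by rwa [inv_inv]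
    exact conj_eq_one_iff.1 this

/-- If there were a violation above `Dq V Λ (Λ ^ 2)`, the gap bound would give one in each of the
`Λ ^ 2 + 1` intervals between consecutive thresholds, and by pigeonhole two of them would involve
the same pair of hyperplanes. -/
lemma viol_bound [Fintype V] {T : Set (RAAG Γ)} {Λ : ℕ} (hS : Sys T Λ)
    (hE : ¬ Ell T (scale V Λ)) {n : ℕ} (hn : Viol T n) : n ≤ Dq V Λ (Λ ^ 2) := by
  classical
  by_contra hc
  push Not at hc
  have hex : ∀ i : ℕ, i ≤ Λ ^ 2 → ∃ k, Viol T k ∧ Dq V Λ i < k ∧ k ≤ Dq V Λ (i + 1) := by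
    intro i hi
    have h1 : ∃ k, Viol T k ∧ Dq V Λ i < k := ⟨n, hn, (Dq_mono Λ hi).trans_lt hc⟩
    refine ⟨Nat.find h1, (Nat.find_spec h1).1, (Nat.find_spec h1).2, ?_⟩
    have h2 := Dq_mono (V := V) Λ (Nat.succ_le_succ hi)
    simp only [Nat.succ_eq_add_one] at h2
    rcases viol_gap hS (Nat.find_spec h1).1 (D := Dq V Λ i)
      (fun k h2 h3 => Nat.find_min' h1 ⟨h2, h3⟩) with h | h
    · rw [Dq]; omega
    · refine absurd (h.mono ?_) hE
      rw [Dq] at h2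
      unfold scale
      omega
  have : Nonempty (Hyp Γ) := by
    obtain ⟨_, _, Y, _⟩ := hn
    exact ⟨Y⟩
  choose! k hk1 hk2 hk3 using hex
  have hk1' := hk1
  unfold Viol at hk1'
  choose! g hg Y₁ hY₁ Y₂ hY₂ hgY using hk1'
  obtain ⟨i, hi, j, hj, hne, heq⟩ := Finset.exists_ne_map_eq_of_card_lt_of_maps_to
    (s := Finset.range (Λ ^ 2 + 1)) (t := hS.fin.toFinset ×ˢ hS.fin.toFinset)
    (f := fun i => (Y₁ i, Y₂ i)) (by
      rw [Finset.card_product, Finset.card_range, Nat.lt_succ_iff,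
        ← Set.ncard_eq_toFinset_card _ hS.fin, sq]
      exact Nat.mul_le_mul hS.card hS.card) (by
      intro i hi
      simp only [Finset.coe_range, Set.mem_Iio] at hi
      simp only [Finset.coe_product, Set.mem_prod, Finset.mem_coe, Set.Finite.mem_toFinset]
      exact ⟨hY₁ i (by omega), hY₂ i (by omega)⟩)
  simp only [Finset.mem_range, Prod.mk.injEq] at hi hj heq
  have main : ∀ i j, i < j → j < Λ ^ 2 + 1 → Y₁ i = Y₁ j → Y₂ i = Y₂ j → False := by
    intro i j hij hj e1 e2
    have a1 := hk3 i (by omega)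
    have a2 := hk2 j (by omega)
    have a3 := hk3 j (by omega)
    have a4 : Dq V Λ (i + 1) ≤ Dq V Λ j := Dq_mono Λ hij
    have a5 : Dq V Λ (j + 1) ≤ Dq V Λ (Λ ^ 2 + 1) := Dq_mono Λ (by omega)
    refine hE (ell_of_two hS (hg i (by omega)).1 (hg j (by omega)).1 ?_ (hY₁ i (by omega))
      (hgY i (by omega)) (by rw [e1, e2]; exact hgY j (by omega)) ?_ ?_)
    · intro h
      have := (hg j (by omega)).2 (k i) (h ▸ (hg i (by omega)).1)
      omega
    · unfold scale; omega
    · unfold scale; omega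
  rcases lt_or_gt_of_ne hne with h | h
  · exact main i j h (by omega) heq.1 heq.2
  · exact main j i h (by omega) heq.1.symm heq.2.symm

/-- Geodesics of the subgroup are uniformly tight unless there is a short element of join type. -/
lemma tight_of_not_ell [Fintype V] {T : Set (RAAG Γ)} {Λ : ℕ} (hS : Sys T Λ)
    (hE : ¬ Ell T (scale V Λ)) {r : ℕ → RAAG Γ} {ℓ : ℕ} (hr : TGeod T r ℓ) :
    Tight r ℓ (Dq V Λ (Λ ^ 2)) :=
  fun _ _ _ hij hj hi hj' => viol_bound hS hE (hr.viol hij hj hi hj')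

/-! ### Undistortion -/

/-- Among any `bl V R + 1` consecutive times, the error terms of the median path repeat. -/
lemma exists_repeat [Fintype V] {R ℓ : ℕ} (e : ℕ → RAAG Γ) (he : ∀ t ≤ ℓ, dd 1 (e t) ≤ R)
    {t₀ : ℕ} (ht₀ : t₀ + bl V R ≤ ℓ) :
    ∃ t t', t₀ ≤ t ∧ t < t' ∧ t' ≤ t₀ + bl V R ∧ e t = e t' := by
  classical
  obtain ⟨hbf, hbc⟩ := ball_card (Γ := Γ) R
  obtain ⟨t, ht, t', ht', hne, heq⟩ := Finset.exists_ne_map_eq_of_card_lt_of_maps_to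
    (s := Finset.Icc t₀ (t₀ + bl V R)) (t := hbf.toFinset) (f := e) (by
      rw [Nat.card_Icc, ← Set.ncard_eq_toFinset_card _ hbf]; omega) (by
      intro t ht
      simp only [Finset.coe_Icc, Set.mem_Icc] at ht
      simp only [Finset.mem_coe, Set.Finite.mem_toFinset]
      exact he t (by omega))
  simp only [Finset.mem_Icc] at ht ht'
  rcases lt_or_gt_of_ne hne with h | h
  · exact ⟨t, t', ht.1, h, ht'.2, heq⟩
  · exact ⟨t', t, ht'.1, h, ht.2, heq.symm⟩

lemma card_le_of_diam (s : Finset ℕ) (d : ℕ) (h : ∀ a ∈ s, ∀ b ∈ s, a ≤ b → b - a ≤ d) :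
    s.card ≤ d + 1 := by
  rcases s.eq_empty_or_nonempty with rfl | hs
  · simp
  · have : s ⊆ Finset.Icc (s.min' hs) (s.min' hs + d) := by
      intro b hb
      have h1 := s.min'_le b hb
      have h2 := h _ (s.min'_mem hs) b hb h1
      simp only [Finset.mem_Icc]
      omega
    refine (Finset.card_le_card this).trans ?_
    rw [Nat.card_Icc]
    omega

lemma bl_pos [Fintype V] (R : ℕ) : 0 < bl V R := by unfold bl; positivity

/-- A tight geodesic is a quasigeodesic of `A_Γ`: within each window of `bl V (D * Λ)` steps its
median path moves, hence crosses a hyperplane separating the endpoints, and tightness bounds how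
often the same hyperplane is used. -/
lemma geod_length_le [Fintype V] {T : Set (RAAG Γ)} {Λ D : ℕ} (hS : Sys T Λ) {r : ℕ → RAAG Γ}
    {ℓ : ℕ} (hr : TGeod T r ℓ) (hD : Tight r ℓ D) :
    ℓ ≤ bl V (D * Λ) * ((D + 2) * dd 1 (r ℓ) + 1) := by
  classical
  obtain ⟨m, hm1, hm2⟩ := exists_medians hS hr hD
  set W := bl V (D * Λ) with hW
  have hWp : 0 < W := bl_pos _
  have hwin : ∀ k, (k + 1) * W ≤ ℓ → ∃ Y s, Y ∈ Sep 1 (r ℓ) ∧ k * W ≤ s ∧ s < (k + 1) * W ∧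
      Crs r Y s := by
    intro k hk
    obtain ⟨t, t', h1, h2, h3, h4⟩ := exists_repeat (fun t => (m t)⁻¹ * r t) hm1
      (t₀ := k * W) (by rw [← hW]; linarith)
    have hlt : t' ≤ (k + 1) * W := by rw [← hW] at h3; linarith
    have hne : m t ≠ m t' := by
      intro h
      simp only [h] at h4
      exact hr.ne h2 (by omega) (mul_left_cancel h4)
    obtain ⟨Y, hY⟩ := exists_sep_of_ne hne
    rw [hm2, hr.zero] at hY
    obtain ⟨s, hs1, hs2, hs3⟩ := exists_crs h2.le hY.2
    exact ⟨Y, s, hY.1, by omega, by omega, hs3⟩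
  by_cases hlW : ℓ < W
  · exact hlW.le.trans (Nat.le_mul_of_pos_right _ (by omega))
  have : Nonempty (Hyp Γ) := by
    obtain ⟨Y, _⟩ := hwin 0 (by omega)
    exact ⟨Y⟩
  choose! Y s hY hs1 hs2 hs3 using hwin
  have hcard : (Finset.range (ℓ / W)).card ≤ (D + 2) * (sep_finite 1 (r ℓ)).toFinset.card := by
    have hk : ∀ k ∈ Finset.range (ℓ / W), (k + 1) * W ≤ ℓ := by
      intro k hk
      rw [Finset.mem_range] at hk
      exact (Nat.mul_le_mul_right W hk).trans (Nat.div_mul_le_self _ _)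
    refine Finset.card_le_mul_card_image_of_maps_to (f := Y) ?_ _ ?_
    · intro k hk'
      rw [Set.Finite.mem_toFinset]
      exact hY k (hk k hk')
    · intro Z hZ
      refine card_le_of_diam _ (D + 1) ?_
      intro a ha b hb hab
      rw [Finset.mem_filter] at ha hb
      have ha' := hk a ha.1
      have hb' := hk b hb.1
      by_cases hab' : a = b
      · omega
      have hlt : (a + 1) * W ≤ b * W := Nat.mul_le_mul_right W (by omega)
      have h1 := hD Z (s a) (s b) (by have := hs2 a ha'; have := hs1 b hb'; omega)
        (by have := hs2 b hb'; omega) (ha.2 ▸ hs3 a ha') (hb.2 ▸ hs3 b hb')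
      have h2 := hs2 a ha'
      have h3 := hs1 b hb'
      have h4 : (b - (a + 1)) * W ≤ D := by rw [Nat.sub_mul]; omega
      have h5 : b - (a + 1) ≤ (b - (a + 1)) * W := Nat.le_mul_of_pos_right _ hWp
      omega
  rw [Finset.card_range, ← Set.ncard_eq_toFinset_card _ (sep_finite _ _)] at hcard
  have h1 : (Sep 1 (r ℓ)).ncard = dd 1 (r ℓ) := rfl
  rw [h1] at hcard
  have h2 := Nat.div_add_mod ℓ W
  have h3 := Nat.mod_lt ℓ hWp
  have h4 := Nat.mul_le_mul_left W hcard
  rw [mul_add, mul_one]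
  omega

end Geod
end RaagStab

namespace RaagStab

section Joined

variable {V : Type*} {Γ : SimpleGraph V}

/-! ### Few hyperplanes crossed by a subgroup geodesic cross a given hyperplane -/

lemma side_eq_of_no_crs {r : ℕ → RAAG Γ} {Y : Hyp Γ} {a b : ℕ} (hab : a ≤ b)
    (h : ∀ i, a ≤ i → i < b → ¬ Crs r Y i) : side Y (r a) = side Y (r b) := by
  by_contra hc
  obtain ⟨i, h1, h2, h3⟩ := exists_crs hab (Y := Y) (r := r) hc
  exact h i h1 h2 h3

/-- If `M` is crossed well before `Y` and some point lies beyond `Y` but before `M`, then `Y`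
and `M` cross. -/
lemma cross_of_early {r : ℕ → RAAG Γ} {ℓ D : ℕ} (hD : Tight r ℓ D) {Y M : Hyp Γ}
    (hY : Y ∈ Sep (r 0) (r ℓ)) (hM : M ∈ Sep (r 0) (r ℓ)) {i j : ℕ} (hij : i + 2 * D < j)
    (hj : j < ℓ) (hMi : Crs r M i) (hYj : Crs r Y j)
    (hg : ∃ g, side Y g = side Y (r ℓ) ∧ side M g = side M (r 0)) : Cross Y M := by
  obtain ⟨g, hg1, hg2⟩ := hg
  have hMs : side M (r (i + D + 1)) = side M (r ℓ) := by
    refine side_eq_of_no_crs (by omega) fun k h1 h2 h3 => ?_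
    have := hD M i k (by omega) h2 hMi h3
    omega
  have hYs : side Y (r 0) = side Y (r (i + D + 1)) := by
    refine side_eq_of_no_crs (by omega) fun k h1 h2 h3 => ?_
    have := hD Y k j (by omega) hj h3 hYj
    omega
  exact cross_of_points (p := r 0) (q := r (i + D + 1)) (r := g) (s := r ℓ) hYs hg2.symm hg1 hMs
    hY hM

/-- In the absence of elements of join type, the number of hyperplanes separating `1` from an
element of the subgroup and crossing a given hyperplane is bounded. -/
lemma joined_bound [Fintype V] {T : Set (RAAG Γ)} {Λ D : ℕ} (hS : Sys T Λ) {r : ℕ → RAAG Γ}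
    {ℓ : ℕ} (hr : TGeod T r ℓ) (hD : Tight r ℓ D) (hE : ¬ Ell T (bl V (D * Λ) + D * Λ))
    (Z : Hyp Γ) :
    {Y | Y ∈ Sep (r 0) (r ℓ) ∧ Cross Y Z}.ncard ≤
      (2 * Fintype.card V + 1) * (4 * D + 4 + bl V (D * Λ)) * Λ := by
  classical
  set P := 4 * D + 4 + bl V (D * Λ) with hP
  set Ms : Set (Hyp Γ) := {Y | Y ∈ Sep (r 0) (r ℓ) ∧ Cross Y Z} with hMs
  obtain ⟨m, hm1, hm2⟩ := exists_medians hS hr hD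
  by_contra hc
  push Not at hc
  set S : Finset ℕ := (Finset.range ℓ).filter fun s => ∃ M ∈ Ms, Crs r M s with hSdef
  have hScard : (2 * Fintype.card V + 1) * P < S.card := by
    have hsub : Ms ⊆ (S.biUnion fun i => (sep_finite (r i) (r (i + 1))).toFinset : Finset _) := by
      intro M hM
      obtain ⟨i, _, hi, hi'⟩ := exists_crs (Nat.zero_le ℓ) hM.1
      simp only [Finset.coe_biUnion, Set.mem_iUnion]
      refine ⟨i, ?_, by simpa [Crs] using hi'⟩
      simp only [hSdef, Finset.coe_filter, Finset.mem_range]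
      exact ⟨hi, M, hM, hi'⟩
    have h1 := Set.ncard_le_ncard hsub (Finset.finite_toSet _)
    rw [Set.ncard_coe_finset] at h1
    have h2 := Finset.card_biUnion_le_card_mul S
      (fun i => (sep_finite (r i) (r (i + 1))).toFinset) Λ (by
        intro i hi
        rw [← Set.ncard_eq_toFinset_card _ (sep_finite _ _)]
        simp only [hSdef, Finset.mem_filter, Finset.mem_range] at hi
        exact sep_step hS hr hi.1)
    exact lt_of_mul_lt_mul_right (lt_of_lt_of_le hc (h1.trans h2)) (Nat.zero_le _)
  -- the hyperplanes outside `Ms` lie beyond, respectively before, a side of `Z`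
  set PA : Hyp Γ → Prop := fun Y => Y ∈ Sep (r 0) (r ℓ) ∧
    ∀ M ∈ Ms, ∃ g, side Y g = side Y (r ℓ) ∧ side M g = side M (r 0) with hPA
  set PB : Hyp Γ → Prop := fun Y => Y ∈ Sep (r 0) (r ℓ) ∧
    ∀ M ∈ Ms, ∃ g, side Y g = side Y (r 0) ∧ side M g = side M (r ℓ) with hPB
  have hcov : ∀ Y ∈ Sep (r 0) (r ℓ), Y ∉ Ms → PA Y ∨ PB Y := by
    intro Y hY hYM
    have hnc : ¬ Cross Y Z := fun h => hYM ⟨hY, h⟩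
    unfold Cross at hnc
    push Not at hnc
    obtain ⟨a, b, hab⟩ := hnc
    have hYe : side Y (r 0) ≠ side Y (r ℓ) := hY
    by_cases ha : a = side Y (r 0)
    · left
      refine ⟨hY, fun M hM => ?_⟩
      obtain ⟨g, hg1, hg2⟩ := hM.2 (side M (r 0)) b
      refine ⟨g, ?_, hg1⟩
      have : side Y g ≠ a := fun h => hab g h hg2
      rw [ha] at this
      revert this hYe
      cases side Y g <;> cases side Y (r 0) <;> cases side Y (r ℓ) <;> simp
    · right
      refine ⟨hY, fun M hM => ?_⟩
      obtain ⟨g, hg1, hg2⟩ := hM.2 (side M (r ℓ)) b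
      refine ⟨g, ?_, hg1⟩
      have : side Y g ≠ a := fun h => hab g h hg2
      revert this ha
      cases side Y g <;> cases side Y (r 0) <;> cases a <;> simp
  set LA : ℕ → Finset V := fun t => Finset.univ.filter fun v =>
    ∃ Y, PA Y ∧ Y.1 = v ∧ ∃ s, t ≤ s ∧ s < ℓ ∧ Crs r Y s with hLA
  set LB : ℕ → Finset V := fun t => Finset.univ.filter fun v =>
    ∃ Y, PB Y ∧ Y.1 = v ∧ ∃ s, s < t ∧ s < ℓ ∧ Crs r Y s with hLB
  have hLAm : ∀ {t t'}, t ≤ t' → LA t' ⊆ LA t := by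
    intro t t' htt v hv
    simp only [hLA, Finset.mem_filter, Finset.mem_univ, true_and] at hv ⊢
    obtain ⟨Y, h1, h2, s, h3, h4⟩ := hv
    exact ⟨Y, h1, h2, s, by omega, h4⟩
  have hLBm : ∀ {t t'}, t ≤ t' → LB t ⊆ LB t' := by
    intro t t' htt v hv
    simp only [hLB, Finset.mem_filter, Finset.mem_univ, true_and] at hv ⊢
    obtain ⟨Y, h1, h2, s, h3, h4⟩ := hv
    exact ⟨Y, h1, h2, s, by omega, h4⟩
  have hcle : ∀ s : Finset V, s.card ≤ Fintype.card V := fun s => Finset.card_le_univ s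
  obtain ⟨c, hc1, hc2⟩ := Finset.exists_lt_card_fiber_of_mul_lt_card_of_maps_to
    (s := S) (t := Finset.range (2 * Fintype.card V + 1))
    (f := fun t => (LB t).card + (Fintype.card V - (LA t).card)) (n := P) (by
      intro t _
      have := hcle (LB t)
      simp only [Finset.mem_range]
      omega) (by rw [Finset.card_range]; exact hScard)
  set S' := S.filter fun t => (LB t).card + (Fintype.card V - (LA t).card) = c with hS'
  have hne : S'.Nonempty := Finset.card_pos.1 (by omega)
  set t₀ := S'.min' hne with ht₀
  set t₁ := S'.max' hne with ht₁
  have h01 : t₀ ≤ t₁ := S'.min'_le_max' hne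
  have hmem₀ := (Finset.mem_filter.1 (S'.min'_mem hne)).2
  have hmem₁ := (Finset.mem_filter.1 (S'.max'_mem hne)).2
  have ht₁ℓ : t₁ < ℓ := by
    have := (Finset.mem_filter.1 (S'.max'_mem hne)).1
    rw [hSdef, Finset.mem_filter, Finset.mem_range] at this
    exact this.1
  have hLAe : LA t₁ = LA t₀ := by
    refine Finset.eq_of_subset_of_card_le (hLAm h01) ?_
    have a1 := Finset.card_le_card (hLAm h01)
    have a2 := Finset.card_le_card (hLBm h01)
    have a3 := hcle (LA t₀)
    simp only [← ht₀, ← ht₁] at hmem₀ hmem₁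
    omega
  have hLBe : LB t₀ = LB t₁ := by
    refine Finset.eq_of_subset_of_card_le (hLBm h01) ?_
    have a1 := Finset.card_le_card (hLAm h01)
    have a2 := Finset.card_le_card (hLBm h01)
    have a3 := hcle (LA t₀)
    simp only [← ht₀, ← ht₁] at hmem₀ hmem₁
    omega
  have hlen : t₀ + P ≤ t₁ := by
    have := Finset.card_le_card (t := Finset.Icc t₀ t₁) (s := S') (fun s hs => by
      rw [Finset.mem_Icc]
      exact ⟨S'.min'_le s hs, S'.le_max' s hs⟩)
    rw [Nat.card_Icc] at this
    omega
  -- some hyperplane of `Ms` is crossed well inside the interval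
  have hin : ∃ s ∈ S', t₀ + 2 * D + 1 ≤ s ∧ s + 2 * D + 1 ≤ t₁ := by
    by_contra hcon
    push Not at hcon
    have := Finset.card_le_card (s := S')
      (t := Finset.Icc t₀ (t₀ + 2 * D) ∪ Finset.Icc (t₁ - 2 * D) t₁) (fun s hs => by
        have a1 := S'.min'_le s hs
        have a2 := S'.le_max' s hs
        have a3 := hcon s hs
        rw [Finset.mem_union, Finset.mem_Icc, Finset.mem_Icc]
        omega)
    have h2 := this.trans (Finset.card_union_le _ _)
    rw [Nat.card_Icc, Nat.card_Icc] at h2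
    omega
  obtain ⟨s₀, hs₀, hs₀1, hs₀2⟩ := hin
  obtain ⟨M₀, hM₀, hM₀'⟩ := (Finset.mem_filter.1 (Finset.mem_filter.1 hs₀).1).2
  set J₁ : Set V := {v | ∃ M ∈ Ms, M.1 = v ∧ ∃ s, t₀ + 2 * D + 1 ≤ s ∧ s + 2 * D + 1 ≤ t₁ ∧
    Crs r M s} with hJ₁
  set J₂ : Set V := {v | v ∈ LA t₁ ∨ v ∈ LB t₀ ∨ v = Z.1} with hJ₂
  have hadj : ∀ a ∈ J₁, ∀ b ∈ J₂, Γ.Adj a b := by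
    rintro a ⟨M, hM, rfl, s, hs1, hs2, hs3⟩ b (hb | hb | rfl)
    · simp only [hLA, Finset.mem_filter, Finset.mem_univ, true_and] at hb
      obtain ⟨Y, hY, rfl, j, hj1, hj2, hj3⟩ := hb
      exact (cross_of_early hD hY.1 hM.1 (i := s) (j := j) (by omega) hj2 hs3 hj3
        (hY.2 M hM)).adj.symm
    · simp only [hLB, Finset.mem_filter, Finset.mem_univ, true_and] at hb
      obtain ⟨Y, hY, rfl, j, hj1, hj2, hj3⟩ := hb
      obtain ⟨g, hg1, hg2⟩ := hY.2 M hM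
      exact (cross_of_early hD hM.1 hY.1 (i := j) (j := s) (by omega) (by omega) hj3 hs3
        ⟨g, hg2, hg1⟩).adj
    · exact hM.2.adj
  obtain ⟨t, t', h1, h2, h3, h4⟩ := exists_repeat (fun t => (m t)⁻¹ * r t) hm1
    (t₀ := t₀ + 2 * D + 1) (by omega)
  apply hE
  refine ell_of_medians hr h2 (by omega) (by omega) h4 ((hm1 t (by omega)).trans (by omega))
    fun _ => ⟨J₁, J₂, ⟨M₀.1, M₀, hM₀, rfl, s₀, hs₀1, hs₀2, hM₀'⟩, ⟨Z.1, Or.inr (Or.inr rfl)⟩,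
      hadj, mem_par_of_label fun Y hY => ?_⟩
  rw [hm2] at hY
  obtain ⟨s, hs1, hs2, hs3⟩ := exists_crs h2.le hY.2
  by_cases hYM : Y ∈ Ms
  · left
    exact ⟨Y, hYM, rfl, s, by omega, by omega, hs3⟩
  · right
    rcases hcov Y hY.1 hYM with h | h
    · left
      rw [hLAe]
      simp only [hLA, Finset.mem_filter, Finset.mem_univ, true_and]
      exact ⟨Y, h, rfl, s, by omega, by omega, hs3⟩
    · right; left
      rw [hLBe]
      simp only [hLB, Finset.mem_filter, Finset.mem_univ, true_and]
      exact ⟨Y, h, rfl, s, by omega, by omega, hs3⟩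

end Joined
end RaagStab

namespace RaagStab

section Morse

variable {V : Type*} {Γ : SimpleGraph V}

/-! ### Quasigeodesics fellow travel -/

/-- `w 0, …, w n` is an edge path crossing the hyperplanes `Y 0, …, Y (n-1)`, each only once. -/
structure GPath (w : ℕ → RAAG Γ) (Y : ℕ → Hyp Γ) (n : ℕ) : Prop where
  step : ∀ i < n, Sep (w i) (w (i + 1)) = {Y i}
  inj : ∀ i < n, ∀ j < n, Y i = Y j → i = j

lemma hyps_getElem (u : List (V × Bool)) : ∀ (g : RAAG Γ) (i : ℕ) (hi : i < u.length),
    (hyps g u)[i]'(by rw [hyps_length]; exact hi) = hy (g * wordProd Γ (u.take i)) u[i] := by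
  induction u with
  | nil => intro g i hi; simp at hi
  | cons x u ih =>
    intro g i hi
    cases i with
    | zero => simp [hyps_cons, wordProd_nil]
    | succ i =>
      simp only [hyps_cons, List.getElem_cons_succ, List.take_succ_cons, wordProd_cons]
      rw [ih, mul_assoc]

lemma exists_gpath [Nonempty (Hyp Γ)] (g h : RAAG Γ) :
    ∃ w Y, GPath w Y (dd g h) ∧ w 0 = g ∧ w (dd g h) = h := by
  classical
  obtain ⟨u, rfl, hn⟩ := exists_geod g h
  rw [(nodup_iff g u).1 hn]
  have hget := hyps_getElem u g
  refine ⟨fun i => g * wordProd Γ (u.take i),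
    fun i => if hi : i < u.length then (hyps g u)[i]'(by rw [hyps_length]; exact hi)
      else Classical.arbitrary _, ⟨?_, ?_⟩, by simp [wordProd_nil], by simp⟩
  · intro i hi
    simp only [hi, dif_pos]
    rw [hget i hi, List.take_succ_eq_append_getElem hi, wordProd_append, wordProd_singleton,
      ← mul_assoc, sep_gen]
  · intro i hi j hj hij
    simp only [hi, hj, dif_pos] at hij
    exact (List.Nodup.getElem_inj_iff hn).1 hij

lemma GPath.sep {w : ℕ → RAAG Γ} {Y : ℕ → Hyp Γ} {n : ℕ} (hw : GPath w Y n) {i j : ℕ}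
    (hij : i ≤ j) (hj : j ≤ n) (Z : Hyp Γ) :
    Z ∈ Sep (w i) (w j) ↔ ∃ k, i ≤ k ∧ k < j ∧ Z = Y k := by
  induction j, hij using Nat.le_induction with
  | base =>
    simp only [sep_self, Set.mem_empty_iff_false, false_iff]
    rintro ⟨k, h1, h2, _⟩
    omega
  | succ j hij ih =>
    have ih := ih (by omega)
    have hst : Z ∈ Sep (w j) (w (j + 1)) ↔ Z = Y j := by rw [hw.step j (by omega)]; rfl
    by_cases hZ : Z = Y j
    · have h1 : Z ∉ Sep (w i) (w j) := by
        rw [ih]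
        rintro ⟨k, h1, h2, h3⟩
        have := hw.inj k (by omega) j (by omega) (h3.symm.trans hZ)
        omega
      refine ⟨fun _ => ⟨j, hij, by omega, hZ⟩, fun _ => ?_⟩
      rw [mem_sep, not_mem_sep.1 h1]
      exact hst.2 hZ
    · have h1 : Z ∉ Sep (w j) (w (j + 1)) := fun h => hZ (hst.1 h)
      rw [mem_sep, ← not_mem_sep.1 h1]
      refine ih.trans ⟨?_, ?_⟩
      · rintro ⟨k, h1, h2, h3⟩; exact ⟨k, h1, by omega, h3⟩
      · rintro ⟨k, h1, h2, h3⟩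
        refine ⟨k, h1, ?_, h3⟩
        by_contra hc
        have : k = j := by omega
        exact hZ (this ▸ h3)

lemma GPath.dd {w : ℕ → RAAG Γ} {Y : ℕ → Hyp Γ} {n : ℕ} (hw : GPath w Y n) {i j : ℕ}
    (hij : i ≤ j) (hj : j ≤ n) : dd (w i) (w j) = j - i := by
  classical
  have : Sep (w i) (w j) = ((Finset.Ico i j).image Y : Finset _) := by
    ext Z
    rw [hw.sep hij hj]
    simp only [Finset.coe_image, Finset.coe_Ico, Set.mem_image, Set.mem_Ico]
    constructor
    · rintro ⟨k, h1, h2, rfl⟩; exact ⟨k, ⟨h1, h2⟩, rfl⟩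
    · rintro ⟨k, ⟨h1, h2⟩, rfl⟩; exact ⟨k, h1, h2, rfl⟩
  rw [RaagStab.dd, this, Set.ncard_coe_finset, Finset.card_image_of_injOn, Nat.card_Ico]
  intro a ha b hb hab
  simp only [Finset.coe_Ico, Set.mem_Ico] at ha hb
  exact hw.inj a (by omega) b (by omega) hab

lemma GPath.pos {w : ℕ → RAAG Γ} {Y : ℕ → Hyp Γ} {n : ℕ} (hw : GPath w Y n) {i k : ℕ}
    (hi : i ≤ n) (hk : k < n) : Y k ∈ Sep (w 0) (w i) ↔ k < i := by
  rw [hw.sep (Nat.zero_le i) hi]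
  constructor
  · rintro ⟨k', _, h2, h3⟩
    rwa [hw.inj k hk k' (by omega) h3]
  · intro h; exact ⟨k, Nat.zero_le k, h, rfl⟩

lemma bool_eq_of_ne {a b c : Bool} (h1 : a ≠ b) (h2 : a ≠ c) : b = c := by
  revert h1 h2; cases a <;> cases b <;> cases c <;> simp

/-- A point before `Y i` and beyond `Y k`, for `i < k`, forces the two hyperplanes to cross. -/
lemma GPath.cross {w : ℕ → RAAG Γ} {Y : ℕ → Hyp Γ} {n : ℕ} (hw : GPath w Y n) {i k : ℕ}
    (hik : i < k) (hk : k < n) {p : RAAG Γ} (h1 : Y i ∉ Sep (w 0) p) (h2 : Y k ∈ Sep (w 0) p) :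
    Cross (Y i) (Y k) := by
  have a1 : Y k ∉ Sep (w 0) (w (i + 1)) := by rw [hw.pos (by omega) hk]; omega
  have a2 : Y i ∈ Sep (w 0) (w (i + 1)) := by rw [hw.pos (by omega) (by omega)]; omega
  have a3 : Y i ∈ Sep (w 0) (w n) := by rw [hw.pos le_rfl (by omega)]; omega
  have a4 : Y k ∈ Sep (w 0) (w n) := by rw [hw.pos le_rfl (by omega)]; omega
  exact cross_of_points (p := w 0) (q := p) (r := w (i + 1)) (s := w n) (not_mem_sep.1 h1)
    (not_mem_sep.1 a1) (bool_eq_of_ne a2 a3) (bool_eq_of_ne h2 a4) a3 a4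

/-- Each hyperplane crosses at most `N` of the hyperplanes separating `g` from `h`. -/
def JB (N : ℕ) (g h : RAAG Γ) : Prop := ∀ Z : Hyp Γ, {Y | Y ∈ Sep g h ∧ Cross Y Z}.ncard ≤ N

lemma Cross.symm {Y Z : Hyp Γ} (h : Cross Y Z) : Cross Z Y := fun a b => by
  obtain ⟨g, h1, h2⟩ := h b a
  exact ⟨g, h2, h1⟩

/-- Two hyperplanes crossed far apart along a path satisfying `JB` do not cross, and no
hyperplane crosses both. -/
lemma GPath.far {w : ℕ → RAAG Γ} {Y : ℕ → Hyp Γ} {n N : ℕ} (hw : GPath w Y n)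
    (hN : JB N (w 0) (w n)) {i j : ℕ} (hij : i + (3 * N + 2) ≤ j) (hj : j < n) :
    ¬ Cross (Y i) (Y j) ∧ ∀ Z, Cross (Y i) Z → ¬ Cross (Y j) Z := by
  classical
  have hfin : ∀ Z, ({X | X ∈ Sep (w 0) (w n) ∧ Cross X Z}).Finite := fun Z =>
    (sep_finite (w 0) (w n)).subset fun X hX => hX.1
  have count : ∀ Z, ¬ ∀ k, i < k → k < j →
      Cross (Y k) (Y i) ∨ Cross (Y k) (Y j) ∨ Cross (Y k) Z := by
    intro Z hc
    have hsub : (Finset.Ioo i j).image Y ⊆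
        (hfin (Y i)).toFinset ∪ ((hfin (Y j)).toFinset ∪ (hfin Z).toFinset) := by
      intro X hX
      obtain ⟨k, hk, rfl⟩ := Finset.mem_image.1 hX
      rw [Finset.mem_Ioo] at hk
      have hk' : Y k ∈ Sep (w 0) (w n) := by rw [hw.pos le_rfl (by omega)]; omega
      simp only [Finset.mem_union, Set.Finite.mem_toFinset]
      rcases hc k hk.1 hk.2 with h | h | h
      · exact Or.inl ⟨hk', h⟩
      · exact Or.inr (Or.inl ⟨hk', h⟩)
      · exact Or.inr (Or.inr ⟨hk', h⟩)
    have h1 := Finset.card_le_card hsub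
    rw [Finset.card_image_of_injOn (by
      intro a ha b hb hab
      simp only [Finset.coe_Ioo, Set.mem_Ioo] at ha hb
      exact hw.inj a (by omega) b (by omega) hab), Nat.card_Ioo] at h1
    have h2 := Finset.card_union_le (hfin (Y i)).toFinset
      ((hfin (Y j)).toFinset ∪ (hfin Z).toFinset)
    have h3 := Finset.card_union_le (hfin (Y j)).toFinset (hfin Z).toFinset
    simp only [← Set.ncard_eq_toFinset_card _ (hfin _)] at h2 h3
    have h4 := hN (Y i)
    have h5 := hN (Y j)
    have h6 := hN Z
    omega
  refine ⟨fun hc => ?_, fun Z hZi hZj => ?_⟩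
  · refine count (Y i) fun k hk1 hk2 => ?_
    obtain ⟨p, hp1, hp2⟩ := hc (side (Y i) (w 0)) (!(side (Y j) (w 0)))
    have a1 : Y i ∉ Sep (w 0) p := not_mem_sep.2 hp1.symm
    have a2 : Y j ∈ Sep (w 0) p := by rw [mem_sep, hp2]; simp
    by_cases hk : Y k ∈ Sep (w 0) p
    · exact Or.inl (hw.cross hk1 (by omega) a1 hk).symm
    · exact Or.inr (Or.inl (hw.cross hk2 hj hk a2))
  · refine count Z fun k hk1 hk2 => ?_
    by_contra hcon
    push Not at hcon
    obtain ⟨c1, c2, c3⟩ := hcon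
    have d1 : ∀ p, Y i ∉ Sep (w 0) p → Y k ∉ Sep (w 0) p := fun p h1 h2 =>
      c1 (hw.cross hk1 (by omega) h1 h2).symm
    have d2 : ∀ p, Y j ∈ Sep (w 0) p → Y k ∈ Sep (w 0) p := fun p h1 => by
      by_contra h2
      exact c2 (hw.cross hk2 hj h2 h1)
    apply c3
    intro a b
    by_cases ha : a = side (Y k) (w 0)
    · obtain ⟨p, hp1, hp2⟩ := hZi (side (Y i) (w 0)) b
      refine ⟨p, ?_, hp2⟩
      rw [ha]
      exact (not_mem_sep.1 (d1 p (not_mem_sep.2 hp1.symm))).symm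
    · obtain ⟨p, hp1, hp2⟩ := hZj (!(side (Y j) (w 0))) b
      refine ⟨p, ?_, hp2⟩
      have := d2 p (by rw [mem_sep, hp1]; simp)
      exact (bool_eq_of_ne (Ne.symm ha) this).symm

/-- A coarse projection to the path: `s g` counts the members of the chain
`Y 0, Y m, Y (2 m), …` that separate `g` from the start of the path. -/
lemma exists_level {w : ℕ → RAAG Γ} {Y : ℕ → Hyp Γ} {n N : ℕ} (hw : GPath w Y n)
    (hN : JB N (w 0) (w n)) (g : RAAG Γ) :
    ∃ s, ∀ q, q < s ↔ q * (3 * N + 2) < n ∧ Y (q * (3 * N + 2)) ∈ Sep (w 0) g := by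
  classical
  set m := 3 * N + 2 with hm
  have hex : ∃ q, ¬ (q * m < n ∧ Y (q * m) ∈ Sep (w 0) g) := by
    refine ⟨n, fun h => ?_⟩
    have : n * 1 ≤ n * m := Nat.mul_le_mul_left n (by omega)
    omega
  have hdown : ∀ q, (q + 1) * m < n ∧ Y ((q + 1) * m) ∈ Sep (w 0) g →
      q * m < n ∧ Y (q * m) ∈ Sep (w 0) g := by
    rintro q ⟨h1, h2⟩
    have h3 : (q + 1) * m = q * m + m := by ring
    refine ⟨by omega, ?_⟩
    by_contra hc
    exact (hw.far hN (i := q * m) (j := (q + 1) * m) (by omega) h1).1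
      (hw.cross (by omega) h1 hc h2)
  refine ⟨Nat.find hex, fun q => ⟨fun h => not_not.1 (Nat.find_min hex h), fun h => ?_⟩⟩
  by_contra hc
  have : ∀ k, Nat.find hex ≤ k → ¬ (k * m < n ∧ Y (k * m) ∈ Sep (w 0) g) := by
    intro k hk
    induction k, hk using Nat.le_induction with
    | base => exact Nat.find_spec hex
    | succ k _ ih => exact fun h => ih (hdown k h)
  exact this q (not_lt.1 hc) h

/-- The data of a path satisfying `JB` with its level function. -/
structure Lev (N : ℕ) (w : ℕ → RAAG Γ) (Y : ℕ → Hyp Γ) (n : ℕ) (s : RAAG Γ → ℕ) : Prop where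
  path : GPath w Y n
  jb : JB N (w 0) (w n)
  lev : ∀ g q, q < s g ↔ q * (3 * N + 2) < n ∧ Y (q * (3 * N + 2)) ∈ Sep (w 0) g

variable {N n : ℕ} {w : ℕ → RAAG Γ} {Y : ℕ → Hyp Γ} {s : RAAG Γ → ℕ}

lemma Lev.lip (h : Lev N w Y n s) (g g' : RAAG Γ) : s g' ≤ s g + dd g g' := by
  classical
  have hsub : ((Finset.Ico (s g) (s g')).image fun q => Y (q * (3 * N + 2)) : Finset _) ⊆
      (sep_finite g g').toFinset := by
    intro X hX
    obtain ⟨q, hq, rfl⟩ := Finset.mem_image.1 hX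
    rw [Finset.mem_Ico] at hq
    have h1 := (h.lev g' q).1 hq.2
    have h2 : ¬ (Y (q * (3 * N + 2)) ∈ Sep (w 0) g) := fun h2 => by
      have := (h.lev g q).2 ⟨h1.1, h2⟩
      omega
    rw [Set.Finite.mem_toFinset, mem_sep, ← not_mem_sep.1 h2]
    exact h1.2
  have h1 := Finset.card_le_card hsub
  rw [← Set.ncard_eq_toFinset_card _ (sep_finite _ _), Finset.card_image_of_injOn, Nat.card_Ico]
    at h1
  · change _ ≤ dd g g' at h1
    omega
  · intro a ha b hb hab
    simp only [Finset.coe_Ico, Set.mem_Ico] at ha hb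
    have := h.path.inj _ ((h.lev g' a).1 ha.2).1 _ ((h.lev g' b).1 hb.2).1 hab
    exact Nat.eq_of_mul_eq_mul_right (by omega) this

lemma Lev.on_path (h : Lev N w Y n s) {i : ℕ} (hi : i ≤ n) :
    i ≤ (3 * N + 2) * s (w i) ∧ (3 * N + 2) * s (w i) < i + (3 * N + 2) := by
  have key : ∀ q, q < s (w i) ↔ q * (3 * N + 2) < i := by
    intro q
    rw [h.lev]
    constructor
    · rintro ⟨h1, h2⟩; exact (h.path.pos hi h1).1 h2
    · intro h1; exact ⟨by omega, (h.path.pos hi (by omega)).2 h1⟩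
  constructor
  · have := (key (s (w i))).not.1 (lt_irrefl _)
    rw [mul_comm]; omega
  · rcases Nat.eq_zero_or_pos (s (w i)) with h0 | h0
    · rw [h0]; omega
    · have := (key (s (w i) - 1)).1 (by omega)
      have e : (3 * N + 2) * s (w i) = (s (w i) - 1) * (3 * N + 2) + (3 * N + 2) := by
        obtain ⟨k, hk⟩ := Nat.exists_eq_add_of_lt h0
        rw [hk]; simp; ring
      omega

/-- A jump of at least two levels has to be made close to the path. -/
lemma Lev.jump (h : Lev N w Y n s) {g g' : RAAG Γ} (hs : s g + 2 ≤ s g') :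
    ∃ i ≤ n, dd g (w i) ≤ dd g g' + (3 * N + 3) := by
  classical
  set m := 3 * N + 2 with hm
  have h1 := (h.lev g' (s g + 1)).1 (by omega)
  have h2 := (h.lev g' (s g)).1 (by omega)
  have h3 : Y (s g * m) ∉ Sep (w 0) g := fun h3 => by
    have := (h.lev g (s g)).2 ⟨h2.1, h3⟩
    omega
  have h4 : Y ((s g + 1) * m) ∉ Sep (w 0) g := fun h4 => by
    have := (h.lev g (s g + 1)).2 ⟨h1.1, h4⟩
    omega
  rw [← hm] at h1 h2
  have e : (s g + 1) * m = s g * m + m := by ring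
  refine ⟨(s g + 1) * m + 1, by omega, ?_⟩
  set y := w ((s g + 1) * m + 1) with hy
  set y₁ := w (s g * m) with hy₁
  have b1 : Y (s g * m) ∉ Sep (w 0) y₁ := by rw [h.path.pos (by omega) (by omega)]; omega
  have b2 : Y ((s g + 1) * m) ∉ Sep (w 0) y₁ := by rw [h.path.pos (by omega) (by omega)]; omega
  have b3 : Y (s g * m) ∈ Sep (w 0) y := by rw [h.path.pos (by omega) (by omega)]; omega
  have b4 : Y ((s g + 1) * m) ∈ Sep (w 0) y := by rw [h.path.pos (by omega) (by omega)]; omega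
  have hsub : Sep g y ⊆ Sep g g' ∪ Sep y₁ y := by
    intro Z hZ
    by_contra hc
    simp only [Set.mem_union, not_or, not_mem_sep] at hc
    obtain ⟨hc1, hc2⟩ := hc
    have hcross : ∀ X : Hyp Γ, X ∉ Sep (w 0) g → X ∉ Sep (w 0) y₁ → X ∈ Sep (w 0) g' →
        X ∈ Sep (w 0) y → Cross X Z := by
      intro X x1 x2 x3 x4
      rw [not_mem_sep] at x1 x2
      refine cross_of_points (p := g) (q := y₁) (r := g') (s := y) (x1.symm.trans x2) hc1
        (bool_eq_of_ne x3 x4) hc2 ?_ hZ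
      rw [← x1]; exact x4
    exact (h.path.far h.jb (i := s g * m) (j := (s g + 1) * m) (by omega) h1.1).2 Z
      (hcross _ h3 b1 h2.2 b3) (hcross _ h4 b2 h1.2 b4)
  have h5 := (Set.ncard_le_ncard hsub ((sep_finite _ _).union (sep_finite _ _))).trans
    (Set.ncard_union_le _ _)
  have h6 : (Sep y₁ y).ncard = m + 1 := by
    have := h.path.dd (i := s g * m) (j := (s g + 1) * m + 1) (by omega) (by omega)
    change dd y₁ y = _
    rw [this]; omega
  have h7 : (Sep g g').ncard = dd g g' := rfl
  have h8 : (Sep g y).ncard = dd g y := rfl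
  omega

lemma Lev.jump' (h : Lev N w Y n s) {g g' : RAAG Γ} (hs : s g + 2 ≤ s g' ∨ s g' + 2 ≤ s g) :
    ∃ i ≤ n, dd g (w i) ≤ 2 * dd g g' + (3 * N + 3) := by
  rcases hs with hs | hs
  · obtain ⟨i, h1, h2⟩ := h.jump hs
    exact ⟨i, h1, by omega⟩
  · obtain ⟨i, h1, h2⟩ := h.jump hs
    refine ⟨i, h1, ?_⟩
    have := dd_triangle g g' (w i)
    rw [dd_comm g' g] at h2
    omega

/-- A quasigeodesic with natural number constants. -/
def NQG (K L : ℕ) (γ : ℕ → RAAG Γ) : Prop :=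
  ∀ i j, i ≤ j → j ≤ L → dd (γ i) (γ j) ≤ K * (j - i) + K ∧ j - i ≤ K * dd (γ i) (γ j) + K

/-- The radius around the path outside which a quasigeodesic makes no progress. -/
def rad (N K : ℕ) : ℕ := 2 * (K * (2 * (3 * N + 2) * K) + K) + (3 * N + 3)

/-- A bound on the duration of an excursion outside the `rad N K`-neighborhood of the path. -/
def exc (N K : ℕ) : ℕ :=
  2 * K * ((3 * N + 2) * (2 + 4 * K + 2 * rad N K) + 2 * rad N K) + 2 * K

/-- The Morse constant. -/
def morse (N K : ℕ) : ℕ := rad N K + (K * exc N K + K)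

lemma Lev.excursion (h : Lev N w Y n s) {K L : ℕ} (hK : 1 ≤ K) {γ : ℕ → RAAG Γ}
    (hγ : NQG K L γ) {a e : ℕ} (hae : a + 1 < e) (he : e ≤ L)
    (hna : ∃ i ≤ n, dd (γ a) (w i) ≤ rad N K) (hne : ∃ i ≤ n, dd (γ e) (w i) ≤ rad N K)
    (hout : ∀ t, a < t → t < e → ∀ i ≤ n, rad N K < dd (γ t) (w i)) : e - a ≤ exc N K := by
  set m := 3 * N + 2 with hm
  set R := rad N K with hR
  set b := 2 * m * K with hb
  have hbp : 0 < b := by positivity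
  -- along an excursion the level changes by at most one in each block of length `b`
  have hblock : ∀ k i i', a < i → i ≤ i' → i' < e → i' - i ≤ k * b →
      s (γ i) ≤ s (γ i') + k ∧ s (γ i') ≤ s (γ i) + k := by
    have hone : ∀ i i', a < i → i ≤ i' → i' < e → i' - i ≤ b →
      s (γ i) ≤ s (γ i') + 1 ∧ s (γ i') ≤ s (γ i) + 1 := by
      intro i i' hi hii hi' hb'
      by_contra hc
      obtain ⟨p, hp1, hp2⟩ := h.jump' (g := γ i) (g' := γ i') (by omega)
      have h1 := hout i hi (by omega) p hp1
      have h2 := (hγ i i' hii (by omega)).1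
      have h3 : K * (i' - i) ≤ K * b := Nat.mul_le_mul_left K hb'
      have h4 : R = 2 * (K * b + K) + (3 * N + 3) := rfl
      omega
    intro k
    induction k with
    | zero =>
      intro i i' hi hii hi' hk
      have : i' = i := by omega
      rw [this]; simp
    | succ k ih =>
      intro i i' hi hii hi' hk
      have e1 : (k + 1) * b = k * b + b := by ring
      by_cases hc : i' - i ≤ b
      · have := hone i i' hi hii hi' hc
        omega
      · have h1 := hone i (i + b) hi (by omega) (by omega) (by omega)
        have h2 := ih (i + b) i' (by omega) (by omega) hi' (by omega)
        omega
  obtain ⟨α, hα, hα'⟩ := hna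
  obtain ⟨β, hβ, hβ'⟩ := hne
  set x := e - a with hx
  have c1 := hblock (x / b + 1) (a + 1) (e - 1) (by omega) (by omega) (by omega) (by
    have h1 := Nat.div_add_mod x b
    have h2 := Nat.mod_lt x hbp
    have e1 : (x / b + 1) * b = b * (x / b) + b := by ring
    omega)
  have c2 := (hγ a (a + 1) (by omega) (by omega)).1
  have c3 := (hγ (e - 1) e (by omega) (by omega)).1
  rw [show a + 1 - a = 1 by omega, mul_one] at c2
  rw [show e - (e - 1) = 1 by omega, mul_one] at c3
  have l1 := h.lip (γ a) (γ (a + 1))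
  have l1' := h.lip (γ (a + 1)) (γ a)
  have l2 := h.lip (γ (e - 1)) (γ e)
  have l2' := h.lip (γ e) (γ (e - 1))
  have l3 := h.lip (γ a) (w α)
  have l3' := h.lip (w α) (γ a)
  have l4 := h.lip (γ e) (w β)
  have l4' := h.lip (w β) (γ e)
  rw [dd_comm (γ (a + 1)) (γ a)] at l1'
  rw [dd_comm (γ e) (γ (e - 1))] at l2'
  rw [dd_comm (w α) (γ a)] at l3'
  rw [dd_comm (w β) (γ e)] at l4'
  set σ := x / b + 1 + 4 * K + 2 * R with hσ
  have d1 : s (w α) ≤ s (w β) + σ := by omega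
  have d2 : s (w β) ≤ s (w α) + σ := by omega
  obtain ⟨p1, p2⟩ := h.on_path hα
  obtain ⟨p3, p4⟩ := h.on_path hβ
  rw [← hm] at p1 p2 p3 p4
  have d1' := Nat.mul_le_mul_left m d1
  have d2' := Nat.mul_le_mul_left m d2
  rw [mul_add] at d1' d2'
  have hdd : dd (w α) (w β) ≤ m * σ + m := by
    rcases le_total α β with hl | hl
    · rw [h.path.dd hl hβ]; omega
    · rw [dd_comm, h.path.dd hl hα]; omega
  have t1 := dd_triangle (γ a) (w α) (γ e)
  have t2 := dd_triangle (w α) (w β) (γ e)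
  rw [dd_comm (w β) (γ e)] at t2
  have q := (hγ a e (by omega) he).2
  rw [← hx] at q
  have q2 : dd (γ a) (γ e) ≤ m * σ + m + 2 * R := by omega
  have q3 := Nat.mul_le_mul_left K q2
  have q4 : b * (x / b) ≤ x := Nat.mul_div_le x b
  have e2 : exc N K = 2 * K * (m * (2 + 4 * K + 2 * R) + 2 * R) + 2 * K := rfl
  rw [e2]
  have e3 : 2 * (K * (m * σ + m + 2 * R)) =
      b * (x / b) + 2 * K * (m * (2 + 4 * K + 2 * R) + 2 * R) := by
    rw [hσ, hb]; ring
  omega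

lemma Lev.near (h : Lev N w Y n s) {K L : ℕ} (hK : 1 ≤ K) {γ : ℕ → RAAG Γ}
    (hγ : NQG K L γ) (h0 : γ 0 = w 0) (hL : γ L = w n) {t : ℕ} (ht : t ≤ L) :
    ∃ i ≤ n, dd (γ t) (w i) ≤ morse N K := by
  classical
  let nr : ℕ → Prop := fun t => ∃ i ≤ n, dd (γ t) (w i) ≤ rad N K
  by_cases hnr : nr t
  · obtain ⟨i, hi, hi'⟩ := hnr
    exact ⟨i, hi, hi'.trans (by unfold morse; omega)⟩
  have hn0 : nr 0 := ⟨0, Nat.zero_le n, by rw [h0, dd_self]; omega⟩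
  have hnL : nr L := ⟨n, le_rfl, by rw [hL, dd_self]; omega⟩
  set a := Nat.findGreatest nr t with ha
  have ha1 : nr a := Nat.findGreatest_spec (Nat.zero_le t) hn0
  have ha2 : a ≤ t := Nat.findGreatest_le t
  have hex : ∃ e, t ≤ e ∧ nr e := ⟨L, ht, hnL⟩
  set e := Nat.find hex with he
  have he1 : t ≤ e ∧ nr e := Nat.find_spec hex
  have he2 : e ≤ L := Nat.find_min' hex ⟨ht, hnL⟩
  have hat : a ≠ t := fun hc => hnr (hc ▸ ha1)
  have het : e ≠ t := fun hc => hnr (hc ▸ he1.2)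
  have hx := h.excursion hK hγ (a := a) (e := e) (by omega) he2 ha1 he1.2 (by
    intro u hu1 hu2 i hi
    by_contra hc
    push Not at hc
    have hnu : nr u := ⟨i, hi, hc⟩
    rcases le_or_gt u t with hut | hut
    · have := Nat.le_findGreatest hut hnu
      omega
    · exact Nat.find_min hex hu2 ⟨hut.le, hnu⟩)
  obtain ⟨i, hi, hi'⟩ := ha1
  refine ⟨i, hi, ?_⟩
  have h1 := (hγ a t ha2 ht).1
  have h2 := dd_triangle (γ t) (γ a) (w i)
  rw [dd_comm (γ t) (γ a)] at h2
  have h3 : K * (t - a) ≤ K * exc N K := Nat.mul_le_mul_left K (by omega)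
  unfold morse
  omega

/-- Every point of the path is close to the quasigeodesic, by a discrete intermediate value
argument. -/
lemma Lev.near' (h : Lev N w Y n s) {K L : ℕ} (hK : 1 ≤ K) {γ : ℕ → RAAG Γ}
    (hγ : NQG K L γ) (h0 : γ 0 = w 0) (hL : γ L = w n) {i : ℕ} (hi : i ≤ n) :
    ∃ t ≤ L, dd (w i) (γ t) ≤ 3 * morse N K + 2 * K := by
  classical
  have hα : ∀ t, ∃ j, t ≤ L → j ≤ n ∧ dd (γ t) (w j) ≤ morse N K := by
    intro t
    by_cases ht : t ≤ L
    · obtain ⟨j, h1, h2⟩ := h.near hK hγ h0 hL ht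
      exact ⟨j, fun _ => ⟨h1, h2⟩⟩
    · exact ⟨0, fun h => absurd h ht⟩
  choose α hα using hα
  by_cases hend : i < α L
  swap
  · refine ⟨L, le_rfl, ?_⟩
    obtain ⟨h1, h2⟩ := hα L le_rfl
    have h3 := h.path.dd h1 le_rfl
    rw [hL, dd_comm, h3] at h2
    rw [hL, h.path.dd hi le_rfl]
    omega
  have hex : ∃ t, i < α t := ⟨L, hend⟩
  set t := Nat.find hex with ht
  have ht1 : i < α t := Nat.find_spec hex
  have ht2 : t ≤ L := Nat.find_min' hex hend
  obtain ⟨g1, g2⟩ := hα t ht2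
  rcases Nat.eq_zero_or_pos t with hz | hz
  · refine ⟨0, Nat.zero_le _, ?_⟩
    rw [hz] at ht1
    obtain ⟨h1, h2⟩ := hα 0 (Nat.zero_le _)
    rw [h0, h.path.dd (Nat.zero_le _) h1] at h2
    rw [h0, dd_comm, h.path.dd (Nat.zero_le _) hi]
    omega
  · refine ⟨t, ht2, ?_⟩
    have hp : α (t - 1) ≤ i := by
      have := Nat.find_min hex (m := t - 1) (by omega)
      omega
    obtain ⟨f1, f2⟩ := hα (t - 1) (by omega)
    have h1 := (hγ (t - 1) t (by omega) ht2).1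
    rw [show t - (t - 1) = 1 by omega, mul_one] at h1
    have h2 := h.path.dd (i := α (t - 1)) (j := α t) (by omega) g1
    have h3 := dd_triangle (w (α (t - 1))) (γ (t - 1)) (w (α t))
    have h4 := dd_triangle (γ (t - 1)) (γ t) (w (α t))
    rw [dd_comm (w (α (t - 1))) (γ (t - 1))] at h3
    have h5 := h.path.dd (i := i) (j := α t) ht1.le g1
    have h6 := dd_triangle (w i) (w (α t)) (γ t)
    rw [dd_comm (w (α t)) (γ t)] at h6
    omega

/-- Quasigeodesics between the endpoints of a pair satisfying `JB` fellow travel. -/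
lemma fellow [Nonempty (Hyp Γ)] {N K L L' : ℕ} (hK : 1 ≤ K) {g h : RAAG Γ} (hN : JB N g h)
    {γ γ' : ℕ → RAAG Γ} (hγ : NQG K L γ) (hγ' : NQG K L' γ') (h0 : γ 0 = g) (hL : γ L = h)
    (h0' : γ' 0 = g) (hL' : γ' L' = h) {t : ℕ} (ht : t ≤ L) :
    ∃ t' ≤ L', dd (γ t) (γ' t') ≤ 4 * morse N K + 2 * K := by
  obtain ⟨w, Y, hw, hw0, hwn⟩ := exists_gpath g h
  have hjb : JB N (w 0) (w (dd g h)) := by rw [hw0, hwn]; exact hN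
  choose s hs using exists_level hw hjb
  have hl : Lev N w Y (dd g h) s := ⟨hw, hjb, hs⟩
  obtain ⟨i, hi, hi'⟩ := hl.near hK hγ (by rw [h0, hw0]) (by rw [hL, hwn]) ht
  obtain ⟨t', ht', h2⟩ := hl.near' hK hγ' (by rw [h0', hw0]) (by rw [hL', hwn]) hi
  refine ⟨t', ht', ?_⟩
  have := dd_triangle (γ t) (w i) (γ' t')
  omega

end Morse
end RaagStab

namespace RaagStab

section Stable

variable {V : Type*} {Γ : SimpleGraph V}

/-! ### Absence of elements of join type implies stability -/

lemma nqg_of_isQuasigeodesic {k c : ℝ} (hk : 1 ≤ k) {K : ℕ} (hkK : k ≤ K) (hcK : c ≤ K)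
    (hkc : k * c ≤ K) {n : ℕ} {γ : ℕ → RAAG Γ} (h : IsQuasigeodesic (raagGens Γ) k c n γ)
    (g : RAAG Γ) : NQG K n (fun i => g * γ i) := by
  intro i j hij hj
  obtain ⟨h1, h2⟩ := h i (hij.trans hj) j hj
  rw [wordDist_raag] at h1 h2
  rw [dd_mul_left]
  have habs : |(i : ℝ) - (j : ℝ)| = ((j - i : ℕ) : ℝ) := by
    rw [Nat.cast_sub hij, abs_sub_comm, abs_of_nonneg]
    have : (i : ℝ) ≤ j := by exact_mod_cast hij
    linarith
  rw [habs] at h1 h2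
  set m := j - i
  set d := dd (γ i) (γ j)
  have hm : (0 : ℝ) ≤ m := Nat.cast_nonneg m
  have hd : (0 : ℝ) ≤ d := Nat.cast_nonneg d
  have h3 : (d : ℝ) ≤ K * m + K := by nlinarith
  have h4 : (m : ℝ) ≤ K * d + K := by
    have : (m : ℝ) = k * (1 / k * m) := by field_simp
    have h5 : k * (1 / k * m) ≤ k * (d + c) :=
      mul_le_mul_of_nonneg_left (by linarith) (by linarith)
    nlinarith
  exact ⟨by exact_mod_cast h3, by exact_mod_cast h4⟩

lemma wordDist_eq_of_isLen {T : Set (RAAG Γ)} {g : RAAG Γ} {n : ℕ} (h : IsLen T g n) :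
    wordDist T 1 g = n := by
  unfold wordDist
  rw [inv_one, one_mul]
  exact le_antisymm (Nat.sInf_le h.1) (le_csInf ⟨n, h.1⟩ fun m hm => h.2 m hm)

/-- If no short element of the subgroup has join type, up to a short conjugation, then the
subgroup is stable. -/
lemma stable_of_not_ell [Fintype V] [Nonempty V] {T : Set (RAAG Γ)} {Λ : ℕ} (hfin : T.Finite)
    (hS : Sys T Λ) (hE : ¬ Ell T (scale V Λ)) :
    IsStableSubgroup (raagGens Γ) (Subgroup.closure T) := by
  classical
  have : Nonempty (Hyp Γ) := ⟨hy 1 (Classical.arbitrary V, true)⟩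
  set D := Dq V Λ (Λ ^ 2) with hD
  set W := bl V (D * Λ) with hW
  have hE' : ¬ Ell T (W + D * Λ) := by
    refine fun h => hE (h.mono ?_)
    have h1 : W ≤ gapQ V Λ D := Nat.le_mul_of_pos_right _ (by positivity)
    have h2 : Dq V Λ (Λ ^ 2 + 1) = gapQ V Λ D + D * Λ + D := rfl
    unfold scale
    omega
  refine ⟨⟨hfin.toFinset, ?_, ?_, ?_⟩, ?_⟩
  · rw [hfin.coe_toFinset]; exact Subgroup.subset_closure
  · rw [hfin.coe_toFinset]
  · rw [hfin.coe_toFinset]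
    refine ⟨(W * (D + 2) + Λ + 1 : ℕ), by push_cast; linarith [show (0 : ℝ) ≤ W * (D + 2) + Λ by positivity], 1, zero_le_one, fun h hh => ?_⟩
    obtain ⟨n, hn⟩ := exists_isLen (exists_reach hS.inv hh)
    obtain ⟨r, hr, hrn⟩ := isLen_geod hn
    rw [wordDist_eq_of_isLen hn, wordDist_raag]
    have h1 := geod_length_le hS hr (tight_of_not_ell hS hE hr)
    rw [hrn, ← hD, ← hW] at h1
    have h2 := reach_dd hS hn.1
    set K := W * (D + 2) + Λ + 1 with hK
    have hKp : (0 : ℝ) < (K : ℝ) := by positivity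
    have h3 : n ≤ K * (dd 1 h + 1) := by
      refine h1.trans ?_
      rw [hK]
      nlinarith [Nat.zero_le (W * (D + 1)), Nat.zero_le ((Λ + 1) * (dd 1 h + 1))]
    have h4 : dd 1 h ≤ K * n + 1 := by
      have : Λ * n ≤ K * n := Nat.mul_le_mul_right n (by omega)
      omega
    constructor
    · rw [one_div, sub_le_iff_le_add, inv_mul_le_iff₀ hKp]
      exact_mod_cast h3
    · exact_mod_cast h4
  · intro k hk c hc
    set K := ⌈k⌉₊ + ⌈c⌉₊ + ⌈k * c⌉₊ with hK
    have e1 := Nat.le_ceil k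
    have e2 := Nat.le_ceil c
    have e3 := Nat.le_ceil (k * c)
    have c1 : (0 : ℝ) ≤ (⌈k⌉₊ : ℝ) := Nat.cast_nonneg _
    have c2 : (0 : ℝ) ≤ (⌈c⌉₊ : ℝ) := Nat.cast_nonneg _
    have c3 : (0 : ℝ) ≤ (⌈k * c⌉₊ : ℝ) := Nat.cast_nonneg _
    have f1 : k ≤ K := by rw [hK]; push_cast; linarith
    have f2 : c ≤ K := by rw [hK]; push_cast; linarith
    have f3 : k * c ≤ K := by rw [hK]; push_cast; linarith
    have hK1 : 1 ≤ K := by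
      have : (1 : ℝ) ≤ K := hk.trans f1
      exact_mod_cast this
    set N := (2 * Fintype.card V + 1) * (4 * D + 4 + W) * Λ with hN
    refine ⟨(4 * morse N K + 2 * K : ℕ), fun n m γ γ' hγ hγ' h0 hn hm0 hmn => ?_⟩
    have hh : (γ 0)⁻¹ * γ n ∈ Subgroup.closure T := mul_mem (inv_mem hm0) hmn
    obtain ⟨ℓ, hℓ⟩ := exists_isLen (exists_reach hS.inv hh)
    obtain ⟨r, hr, hrn⟩ := isLen_geod hℓ
    have hJB : JB N (1 : RAAG Γ) ((γ 0)⁻¹ * γ n) := by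
      intro Z
      have := joined_bound hS hr (tight_of_not_ell hS hE hr) hE' Z
      rwa [hr.zero, hrn] at this
    have q1 := nqg_of_isQuasigeodesic hk f1 f2 f3 hγ (γ 0)⁻¹
    have q2 := nqg_of_isQuasigeodesic hk f1 f2 f3 hγ' (γ 0)⁻¹
    constructor
    · intro i hi
      obtain ⟨j, hj, hd⟩ := fellow hK1 hJB q1 q2 (by simp) rfl (by simp [h0]) (by simp [hn]) hi
      refine ⟨j, hj, ?_⟩
      rw [dd_mul_left] at hd
      rw [wordDist_raag]
      exact_mod_cast hd
    · intro i hi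
      obtain ⟨j, hj, hd⟩ := fellow hK1 hJB q2 q1 (by simp [h0]) (by simp [hn]) (by simp) rfl hi
      refine ⟨j, hj, ?_⟩
      rw [dd_mul_left] at hd
      rw [wordDist_raag]
      exact_mod_cast hd

end Stable
end RaagStab

namespace RaagStab

section Flats

variable {V : Type*} {Γ : SimpleGraph V}

/-! ### Powers have linearly growing length -/

/-- The subword of length `l` starting at position `p` of the infinite word `f`. -/
def win (f : ℕ → V × Bool) (p l : ℕ) : List (V × Bool) := (List.range' p l).map f

lemma win_succ (f : ℕ → V × Bool) (p l : ℕ) : win f p (l + 1) = f p :: win f (p + 1) l := by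
  simp [win, List.range'_succ]

lemma win_add (f : ℕ → V × Bool) (p a b : ℕ) :
    win f p (a + b) = win f p a ++ win f (p + a) b := by
  simp [win, ← List.map_append]

lemma win_length (f : ℕ → V × Bool) (p l : ℕ) : (win f p l).length = l := by simp [win]

/-- All windows of length `m` of an `m`-periodic word are conjugate. -/
lemma win_conj {f : ℕ → V × Bool} {m : ℕ} (hf : ∀ i, f (i + m) = f i) (hm : 0 < m) (p : ℕ) :
    IsConj (wordProd Γ (win f 0 m)) (wordProd Γ (win f p m)) := by
  induction p with
  | zero => exact IsConj.refl _
  | succ p ih =>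
    refine ih.trans ?_
    obtain ⟨k, rfl⟩ : ∃ k, m = k + 1 := ⟨m - 1, by omega⟩
    have h1 : win f (p + 1) (k + 1) = win f (p + 1) k ++ [f p] := by
      rw [win_add, ← hf p]
      simp only [win, List.range'_one, List.map_cons, List.map_nil]
      rw [add_assoc p 1 k, add_comm 1 k]
    rw [h1, win_succ, wordProd_cons, wordProd_append, wordProd_singleton, isConj_iff]
    exact ⟨(gen Γ (f p))⁻¹, by group⟩

/-- A periodic word whose period is of minimal length in its conjugacy class is reduced: a
cancelling pair of letters lies within one period, because a letter does not commute formally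
with itself. -/
lemma win_nodup {f : ℕ → V × Bool} {m : ℕ} (hf : ∀ i, f (i + m) = f i) (hm : 0 < m)
    (hmin : ∀ w, IsConj (wordProd Γ (win f 0 m)) (wordProd Γ w) → m ≤ w.length) (l : ℕ) :
    ∀ (p : ℕ) (g : RAAG Γ), (hyps g (win f p l)).Nodup := by
  induction l with
  | zero => intro p g; simp [win, hyps]
  | succ l ih =>
    intro p g
    rw [win_succ, hyps_cons, List.nodup_cons]
    refine ⟨fun hx => ?_, ih _ _⟩
    obtain ⟨w1, w2, hw, hadj⟩ := exists_cancel (ih (p + 1) _) hx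
    have hl : l = w1.length + (1 + w2.length) := by
      have := congrArg List.length hw
      simp [win_length] at this
      omega
    rw [hl, win_add, add_comm 1 w2.length, win_succ] at hw
    obtain ⟨e1, e2⟩ := List.append_inj hw (by rw [win_length])
    simp only [List.cons.injEq] at e2
    obtain ⟨e2, -⟩ := e2
    by_cases hc : m ≤ w1.length
    · refine Γ.loopless.irrefl (f p).1 (hadj (f p) ?_)
      rw [← e1, ← hf p]
      simp only [win, List.mem_map, List.mem_range'_1]
      exact ⟨p + m, ⟨by omega, by omega⟩, rfl⟩
    · by_cases hc' : m = w1.length + 1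
      · rw [show p + 1 + w1.length = p + m by omega, hf p] at e2
        have := congrArg Prod.snd e2
        simp at this
      · obtain ⟨k, rfl⟩ : ∃ k, m = w1.length + (k + 1) + 1 := ⟨m - w1.length - 2, by omega⟩
        have hw' : win f p (w1.length + (k + 1) + 1) =
            f p :: (w1 ++ ((f p).1, !(f p).2) :: win f (p + 1 + w1.length + 1) k) := by
          rw [win_succ, win_add, e1, win_succ, e2]
        have hcomm : gen Γ (f p) * wordProd Γ w1 = wordProd Γ w1 * gen Γ (f p) :=
          lk_comm_gen (wordProd_mem_par hadj)
        have := hmin (w1 ++ win f (p + 1 + w1.length + 1) k) (by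
          have h := win_conj (Γ := Γ) hf hm p
          rw [hw', wordProd_cons, wordProd_append, wordProd_cons, ← mul_assoc, hcomm, mul_assoc,
            ← mul_assoc (gen Γ (f p)), gen_cancel, one_mul, ← wordProd_append] at h
          exact h)
        rw [List.length_append, win_length] at this
        omega

/-- Write `g` as a conjugate of a word of minimal length in its conjugacy class; the powers of
that word are reduced by `win_nodup`. -/
lemma dd_pow_ge {g : RAAG Γ} (hg : g ≠ 1) : ∃ C, ∀ n, n ≤ dd 1 (g ^ n) + C := by
  classical
  have hex : ∃ m, ∃ w : List (V × Bool), w.length = m ∧ IsConj g (wordProd Γ w) := by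
    obtain ⟨w, hw⟩ := exists_word g
    exact ⟨_, w, rfl, by rw [hw]⟩
  obtain ⟨w, hw, hc⟩ := Nat.find_spec hex
  set m := Nat.find hex with hmdef
  have hm : 0 < m := by
    rcases Nat.eq_zero_or_pos m with h | h
    · rw [h, List.length_eq_zero_iff] at hw
      rw [hw, wordProd_nil, isConj_one_left] at hc
      exact absurd hc hg
    · exact h
  set f : ℕ → V × Bool := fun i => w[i % m]'(by rw [hw]; exact Nat.mod_lt _ hm) with hfdef
  have hf : ∀ i, f (i + m) = f i := fun i => by simp [hfdef]
  have hw0 : win f 0 m = w := by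
    refine List.ext_getElem (by rw [win_length, hw]) fun i h1 h2 => ?_
    simp only [win, List.getElem_map, List.getElem_range', hfdef]
    congr 1
    rw [hw] at h2
    simp [Nat.mod_eq_of_lt h2]
  have hpow : ∀ n, wordProd Γ (win f 0 (n * m)) = wordProd Γ w ^ n := by
    intro n
    induction n with
    | zero => simp [win, wordProd_nil]
    | succ n ih =>
      have hs : win f (n * m) m = win f 0 m := by
        refine List.ext_getElem (by simp [win_length]) fun i h1 h2 => ?_
        simp [win, hfdef]
      rw [Nat.succ_mul, win_add, wordProd_append, ih, zero_add, hs, hw0, pow_succ]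
  obtain ⟨y, hy⟩ := isConj_iff.1 hc
  refine ⟨dd 1 y + dd 1 y, fun n => ?_⟩
  have h1 := (nodup_iff 1 (win f 0 (n * m))).1 (win_nodup hf hm (fun w' hw' => by
    rw [hw0] at hw'
    exact Nat.find_min' hex ⟨w', rfl, hc.trans hw'⟩) _ _ _)
  rw [one_mul, win_length, hpow, ← hy, conj_pow] at h1
  have h2 := dd_one_mul (y * g ^ n) y⁻¹
  have h3 := dd_one_mul y (g ^ n)
  rw [dd_one_inv] at h2
  have h4 : n * 1 ≤ n * m := Nat.mul_le_mul_left n hm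
  omega

/-! ### Stable subgroups contain no element of join type -/

lemma exists_factor {A B : Set V} (hAB : ∀ a ∈ A, ∀ b ∈ B, Γ.Adj a b) {g : RAAG Γ}
    (hg : g ∈ par Γ (A ∪ B)) : ∃ a ∈ par Γ A, ∃ b ∈ par Γ B, g = a * b := by
  obtain ⟨w, rfl, hw⟩ := exists_word_of_mem_par hg
  induction w with
  | nil => exact ⟨1, one_mem _, 1, one_mem _, by simp [wordProd_nil]⟩
  | cons x w ih =>
    obtain ⟨a, ha, b, hb, h⟩ := ih (fun y hy => hw y (by simp [hy]))
      (wordProd_mem_par fun y hy => hw y (by simp [hy]))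
    rw [wordProd_cons, h]
    rcases hw x (by simp) with hx | hx
    · exact ⟨gen Γ x * a, mul_mem (gen_mem_par hx) ha, b, hb, by rw [mul_assoc]⟩
    · refine ⟨a, ha, gen Γ x * b, mul_mem (gen_mem_par hx) hb, ?_⟩
      rw [← mul_assoc, ← mul_assoc, par_comm hAB ha (gen_mem_par hx)]

lemma dd_join_one {A B : Set V} (hAB : ∀ a ∈ A, ∀ b ∈ B, Γ.Adj a b) {a b : RAAG Γ}
    (ha : a ∈ par Γ A) (hb : b ∈ par Γ B) : dd 1 (a * b) = dd 1 a + dd 1 b := by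
  have h1 : Disjoint (Sep (1 : RAAG Γ) a) (Sep a (a * b)) := by
    rw [Set.disjoint_left]
    intro Y hY hY'
    exact Γ.loopless.irrefl _ (hAB _ (label_of_par' (by simpa using ha) hY) _ (label_of_par hb hY'))
  have h2 : Sep (1 : RAAG Γ) (a * b) = Sep 1 a ∪ Sep a (a * b) := by
    ext Y
    have h : Y ∈ Sep 1 a → Y ∉ Sep a (a * b) := fun hY => Set.disjoint_left.1 h1 hY
    simp only [Set.mem_union, mem_sep] at h ⊢
    revert h
    cases side Y 1 <;> cases side Y a <;> cases side Y (a * b) <;> decide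
  have h3 : dd a (a * b) = dd 1 b := by rw [dd_eq_one_inv, inv_mul_cancel_left]
  rw [← h3]
  unfold dd
  rw [h2, Set.ncard_union_eq h1 (sep_finite _ _) (sep_finite _ _)]

/-- On a product of two commuting parabolic subgroups the metric is the `ℓ¹` metric. -/
lemma dd_join {A B : Set V} (hAB : ∀ a ∈ A, ∀ b ∈ B, Γ.Adj a b) {a a' b b' : RAAG Γ}
    (ha : a ∈ par Γ A) (ha' : a' ∈ par Γ A) (hb : b ∈ par Γ B) (hb' : b' ∈ par Γ B) :
    dd (a * b) (a' * b') = dd a a' + dd b b' := by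
  have e : (a * b)⁻¹ * (a' * b') = (a⁻¹ * a') * (b⁻¹ * b') := by
    have := par_comm hAB (mul_mem (inv_mem ha) ha') (inv_mem hb)
    calc (a * b)⁻¹ * (a' * b') = b⁻¹ * (a⁻¹ * a') * b' := by group
      _ = (a⁻¹ * a') * b⁻¹ * b' := by rw [this]
      _ = _ := by group
  rw [dd_eq_one_inv, e, dd_join_one hAB (mul_mem (inv_mem ha) ha') (mul_mem (inv_mem hb) hb'),
    ← dd_eq_one_inv, ← dd_eq_one_inv]

lemma exists_geod_par {L : Set V} {c : RAAG Γ} (hc : c ∈ par Γ L) :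
    ∃ α : ℕ → RAAG Γ, (∀ i, α i ∈ par Γ L) ∧ α 0 = 1 ∧ α (dd 1 c) = c ∧
      ∀ i ≤ dd 1 c, ∀ j ≤ dd 1 c, dd (α i) (α j) = (i - j) + (j - i) := by
  obtain ⟨w, hw, hn⟩ := exists_geod 1 c
  have hlen := (nodup_iff 1 w).1 hn
  rw [hw] at hlen
  rw [one_mul] at hw
  have hlet : ∀ x ∈ w, x.1 ∈ L := letters_of_nodup hn fun Y hY =>
    label_of_par' (by simpa [hw] using hc) hY
  have key : ∀ i j, i ≤ j → j ≤ w.length →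
      dd (wordProd Γ (w.take i)) (wordProd Γ (w.take j)) = j - i := by
    intro i j hij hj
    have e1 : w = w.take i ++ ((w.take j).drop i ++ w.drop j) := by
      conv_lhs => rw [← List.take_append_drop j w, ← List.take_append_drop i (w.take j)]
      rw [List.take_take, min_eq_left hij, List.append_assoc]
    have e2 : w.take j = w.take i ++ (w.take j).drop i := by
      conv_lhs => rw [← List.take_append_drop i (w.take j)]
      rw [List.take_take, min_eq_left hij]
    rw [e1, hyps_append, hyps_append] at hn
    have h1 := (List.nodup_append.1 (List.nodup_append.1 hn).2.1).1
    rw [nodup_iff, one_mul, ← wordProd_append, ← e2] at h1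
    rw [h1]
    simp [min_eq_left hj]
  refine ⟨fun i => wordProd Γ (w.take i), fun i => wordProd_mem_par fun x hx =>
    hlet x (List.mem_of_mem_take hx), by simp [wordProd_nil], by simp [hlen, hw], ?_⟩
  intro i hi j hj
  rw [hlen] at hi hj
  rcases le_total i j with h | h
  · rw [key i j h hj]; omega
  · rw [dd_comm, key j i h hi]; omega

/-- A Lipschitz path which distorts distances by a factor of at most `3`. -/
def QG3 (N : ℕ) (P : ℕ → RAAG Γ) : Prop :=
  ∀ i ≤ N, ∀ j ≤ N, dd (P i) (P j) ≤ (i - j) + (j - i) ∧ (i - j) + (j - i) ≤ 3 * dd (P i) (P j)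

lemma dd_conj_le (x p q : RAAG Γ) : dd (x * p * x⁻¹) (x * q * x⁻¹) ≤ dd p q + 2 * dd 1 x ∧
    dd p q ≤ dd (x * p * x⁻¹) (x * q * x⁻¹) + 2 * dd 1 x := by
  rw [mul_assoc, mul_assoc, dd_mul_left]
  have h1 : ∀ y : RAAG Γ, dd y (y * x⁻¹) = dd 1 x := fun y => by
    rw [dd_eq_one_inv, inv_mul_cancel_left, dd_one_inv]
  have a1 := dd_triangle (p * x⁻¹) p (q * x⁻¹)
  have a2 := dd_triangle p q (q * x⁻¹)
  have a3 := dd_triangle p (p * x⁻¹) q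
  have a4 := dd_triangle (p * x⁻¹) (q * x⁻¹) q
  rw [dd_comm (p * x⁻¹) p, h1] at a1
  rw [h1] at a2 a3
  rw [dd_comm (q * x⁻¹) q, h1] at a4
  omega

lemma qg3_quasi {N : ℕ} {P : ℕ → RAAG Γ} (h : QG3 N P) (x : RAAG Γ) :
    IsQuasigeodesic (raagGens Γ) 3 (2 * dd 1 x : ℕ) N (fun i => x * P i * x⁻¹) := by
  intro i hi j hj
  rw [wordDist_raag]
  obtain ⟨h1, h2⟩ := h i hi j hj
  obtain ⟨h3, h4⟩ := dd_conj_le x (P i) (P j)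
  have habs : |(i : ℝ) - (j : ℝ)| = (((i - j) + (j - i) : ℕ) : ℝ) := by
    rcases le_total i j with hij | hij
    · have hij' : (i : ℝ) ≤ j := by exact_mod_cast hij
      rw [Nat.sub_eq_zero_of_le hij, zero_add, Nat.cast_sub hij, abs_sub_comm,
        abs_of_nonneg (by linarith)]
    · have hij' : (j : ℝ) ≤ i := by exact_mod_cast hij
      rw [Nat.sub_eq_zero_of_le hij, add_zero, Nat.cast_sub hij, abs_of_nonneg (by linarith)]
  rw [habs]
  have h1' : (dd (P i) (P j) : ℝ) ≤ ((i - j) + (j - i) : ℕ) := by exact_mod_cast h1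
  have h2' : (((i - j) + (j - i) : ℕ) : ℝ) ≤ 3 * dd (P i) (P j) := by exact_mod_cast h2
  have h3' : (dd (x * P i * x⁻¹) (x * P j * x⁻¹) : ℝ) ≤ dd (P i) (P j) + (2 * dd 1 x : ℕ) := by
    exact_mod_cast h3
  have h4' : (dd (P i) (P j) : ℝ) ≤ dd (x * P i * x⁻¹) (x * P j * x⁻¹) + (2 * dd 1 x : ℕ) := by
    exact_mod_cast h4
  have h5 : (0 : ℝ) ≤ dd (P i) (P j) := Nat.cast_nonneg _
  constructor <;> linarith

lemma stable_fellow {H : Subgroup (RAAG Γ)} (hH : IsStableSubgroup (raagGens Γ) H) (x : RAAG Γ) :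
    ∃ M : ℕ, ∀ (N N' : ℕ) (P P' : ℕ → RAAG Γ), QG3 N P → QG3 N' P' → P 0 = 1 → P' 0 = 1 →
      P N = P' N' → x * P N * x⁻¹ ∈ H → ∀ i ≤ N, ∃ j ≤ N', dd (P i) (P' j) ≤ M := by
  obtain ⟨L, hL⟩ := hH.2 3 (by norm_num) (2 * dd 1 x : ℕ) (Nat.cast_nonneg _)
  refine ⟨⌈L⌉₊ + 2 * dd 1 x, fun N N' P P' hP hP' h0 h0' hN hm i hi => ?_⟩
  obtain ⟨j, hj, hd⟩ := (hL N N' _ _ (qg3_quasi hP x) (qg3_quasi hP' x) (by simp [h0, h0'])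
    (by simp [hN]) (by simp [h0, one_mem]) hm).1 i hi
  refine ⟨j, hj, ?_⟩
  rw [wordDist_raag] at hd
  have h1 : (dd (x * P i * x⁻¹) (x * P' j * x⁻¹) : ℝ) ≤ (⌈L⌉₊ : ℝ) := hd.trans (Nat.le_ceil L)
  have h2 : dd (x * P i * x⁻¹) (x * P' j * x⁻¹) ≤ ⌈L⌉₊ := by exact_mod_cast h1
  have := (dd_conj_le x (P i) (P' j)).2
  omega

/-- The coordinates of the path following three sides of a rectangle. -/
lemma detour_cases {s i : ℕ} (hi : i ≤ 3 * s) :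
    (i ≤ s ∧ min (i - s) s = 0 ∧ min i s - (i - 2 * s) = i) ∨
    (s ≤ i ∧ i ≤ 2 * s ∧ min (i - s) s + s = i ∧ min i s - (i - 2 * s) = s) ∨
    (2 * s ≤ i ∧ min (i - s) s = s ∧ min i s - (i - 2 * s) + i = 3 * s) := by
  omega

lemma detour_arith {s i j : ℕ} (hi : i ≤ 3 * s) (hj : j ≤ 3 * s) :
    (min (i - s) s - min (j - s) s + (min (j - s) s - min (i - s) s) +
      (min i s - (i - 2 * s) - (min j s - (j - 2 * s)) +
        (min j s - (j - 2 * s) - (min i s - (i - 2 * s)))) ≤ i - j + (j - i)) ∧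
    (i - j + (j - i) ≤ 3 * (min (i - s) s - min (j - s) s + (min (j - s) s - min (i - s) s) +
      (min i s - (i - 2 * s) - (min j s - (j - 2 * s)) +
        (min j s - (j - 2 * s) - (min i s - (i - 2 * s)))))) := by
  have h1 := detour_cases hi
  have h2 := detour_cases hj
  generalize min (i - s) s = F at *
  generalize min (j - s) s = F' at *
  generalize min i s - (i - 2 * s) = G at *
  generalize min j s - (j - 2 * s) = G' at *
  rcases h1 with h1 | h1 | h1 <;> rcases h2 with h2 | h2 | h2 <;> omega

/-- If `a ≠ 1` and `b = 1`, then a geodesic from `1` to `a ^ n` does not fellow travel with the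
path which makes a detour far into the other factor.  If `a ≠ 1` and `b ≠ 1`, the two
geodesics following the sides of a rectangle do not fellow travel. -/
lemma not_stable_of_factor {A B : Set V} (hB : B.Nonempty)
    (hAB : ∀ a ∈ A, ∀ b ∈ B, Γ.Adj a b) {H : Subgroup (RAAG Γ)} {a b x : RAAG Γ}
    (ha : a ∈ par Γ A) (hb : b ∈ par Γ B) (ha1 : a ≠ 1) (hx : x * (a * b) * x⁻¹ ∈ H) :
    ¬ IsStableSubgroup (raagGens Γ) H := by
  intro hH
  obtain ⟨M, hM⟩ := stable_fellow hH x
  have hpow : ∀ n, x * (a ^ n * b ^ n) * x⁻¹ ∈ H := by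
    intro n
    have := pow_mem hx n
    rwa [conj_pow, (show Commute a b from par_comm hAB ha hb).mul_pow] at this
  obtain ⟨C, hC⟩ := dd_pow_ge ha1
  have hrect : ∀ {s t : ℕ} {α β : ℕ → RAAG Γ}, (∀ i, α i ∈ par Γ A) → (∀ i, β i ∈ par Γ B) →
      (∀ i ≤ s, ∀ j ≤ s, dd (α i) (α j) = (i - j) + (j - i)) →
      (∀ i ≤ t, ∀ j ≤ t, dd (β i) (β j) = (i - j) + (j - i)) →
      ∀ i i' j j', i ≤ s → i' ≤ s → j ≤ t → j' ≤ t → dd (α i * β j) (α i' * β j') =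
        ((i - i') + (i' - i)) + ((j - j') + (j' - j)) := by
    intro s t α β h1 h2 h3 h4 i i' j j' hi hi' hj hj'
    rw [dd_join hAB (h1 i) (h1 i') (h2 j) (h2 j'), h3 i hi i' hi', h4 j hj j' hj']
  by_cases hb1 : b = 1
  · obtain ⟨v, hv⟩ := hB
    have hv1 : gen Γ (v, true) ≠ 1 := by
      intro h
      have := dd_gen (1 : RAAG Γ) (v, true)
      rw [h, one_mul, dd_self] at this
      omega
    obtain ⟨C', hC'⟩ := dd_pow_ge hv1
    obtain ⟨α, hα, hα0, hαs, hαd⟩ := exists_geod_par (pow_mem ha (M + C + 1))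
    have hs := hC (M + C + 1)
    have hp := hpow (M + C + 1)
    rw [hb1, one_pow, mul_one] at hp
    generalize dd 1 (a ^ (M + C + 1)) = s at *
    obtain ⟨β, hβ, hβ0, -, hβd⟩ :=
      exists_geod_par (pow_mem (gen_mem_par (Γ := Γ) (x := (v, true)) hv) (s + C'))
    have ht := hC' (s + C')
    generalize dd 1 (gen Γ (v, true) ^ (s + C')) = t at *
    have hd := hrect hα hβ hαd hβd
    obtain ⟨j, hj, hjd⟩ := hM (3 * s) s (fun i => α (min (i - s) s) * β (min i s - (i - 2 * s)))
      (fun i => α i * β 0) (fun i hi j hj => by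
        dsimp only
        rw [hd _ _ _ _ (by omega) (by omega) (by omega) (by omega)]
        exact detour_arith hi hj)
      (fun i hi j hj => by
        dsimp only
        rw [hd _ _ _ _ (by omega) (by omega) (by omega) (by omega)]; omega)
      (by simp [hα0, hβ0]) (by simp [hα0, hβ0])
      (by
        rw [show min (3 * s - s) s = s by omega, show min (3 * s) s - (3 * s - 2 * s) = 0 by omega])
      (by
        rwa [show min (3 * s - s) s = s by omega,
          show min (3 * s) s - (3 * s - 2 * s) = 0 by omega, hαs, hβ0, mul_one])
      s (by omega)
    rw [hd _ _ _ _ (by omega) (by omega) (by omega) (by omega)] at hjd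
    omega
  · obtain ⟨C', hC'⟩ := dd_pow_ge hb1
    obtain ⟨n, hn⟩ : ∃ n, n = M + C + C' + 1 := ⟨_, rfl⟩
    obtain ⟨α, hα, hα0, hαs, hαd⟩ := exists_geod_par (pow_mem ha n)
    obtain ⟨β, hβ, hβ0, hβt, hβd⟩ := exists_geod_par (pow_mem hb n)
    have hs := hC n
    have ht := hC' n
    generalize dd 1 (a ^ n) = s at *
    generalize dd 1 (b ^ n) = t at *
    have hd := hrect hα hβ hαd hβd
    obtain ⟨j, hj, hjd⟩ := hM (s + t) (s + t) (fun i => α (min i s) * β (i - s))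
      (fun i => α (i - t) * β (min i t)) (fun i hi j hj => by
        dsimp only
        rw [hd _ _ _ _ (by omega) (by omega) (by omega) (by omega)]; omega)
      (fun i hi j hj => by
        dsimp only
        rw [hd _ _ _ _ (by omega) (by omega) (by omega) (by omega)]; omega)
      (by simp [hα0, hβ0]) (by simp [hα0, hβ0])
      (by
        rw [show min (s + t) s = s by omega, show s + t - s = t by omega,
          show s + t - t = s by omega, show min (s + t) t = t by omega])
      (by
        rw [show min (s + t) s = s by omega, show s + t - s = t by omega, hαs, hβt]
        exact hpow n)
      s (by omega)
    rw [hd _ _ _ _ (by omega) (by omega) (by omega) (by omega)] at hjd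
    omega

lemma not_ell_of_stable {T : Set (RAAG Γ)} {N : ℕ}
    (hH : IsStableSubgroup (raagGens Γ) (Subgroup.closure T)) : ¬ Ell T N := by
  rintro ⟨g, hg1, ⟨n, -, hn⟩, e, -, A, B, hA, hB, hAB, hJ⟩
  obtain ⟨a, ha, b, hb, h⟩ := exists_factor hAB hJ
  have hg : e⁻¹ * (a * b) * e⁻¹⁻¹ = g := by rw [← h]; group
  have hm := reach_mem hn
  rw [← hg] at hm
  by_cases ha1 : a = 1
  · by_cases hb1 : b = 1
    · rw [ha1, hb1] at hg
      exact hg1 (by rw [← hg]; group)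
    · rw [par_comm hAB ha hb] at hm
      exact not_stable_of_factor hA (fun y hy z hz => (hAB z hz y hy).symm) hb ha hb1 hm hH
  · exact not_stable_of_factor hB hAB ha hb ha1 hm hH

end Flats
end RaagStab

namespace RaagStab

section Decide

/-! ### The decision procedure -/

variable {V : Type} {Γ : SimpleGraph V}

/-- The words of a list together with their formal inverses. -/
def symm (ws : List (List (V × Bool))) : List (List (V × Bool)) := ws ++ ws.map winv

/-- The elements represented by the words of a list. -/
def els (Γ : SimpleGraph V) (ws : List (List (V × Bool))) : Set (RAAG Γ) :=
  {g | ∃ w ∈ ws, g = wordProd Γ w}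

/-- All concatenations of at most `n` words of the list `gs`. -/
def enum (gs : List (List (V × Bool))) : ℕ → List (List (V × Bool))
  | 0 => [[]]
  | n + 1 => (enum gs n).flatMap fun u => u :: gs.map (· ++ u)

/-- The total length of the words of a list and of their inverses; it bounds the complexity of
the symmetric generating set represented by these words. -/
def cpx (ws : List (List (V × Bool))) : ℕ := (symm ws).flatten.length

lemma closure_els_symm (ws : List (List (V × Bool))) :
    Subgroup.closure (els Γ (symm ws)) = Subgroup.closure (els Γ ws) := by
  apply le_antisymm
  · rw [Subgroup.closure_le]
    rintro _ ⟨w, hw, rfl⟩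
    rw [symm, List.mem_append, List.mem_map] at hw
    rcases hw with hw | ⟨w, hw, rfl⟩
    · exact Subgroup.subset_closure ⟨w, hw, rfl⟩
    · rw [wordProd_winv]
      exact inv_mem (Subgroup.subset_closure ⟨w, hw, rfl⟩)
  · refine Subgroup.closure_mono ?_
    rintro _ ⟨w, hw, rfl⟩
    exact ⟨w, by simp [symm, hw], rfl⟩

lemma els_finite (ws : List (List (V × Bool))) : (els Γ ws).Finite := by
  refine ((ws.map (wordProd Γ)).finite_toSet).subset ?_
  rintro _ ⟨w, hw, rfl⟩
  exact List.mem_map_of_mem hw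

lemma sys_els (ws : List (List (V × Bool))) : Sys (els Γ (symm ws)) (cpx ws) := by
  classical
  have hsub : Fs (els Γ (symm ws)) ⊆
      (((symm ws).flatMap (hyps (1 : RAAG Γ))).toFinset : Set (Hyp Γ)) := by
    rintro Y ⟨_, ⟨w, hw, rfl⟩, hY⟩
    rw [List.coe_toFinset]
    refine List.mem_flatMap.2 ⟨w, hw, sep_subset_hyps w 1 Y ?_⟩
    rwa [one_mul]
  refine ⟨?_, ?_, (Finset.finite_toSet _).subset hsub, ?_⟩
  · rintro _ ⟨w, hw, rfl⟩
    rw [← wordProd_winv]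
    refine ⟨winv w, ?_, rfl⟩
    rw [symm, List.mem_append, List.mem_map] at hw ⊢
    rcases hw with hw | ⟨w, hw, rfl⟩
    · exact Or.inr ⟨w, hw, rfl⟩
    · exact Or.inl (by simpa [winv, Function.comp_def] using hw)
  · rintro _ ⟨w, hw, rfl⟩
    have := dd_le_length (1 : RAAG Γ) w
    rw [one_mul] at this
    refine this.trans ?_
    rw [cpx, List.length_flatten]
    exact List.single_le_sum (by simp) _ (List.mem_map_of_mem hw)
  · refine (Set.ncard_le_ncard hsub (Finset.finite_toSet _)).trans ?_
    rw [Set.ncard_coe_finset]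
    refine (List.toFinset_card_le _).trans ?_
    rw [List.length_flatMap, cpx, List.length_flatten]
    simp [hyps_length]

lemma enum_spec (gs : List (List (V × Bool))) (n : ℕ) (g : RAAG Γ) :
    (∃ u ∈ enum gs n, wordProd Γ u = g) ↔ ∃ m ≤ n, Reach (els Γ gs) m g := by
  induction n generalizing g with
  | zero =>
    simp only [enum, List.mem_singleton, exists_eq_left, wordProd_nil, Nat.le_zero_eq, reach_zero]
    exact eq_comm
  | succ n ih =>
    simp only [enum, List.mem_flatMap, List.mem_cons, List.mem_map]
    constructor
    · rintro ⟨u, ⟨u', hu', rfl | ⟨w, hw, rfl⟩⟩, rfl⟩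
      · obtain ⟨m, hm, h⟩ := (ih _).1 ⟨u, hu', rfl⟩
        exact ⟨m, by omega, h⟩
      · obtain ⟨m, hm, h⟩ := (ih _).1 ⟨u', hu', rfl⟩
        refine ⟨1 + m, by omega, ?_⟩
        rw [wordProd_append]
        exact reach_mul (reach_one ⟨w, hw, rfl⟩) h
    · rintro ⟨m, hm, l, rfl, hl, rfl⟩
      cases l with
      | nil =>
        obtain ⟨u, hu, h⟩ := (ih 1).2 ⟨0, by omega, reach_zero.2 rfl⟩
        exact ⟨u, ⟨u, hu, Or.inl rfl⟩, by simpa using h⟩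
      | cons x l =>
        obtain ⟨u, hu, h⟩ := (ih l.prod).2 ⟨l.length, by simpa using hm, l, rfl,
          fun y hy => hl y (by simp [hy]), rfl⟩
        obtain ⟨w, hw, hx⟩ := hl x (by simp)
        exact ⟨w ++ u, ⟨u, hu, Or.inr ⟨w, hw, rfl⟩⟩, by
          rw [wordProd_append, h, List.prod_cons, hx]⟩

/-- The letters, as words of length one. -/
noncomputable def letters (V : Type) [Fintype V] : List (List (V × Bool)) :=
  (Finset.univ : Finset (V × Bool)).toList.map fun x => [x]

lemma enum_letters [Fintype V] (n : ℕ) (e : RAAG Γ) :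
    (∃ u ∈ enum (letters V) n, wordProd Γ u = e) ↔ dd 1 e ≤ n := by
  rw [enum_spec]
  constructor
  · rintro ⟨m, hm, l, rfl, hl, rfl⟩
    refine le_trans ?_ hm
    clear hm
    induction l with
    | nil => simp [dd_self]
    | cons x l ih =>
      have h1 := dd_one_mul x l.prod
      have h2 := ih fun y hy => hl y (by simp [hy])
      obtain ⟨w, hw, rfl⟩ := hl x (by simp)
      obtain ⟨y, -, rfl⟩ := List.mem_map.1 hw
      have h3 := dd_gen (1 : RAAG Γ) y
      rw [one_mul, ← wordProd_singleton] at h3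
      rw [List.prod_cons, List.length_cons]
      omega
  · intro h
    obtain ⟨w, hw, hl⟩ := exists_word_length e
    refine ⟨w.length, by omega, w.map (gen Γ), by simp, ?_, ?_⟩
    · intro x hx
      obtain ⟨y, -, rfl⟩ := List.mem_map.1 hx
      exact ⟨[y], by simp [letters], wordProd_singleton y |>.symm⟩
    · rw [← hw]; rfl

/-- The pairs of nonempty sets of vertices spanning a join. -/
noncomputable def joins (Γ : SimpleGraph V) [Fintype V] : List (Finset V × Finset V) :=
  open Classical in
  (Finset.univ.filter fun p : Finset V × Finset V =>
    p.1.Nonempty ∧ p.2.Nonempty ∧ ∀ a ∈ p.1, ∀ b ∈ p.2, Γ.Adj a b).toList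

/-- The word is nonempty and all of its letters lie in a common join. -/
def JoinWord (js : List (Finset V × Finset V)) (t : List (V × Bool)) : Prop :=
  t ≠ [] ∧ ∃ p ∈ js, ∀ x ∈ t, x.1 ∈ p.1 ∨ x.1 ∈ p.2

lemma joinWord_nf [Fintype V] [DecidableEq V] [DecidableRel Γ.Adj] (w : List (V × Bool)) :
    JoinWord (joins Γ) (nf Γ w) ↔ wordProd Γ w ≠ 1 ∧ InJoin (wordProd Γ w) := by
  classical
  obtain ⟨h1, h2⟩ := nf_spec (Γ := Γ) w 1
  have h3 : nf Γ w ≠ [] ↔ wordProd Γ w ≠ 1 := by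
    rw [not_iff_not]
    constructor
    · intro h; rw [← h1, h, wordProd_nil]
    · intro h
      rw [nodup_iff, h1, h, one_mul, dd_self] at h2
      exact List.length_eq_zero_iff.1 h2.symm
  rw [JoinWord, h3]
  refine and_congr_right fun _ => ?_
  constructor
  · rintro ⟨⟨A, B⟩, hp, h⟩
    simp only [joins, Finset.mem_toList, Finset.mem_filter, Finset.mem_univ, true_and] at hp
    refine ⟨A, B, hp.1, hp.2.1, hp.2.2, ?_⟩
    rw [← h1]
    exact wordProd_mem_par h
  · rintro ⟨A, B, hA, hB, hAB, h⟩
    refine ⟨(A.toFinset, B.toFinset), ?_, ?_⟩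
    · simp only [joins, Finset.mem_toList, Finset.mem_filter, Finset.mem_univ, true_and,
        Set.mem_toFinset, Set.toFinset_nonempty]
      exact ⟨hA, hB, hAB⟩
    · simp only [Set.mem_toFinset]
      exact letters_of_nodup (L := A ∪ B) h2 fun Y hY =>
        label_of_par' (by rwa [inv_one, one_mul, one_mul, h1]) hY

/-- Reduced words for all the conjugates which have to be tested. -/
noncomputable def tests (Γ : SimpleGraph V) [Fintype V] [DecidableEq V] [DecidableRel Γ.Adj]
    (ws : List (List (V × Bool))) : List (List (V × Bool)) :=
  (enum (symm ws) (scale V (cpx ws))).flatMap fun u =>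
    (enum (letters V) (scale V (cpx ws))).map fun e => nf Γ (e ++ u ++ winv e)

lemma tests_spec [Fintype V] [DecidableEq V] [DecidableRel Γ.Adj] (ws : List (List (V × Bool))) :
    (∃ t ∈ tests Γ ws, JoinWord (joins Γ) t) ↔ Ell (els Γ (symm ws)) (scale V (cpx ws)) := by
  simp only [tests, List.mem_flatMap, List.mem_map]
  have hne : ∀ e g : RAAG Γ, e * g * e⁻¹ ≠ 1 ↔ g ≠ 1 := by simp
  constructor
  · rintro ⟨_, ⟨u, hu, e, he, rfl⟩, h⟩
    rw [joinWord_nf, wordProd_append, wordProd_append, wordProd_winv, hne] at h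
    exact ⟨_, h.1, (enum_spec _ _ _).1 ⟨u, hu, rfl⟩, _, (enum_letters _ _).1 ⟨e, he, rfl⟩, h.2⟩
  · rintro ⟨g, hg, hr, e, he, h⟩
    obtain ⟨u, hu, rfl⟩ := (enum_spec _ _ _).2 hr
    obtain ⟨e', he', rfl⟩ := (enum_letters _ _).2 he
    refine ⟨_, ⟨u, hu, e', he', rfl⟩, ?_⟩
    rw [joinWord_nf, wordProd_append, wordProd_append, wordProd_winv, hne]
    exact ⟨hg, h⟩

/-! ### Primitive recursiveness -/

section Prim

lemma prim_pow : Primrec₂ fun a b : ℕ => a ^ b := by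
  refine (Primrec.nat_rec (f := fun _ : ℕ => 1) (g := fun a p => p.2 * a) (Primrec.const 1)
    (Primrec.nat_mul.comp (Primrec.snd.comp Primrec.snd) Primrec.fst)).of_eq fun a n => ?_
  induction n with
  | zero => rfl
  | succ n ih => rw [pow_succ, ← ih]

lemma prim_bl [Fintype V] : Primrec (bl V) := prim_pow.comp (Primrec.const _) Primrec.id

lemma prim_gapQ [Fintype V] : Primrec₂ (gapQ V) :=
  Primrec.nat_mul.comp (prim_bl.comp (Primrec.nat_mul.comp Primrec.snd Primrec.fst))
    (prim_pow.comp (Primrec.const 2) (Primrec.nat_mul.comp (Primrec.const 2) Primrec.fst))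

lemma prim_Dq [Fintype V] : Primrec₂ (Dq V) := by
  have hstep : Primrec₂ fun (Λ : ℕ) (p : ℕ × ℕ) => gapQ V Λ p.2 + p.2 * Λ + p.2 :=
    Primrec.nat_add.comp (Primrec.nat_add.comp
      (prim_gapQ.comp Primrec.fst (Primrec.snd.comp Primrec.snd))
      (Primrec.nat_mul.comp (Primrec.snd.comp Primrec.snd) Primrec.fst))
      (Primrec.snd.comp Primrec.snd)
  refine (Primrec.nat_rec (Primrec.const 0) hstep).of_eq fun Λ n => ?_
  induction n with
  | zero => rfl
  | succ n ih => rw [Dq, ← ih]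

lemma prim_scale [Fintype V] : Primrec (scale V) :=
  Primrec.nat_add.comp (Primrec.nat_mul.comp (Primrec.const 2) (prim_Dq.comp Primrec.id
    (Primrec.succ.comp (prim_pow.comp Primrec.id (Primrec.const 2))))) Primrec.id

variable [Primcodable V]

lemma prim_flip [Finite V] : Primrec fun x : V × Bool => (x.1, !x.2) := Primrec.dom_finite _

lemma prim_winv [Finite V] : Primrec (winv (V := V)) :=
  Primrec.list_reverse.comp (Primrec.list_map Primrec.id (prim_flip.comp Primrec.snd).to₂)

lemma prim_symm [Finite V] : Primrec (symm (V := V)) :=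
  Primrec.list_append.comp Primrec.id
    (Primrec.list_map Primrec.id (prim_winv.comp Primrec.snd).to₂)

lemma prim_cpx [Finite V] : Primrec (cpx (V := V)) :=
  Primrec.list_length.comp (Primrec.list_flatten.comp prim_symm)

lemma prim_enum : Primrec₂ (enum (V := V)) := by
  have hstep : Primrec₂ fun (gs : List (List (V × Bool))) (p : ℕ × List (List (V × Bool))) =>
      p.2.flatMap fun u => u :: gs.map (· ++ u) :=
    Primrec.list_flatMap (Primrec.snd.comp Primrec.snd)
      (Primrec.list_cons.comp Primrec.snd
        (Primrec.list_map (Primrec.fst.comp Primrec.fst)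
          (Primrec.list_append.comp Primrec.snd (Primrec.snd.comp Primrec.fst)).to₂)).to₂
  refine (Primrec.nat_rec (Primrec.const [[]]) hstep).of_eq fun gs n => ?_
  induction n with
  | zero => rfl
  | succ n ih => rw [enum, ← ih]

lemma prim_del [Fintype V] [DecidableEq V] [DecidableRel Γ.Adj] : Primrec₂ (del Γ) := by
  have h1 : PrimrecRel fun x y : V × Bool => y = (x.1, !x.2) :=
    Primrec.eq.comp Primrec.snd (prim_flip.comp Primrec.fst)
  have h2 : PrimrecRel fun x y : V × Bool => Γ.Adj x.1 y.1 :=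
    ⟨fun p => inferInstanceAs (Decidable (Γ.Adj p.1.1 p.2.1)), Primrec.dom_finite _⟩
  have hstep : Primrec₂ fun (p : (V × Bool) × List (V × Bool))
      (q : (V × Bool) × List (V × Bool) × Option (List (V × Bool))) =>
      if q.1 = (p.1.1, !p.1.2) then some q.2.1
      else if Γ.Adj p.1.1 q.1.1 then q.2.2.map (q.1 :: ·) else none :=
    Primrec.ite (h1.comp (Primrec.fst.comp Primrec.fst) (Primrec.fst.comp Primrec.snd))
      (Primrec.option_some.comp (Primrec.fst.comp (Primrec.snd.comp Primrec.snd)))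
      (Primrec.ite (h2.comp (Primrec.fst.comp Primrec.fst) (Primrec.fst.comp Primrec.snd))
        (Primrec.option_map (Primrec.snd.comp (Primrec.snd.comp Primrec.snd))
          (Primrec.list_cons.comp (Primrec.fst.comp (Primrec.snd.comp Primrec.fst))
            Primrec.snd).to₂)
        (Primrec.const none))
  refine (Primrec.list_rec (f := Prod.snd) Primrec.snd (Primrec.const none) hstep).of_eq ?_
  rintro ⟨x, w⟩
  induction w with
  | nil => rfl
  | cons y w ih =>
    simp only [del] at ih ⊢
    rw [← ih]

lemma prim_nf [Fintype V] [DecidableEq V] [DecidableRel Γ.Adj] : Primrec (nf Γ) := by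
  have h : Primrec₂ (mulL Γ) :=
    Primrec.option_getD.comp (prim_del.comp Primrec.fst Primrec.snd)
      (Primrec.list_cons.comp Primrec.fst Primrec.snd)
  exact Primrec.list_foldr Primrec.id (Primrec.const [])
    (h.comp (Primrec.fst.comp Primrec.snd) (Primrec.snd.comp Primrec.snd)).to₂

lemma prim_tests [Fintype V] [DecidableEq V] [DecidableRel Γ.Adj] : Primrec (tests Γ) := by
  have hs : Primrec fun ws : List (List (V × Bool)) => scale V (cpx ws) :=
    (prim_scale (V := V)).comp prim_cpx
  have h : Primrec₂ fun (ws : List (List (V × Bool))) (u : List (V × Bool)) =>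
      (enum (letters V) (scale V (cpx ws))).map fun e => nf Γ (e ++ u ++ winv e) :=
    Primrec.list_map
      (f := fun p : List (List (V × Bool)) × List (V × Bool) =>
        enum (letters V) (scale V (cpx p.1)))
      (g := fun p e => nf Γ (e ++ p.2 ++ winv e))
      (prim_enum.comp (Primrec.const _) (hs.comp Primrec.fst))
      (prim_nf.comp (Primrec.list_append.comp
        (Primrec.list_append.comp Primrec.snd (Primrec.snd.comp Primrec.fst))
        (prim_winv.comp Primrec.snd)))
  exact Primrec.list_flatMap (prim_enum.comp prim_symm hs) h

lemma prim_joinWord [Finite V] [DecidableEq V] (js : List (Finset V × Finset V)) :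
    PrimrecPred (JoinWord js) := by
  refine PrimrecPred.and (PrimrecPred.not (Primrec.eq.comp Primrec.id (Primrec.const []))) ?_
  induction js with
  | nil => exact ⟨fun _ => isFalse (by simp), Primrec.const false⟩
  | cons p js ih =>
    have h : PrimrecPred fun x : V × Bool => x.1 ∈ p.1 ∨ x.1 ∈ p.2 :=
      ⟨inferInstance, Primrec.dom_finite _⟩
    exact (h.forall_mem_list.or ih).of_eq fun t => by simp

lemma prim_check [Fintype V] [DecidableEq V] [DecidableRel Γ.Adj] :
    PrimrecPred fun ws : List (List (V × Bool)) => ∃ t ∈ tests Γ ws, JoinWord (joins Γ) t :=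
  (prim_joinWord (joins Γ)).exists_mem_list.comp prim_tests

end Prim

end Decide
end RaagStab

/-- **Decidability of stability in right-angled Artin groups.**
Let `Γ` be a finite simplicial graph with at least two vertices which is connected and
anti-connected.  Then there is a total computable function which, given a finite list of
words over the alphabet `V(Γ)^{±1}`, outputs `true` or `false` according to whether the
subgroup of `A_Γ` generated by the elements represented by these words is stable in `A_Γ`. -/
theorem stability_decidable_in_RAAG {V : Type} [Fintype V] [DecidableEq V] [Primcodable V]
    (Γ : SimpleGraph V) [DecidableRel Γ.Adj] (hcard : 1 < Fintype.card V)
    (hconn : Γ.Connected) (hanti : AntiConnected Γ) :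
    ∃ f : List (List (V × Bool)) → Bool, Computable f ∧
      ∀ ws : List (List (V × Bool)),
        f ws = true ↔
          IsStableSubgroup (raagGens Γ)
            (Subgroup.closure {g : RAAG Γ | ∃ w ∈ ws, g = wordProd Γ w}) := by
  have hV : Nonempty V := Fintype.card_pos_iff.1 (by omega)
  obtain ⟨_, hf⟩ := (RaagStab.prim_check (Γ := Γ)).not
  refine ⟨_, hf.to_comp, fun ws => ?_⟩
  rw [decide_eq_true_iff]
  beta_reduce
  rw [RaagStab.tests_spec]
  change _ ↔ IsStableSubgroup (raagGens Γ) (Subgroup.closure (RaagStab.els Γ ws))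
  rw [← RaagStab.closure_els_symm]
  exact ⟨RaagStab.stable_of_not_ell (RaagStab.els_finite _) (RaagStab.sys_els ws),
    RaagStab.not_ell_of_stable⟩
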